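/- arXiv:2001.03938 — 2 statements merged into one kernel-verified Lean document; each statement's English description precedes it below -/
import Mathlib

section
/- Let G be a simple graph on [n] with no isolated vertex such that I = I(G) has almost maximal finite index t. Then β_{t, t+4}(I) = β_{t, t+5}(I) = 0, and the regularity of I equals 3 unless the complement of G is the 4-gonal dipyramid G_{(d)_1}, in which case reg(I) = 4. -/
open Finsupp

namespace EP

variable (K : Type) [Field K]

/-! ## Simplicial chains over a linearly ordered vertex set -/

variable {V : Type} [Fintype V] [DecidableEq V] [LinearOrder V]

/-- Boundary of a single (oriented) face, given as a finset. -/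
noncomputable def bdFace (s : Finset V) : Finset V →₀ K :=
  ∑ v ∈ s, ((-1 : K) ^ ((s.filter (fun w => w < v)).card)) • Finsupp.single (s.erase v) 1

/-- The simplicial boundary map on the free module on all finsets of vertices
(the augmented oriented chain complex, with the empty set playing the role of
the `(-1)`-dimensional face). -/
noncomputable def bdS : (Finset V →₀ K) →ₗ[K] (Finset V →₀ K) :=
  Finsupp.lsum K fun s => LinearMap.toSpanSingleton K (Finset V →₀ K) (bdFace K s)

/-- Chains supported on faces of a complex `Δ` having `k` vertices. -/
noncomputable def faceSpan (Δ : Set (Finset V)) (k : ℕ) : Submodule K (Finset V →₀ K) :=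
  Submodule.span K {c | ∃ F ∈ Δ, F.card = k ∧ c = Finsupp.single F 1}

/-- Dimension of the `d`-th reduced simplicial homology of `Δ` over `K`. -/
noncomputable def redHomRank (Δ : Set (Finset V)) (d : ℕ) : ℕ :=
  Module.finrank K ↥(faceSpan K Δ (d+1) ⊓ LinearMap.ker (bdS K)) -
    Module.finrank K
      ↥(Submodule.map (bdS K) (faceSpan K Δ (d+2)) ⊓
          (faceSpan K Δ (d+1) ⊓ LinearMap.ker (bdS K)))

/-- The flag complex of a graph: faces are the cliques. -/
def flagComplex (G : SimpleGraph V) : Set (Finset V) :=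
  {F | ∀ i ∈ F, ∀ j ∈ F, i ≠ j → G.Adj i j}

/-- The flag complex of the induced subgraph of `G` on `W`. -/
def flagComplexOn (G : SimpleGraph V) (W : Finset V) : Set (Finset V) :=
  {F | (F : Set V) ⊆ (W : Set V) ∧ ∀ i ∈ F, ∀ j ∈ F, i ≠ j → G.Adj i j}

/-- The induced subcomplex of `Δ` on a vertex subset `W`. -/
def restrictComplex (Δ : Set (Finset V)) (W : Finset V) : Set (Finset V) :=
  {F | F ∈ Δ ∧ F ⊆ W}

/-- The oriented `1`-chain `[a,b]` (so `[a,b] = -[b,a]`). -/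
noncomputable def edgeChain (a b : V) : Finset V →₀ K :=
  if a < b then Finsupp.single {a, b} 1 else -Finsupp.single {a, b} 1

/-- The oriented `2`-chain `[x,y,z]`, antisymmetric under transpositions. -/
noncomputable def triChain (x y z : V) : Finset V →₀ K :=
  if (x < y ∧ y < z) ∨ (y < z ∧ z < x) ∨ (z < x ∧ x < y)
  then Finsupp.single {x, y, z} 1
  else -Finsupp.single {x, y, z} 1

/-! ## Graded Betti numbers of monomial ideals via the Taylor complex -/

variable {n : ℕ}

/-- The multidegree lcm of the monomial generators indexed by `S`. -/
def mlcm {r : ℕ} (g : Fin r → (Fin n → ℕ)) (S : Finset (Fin r)) : Fin n → ℕ :=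
  fun x => S.sup fun k => g k x

/-- The differential of the Taylor complex tensored with the residue field `K`. -/
noncomputable def bdT {r : ℕ} (g : Fin r → (Fin n → ℕ)) :
    (Finset (Fin r) →₀ K) →ₗ[K] (Finset (Fin r) →₀ K) :=
  Finsupp.lsum K fun S => LinearMap.toSpanSingleton K (Finset (Fin r) →₀ K)
    (∑ k ∈ S, if mlcm g (S.erase k) = mlcm g S
      then ((-1 : K) ^ ((S.filter (fun j => j < k)).card)) • Finsupp.single (S.erase k) (1 : K)
      else 0)

/-- The degree-`j` strand of the Taylor complex in homological degree `p`. -/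
noncomputable def strand {r : ℕ} (g : Fin r → (Fin n → ℕ)) (p j : ℕ) :
    Submodule K (Finset (Fin r) →₀ K) :=
  Submodule.span K
    {c | ∃ S : Finset (Fin r), S.card = p ∧ (∑ x, mlcm g S x) = j ∧ c = Finsupp.single S 1}

/-- `dim_K Tor_p(S/I, K)_j`, computed from the Taylor complex on the monomial
generators `g` of `I`. -/
noncomputable def torRank {r : ℕ} (g : Fin r → (Fin n → ℕ)) (p j : ℕ) : ℕ :=
  Module.finrank K ↥(strand K g p j ⊓ LinearMap.ker (bdT K g)) -
    Module.finrank K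
      ↥(Submodule.map (bdT K g) (strand K g (p+1) j) ⊓
          (strand K g p j ⊓ LinearMap.ker (bdT K g)))

/-- The graded Betti number `β_{i,j}(I)` of the monomial ideal `I` generated by
the monomials with exponent vectors `g`, i.e. `dim_K Tor_i(I, K)_j = dim_K Tor_{i+1}(S/I, K)_j`. -/
noncomputable def betti {r : ℕ} (g : Fin r → (Fin n → ℕ)) (i j : ℕ) : ℕ :=
  torRank K g (i+1) j

/-- The monomial with exponent vector `a`. -/
noncomputable def mono (a : Fin n → ℕ) : MvPolynomial (Fin n) K :=
  MvPolynomial.monomial (Finsupp.equivFunOnFinite.symm a) 1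

/-- `g` is a list of exponent vectors of monomials generating the ideal `I`. -/
def IsGenSet {r : ℕ} (g : Fin r → (Fin n → ℕ)) (I : Ideal (MvPolynomial (Fin n) K)) : Prop :=
  Ideal.span (Set.range fun k => mono K (g k)) = I

/-- The ideal (generated by the monomials with exponent vectors `g`) has a
`d`-linear resolution. -/
def HasLinRes {r : ℕ} (g : Fin r → (Fin n → ℕ)) (d : ℕ) : Prop :=
  ∀ i j, betti K g i j ≠ 0 → j = i + d

/-- Castelnuovo–Mumford regularity of a monomial ideal, from its Betti numbers. -/
noncomputable def regT {r : ℕ} (g : Fin r → (Fin n → ℕ)) : ℕ :=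
  sSup {d | ∃ i j, betti K g i j ≠ 0 ∧ j = i + d}

/-! ## Edge ideals -/

/-- The edge ideal of a simple graph. -/
noncomputable def edgeIdeal (G : SimpleGraph (Fin n)) : Ideal (MvPolynomial (Fin n) K) :=
  Ideal.span {m | ∃ i j : Fin n, G.Adj i j ∧ m = MvPolynomial.X i * MvPolynomial.X j}

/-- The edge set of `G` as a finset. -/
noncomputable def edgeFins (G : SimpleGraph (Fin n)) : Finset (Sym2 (Fin n)) :=
  letI : Fintype ↥G.edgeSet := Fintype.ofFinite _
  G.edgeFinset

/-- The canonical monomial (exponent vector) generators of the edge ideal of `G`. -/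
noncomputable def edgeGens (G : SimpleGraph (Fin n)) : Fin (edgeFins G).card → (Fin n → ℕ) :=
  fun k x => if x ∈ ((edgeFins G).equivFin.symm k : Sym2 (Fin n)) then 1 else 0

/-- The graded Betti numbers `β_{i,j}(I(G))` of the edge ideal of `G` over `K`. -/
noncomputable def gBetti (G : SimpleGraph (Fin n)) (i j : ℕ) : ℕ :=
  betti K (edgeGens G) i j

/-- The projective dimension `pd(I(G))` of the edge ideal of `G` over `K`. -/
noncomputable def gPd (G : SimpleGraph (Fin n)) : ℕ :=
  sSup {i | ∃ j, gBetti K G i j ≠ 0}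

/-- The Green–Lazarsfeld index of the edge ideal of `G` over `K`
(`⊤` iff the ideal has a linear resolution). -/
noncomputable def gIndex (G : SimpleGraph (Fin n)) : ℕ∞ :=
  sInf {N : ℕ∞ | ∃ i j : ℕ, N = (i : ℕ∞) ∧ i + 2 < j ∧ gBetti K G i j ≠ 0}

/-- The regularity of the edge ideal of `G` over `K`. -/
noncomputable def gReg (G : SimpleGraph (Fin n)) : ℕ :=
  sSup {d | ∃ i j, gBetti K G i j ≠ 0 ∧ j = i + d}

/-- The edge ideal of `G` has a (2-)linear resolution over `K`. -/
def gLinRes (G : SimpleGraph (Fin n)) : Prop :=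
  ∀ i j, gBetti K G i j ≠ 0 → j = i + 2

/-- The edge ideal of `G` has almost maximal finite index over `K`:
`index(I(G)) = pd(I(G)) - 1` (with the index finite). -/
def AMFI (G : SimpleGraph (Fin n)) : Prop :=
  gIndex K G + 1 = (gPd K G : ℕ∞)

/-! ## Graph-theoretic notions -/

/-- `H` contains an induced (chordless) cycle of length `l`. -/
def HasInducedCycle {W : Type} (H : SimpleGraph W) (l : ℕ) : Prop :=
  ∃ f : ZMod l → W, Function.Injective f ∧
    ∀ i j : ZMod l, H.Adj (f i) (f j) ↔ (j = i + 1 ∨ i = j + 1)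

/-- `H` is chordal: it has no induced cycle of length greater than `3`. -/
def Chordal {W : Type} (H : SimpleGraph W) : Prop :=
  ∀ l : ℕ, 3 < l → ¬ HasInducedCycle H l

end EP


/-- The graph `G_{(d)_1}`: the `4`-gonal dipyramid, i.e. a `4`-cycle `0 - 1 - 2 - 3 - 0`
with two apexes `4` and `5` each adjacent to all of `0, 1, 2, 3` (and `4, 5` not adjacent). -/
def Gd1 : SimpleGraph (Fin 6) :=
  SimpleGraph.fromRel (fun i j =>
    (i, j) ∈ ([(0, 1), (1, 2), (2, 3), (0, 3), (4, 0), (4, 1), (4, 2), (4, 3),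
      (5, 0), (5, 1), (5, 2), (5, 3)] : List (Fin 6 × Fin 6)))

/-!
The Taylor complex of squarefree monomials with supports `E k`, in squarefree multidegree `W`,
computes relative simplicial homology: the sets of indices with union inside `W` modulo those with
union strictly inside `W`. The join with an edge `E e ⊆ W` is a contracting homotopy of the full
simplex, so modulo boundaries every relative cycle is the join of `e` with its own boundary, which
lives in lower multidegrees. Hence a nonzero `Tor_(p+1)` in multidegree `W` forces a nonzero `Tor_p`
in some `Y` with `W = E e ∪ Y`, and the top degree of the Betti numbers grows by at most two with
the homological degree: from the bound `t + 1` in homological degree `t - 1` to `t + 3` and `t + 5`.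

If `t + 5` is attained, in multidegree `W`, then two overlapping edges inside `W` would make every
relative cycle bound, so the edges inside `W` form an induced matching, whose size is the
index `t + 2` of the nonzero `Tor`; counting vertices gives `t = 1` and three edges. Any further
edge of the graph would create a Betti number beyond the projective dimension. Hence the graph
consists of three disjoint edges, and its complement is the dipyramid.
-/

namespace EP

open Finset

section FaceSpan

variable {K : Type} [Field K] {V : Type}

theorem map_mem_of_mem_supported {f : (Finset V →₀ K) →ₗ[K] (Finset V →₀ K)}
    {N : Submodule K (Finset V →₀ K)} {Δ : Set (Finset V)} {z : Finset V →₀ K}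
    (h : ∀ S ∈ Δ, f (single S 1) ∈ N) (hz : z ∈ supported K K Δ) : f z ∈ N := by
  rw [supported_eq_span_single] at hz
  exact Submodule.span_le (p := N.comap f).mpr (Set.forall_mem_image.mpr h) hz

theorem faceSpan_eq_supported (Δ : Set (Finset V)) (k : ℕ) :
    faceSpan K Δ k = supported K K (Δ ∩ {S | #S = k}) := by
  rw [faceSpan, supported_eq_span_single]
  congr 1
  ext c
  simp only [Set.mem_ofPred_eq, Set.mem_image, Set.mem_inter_iff, and_assoc, eq_comm (a := c)]

theorem mem_faceSpan {Δ : Set (Finset V)} {k : ℕ} {z : Finset V →₀ K} :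
    z ∈ faceSpan K Δ k ↔ z ∈ supported K K Δ ∧ z ∈ supported K K {S | #S = k} := by
  rw [faceSpan_eq_supported, supported_inter, Submodule.mem_inf]

theorem faceSpan_mono {Δ Γ : Set (Finset V)} (h : Δ ⊆ Γ) (k : ℕ) :
    faceSpan K Δ k ≤ faceSpan K Γ k := fun _ hz ↦
  mem_faceSpan.mpr ⟨supported_mono h (mem_faceSpan.mp hz).1, (mem_faceSpan.mp hz).2⟩

theorem exists_add_eq_of_mem_faceSpan_union {p : ℕ} {A B : Set (Finset V)} {z : Finset V →₀ K}
    (hz : z ∈ faceSpan K (A ∪ B) p) :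
    ∃ a ∈ faceSpan K A p, ∃ b ∈ faceSpan K B p, a + b = z := by
  rw [faceSpan_eq_supported, Set.union_inter_distrib_right, supported_union] at hz
  simpa only [faceSpan_eq_supported] using Submodule.mem_sup.mp hz

end FaceSpan

section Chains

variable (K : Type) [Field K] {V : Type} [LinearOrder V]

/-- The sign with which `v` occurs in the boundary of a face `S` containing it, defined for every
face so that it also orients the join of `v` with `S`. -/
def sgn (v : V) (S : Finset V) : K := (-1) ^ #(S.filter (· < v))

theorem sgn_mul_self (v : V) (S : Finset V) : sgn K v S * sgn K v S = 1 := by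
  rw [sgn, ← mul_pow, neg_one_mul, neg_neg, one_pow]

theorem sgn_ne_zero (v : V) (S : Finset V) : sgn K v S ≠ 0 := fun h ↦ by
  simpa [h] using sgn_mul_self K v S

variable [DecidableEq V]

theorem sgn_insert {v w : V} {S : Finset V} (hw : w ∉ S) :
    sgn K v (insert w S) = (if w < v then -1 else 1) * sgn K v S := by
  simp only [sgn, filter_insert]
  split_ifs
  · rw [card_insert_of_notMem fun h ↦ hw (mem_filter.mp h).1, pow_succ']
  · rw [one_mul]

theorem sgn_erase {v w : V} {S : Finset V} (hw : w ∈ S) :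
    sgn K v (S.erase w) = (if w < v then -1 else 1) * sgn K v S := by
  conv_rhs => rw [← insert_erase hw, sgn_insert K (notMem_erase w S)]
  split_ifs <;> simp

theorem sgn_insert_mul_sgn_add_sgn_mul_sgn_erase {e v : V} {S : Finset V}
    (he : e ∉ S) (hv : v ∈ S) :
    sgn K e S * sgn K v (insert e S) + sgn K v S * sgn K e (S.erase v) = 0 := by
  rw [sgn_insert K he, sgn_erase K hv]
  rcases lt_or_gt_of_ne (ne_of_mem_of_not_mem hv he) with h | h <;>
  · simp only [h, h.not_gt, if_true, if_false]
    ring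

/-- The oriented join with a vertex `e`, which kills the faces containing `e`. It is a contracting
homotopy of the chain complex of the full simplex. -/
noncomputable def cone (e : V) : (Finset V →₀ K) →ₗ[K] (Finset V →₀ K) :=
  Finsupp.lsum K fun S ↦ LinearMap.toSpanSingleton K (Finset V →₀ K)
    (if e ∈ S then 0 else sgn K e S • single (insert e S) 1)

variable {K}

theorem bdS_single (S : Finset V) :
    bdS K (single S 1) = ∑ v ∈ S, sgn K v S • single (S.erase v) 1 := by
  simp [bdS, bdFace, sgn]

theorem cone_single_of_mem {e : V} {S : Finset V} (he : e ∈ S) :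
    cone K e (single S 1) = 0 := by
  simp [cone, he]

theorem cone_single_of_notMem {e : V} {S : Finset V} (he : e ∉ S) :
    cone K e (single S 1) = sgn K e S • single (insert e S) 1 := by
  simp [cone, he]

theorem bdS_cone_add_cone_bdS_single (e : V) (S : Finset V) :
    bdS K (cone K e (single S 1)) + cone K e (bdS K (single S 1)) = single S 1 := by
  rw [bdS_single, map_sum]
  simp only [map_smul]
  by_cases he : e ∈ S
  · have other_terms : ∀ v ∈ S, v ≠ e → sgn K v S • cone K e (single (S.erase v) 1) = 0 :=
      fun v _ hv ↦ by rw [cone_single_of_mem (mem_erase.mpr ⟨hv.symm, he⟩), smul_zero]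
    rw [cone_single_of_mem he, map_zero, zero_add,
      sum_eq_single_of_mem e he other_terms, cone_single_of_notMem (notMem_erase e S), smul_smul,
      sgn_erase K he, insert_erase he, if_neg (lt_irrefl e), one_mul, sgn_mul_self, one_smul]
  · have cancel : ∀ v ∈ S, sgn K e S • sgn K v (insert e S) • single ((insert e S).erase v) (1 : K)
        + sgn K v S • cone K e (single (S.erase v) 1) = 0 := fun v hv ↦ by
      rw [cone_single_of_notMem fun h ↦ he (mem_of_mem_erase h),
        erase_insert_of_ne (ne_of_mem_of_not_mem hv he).symm, smul_smul, smul_smul, ← add_smul,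
        sgn_insert_mul_sgn_add_sgn_mul_sgn_erase K he hv, zero_smul]
    rw [cone_single_of_notMem he, map_smul, bdS_single, sum_insert he, erase_insert he, smul_add,
      Finset.smul_sum, add_assoc, ← sum_add_distrib, sum_eq_zero cancel, add_zero, smul_smul,
      sgn_insert K he, if_neg (lt_irrefl e), one_mul, sgn_mul_self, one_smul]

theorem bdS_cone_add_cone_bdS (e : V) (z : Finset V →₀ K) :
    bdS K (cone K e z) + cone K e (bdS K z) = z := by
  have h : bdS K ∘ₗ cone K e + cone K e ∘ₗ bdS K = LinearMap.id :=
    lhom_ext' fun S ↦ LinearMap.ext_ring <| by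
      simpa using bdS_cone_add_cone_bdS_single e S
  exact LinearMap.congr_fun h z

theorem bdS_cone_of_bdS_eq_zero (e : V) {z : Finset V →₀ K} (hz : bdS K z = 0) :
    bdS K (cone K e z) = z := by
  simpa [hz] using bdS_cone_add_cone_bdS e z

theorem bdS_bdS_single (S : Finset V) : bdS K (bdS K (single S 1)) = 0 := by
  induction S using Finset.induction_on with
  | empty => simp [bdS_single]
  | insert e S he ih =>
    have bdS_bdS_cone : bdS K (bdS K (cone K e (single S 1))) = 0 := by
      rw [eq_sub_of_add_eq (bdS_cone_add_cone_bdS (K := K) e (single S 1)), map_sub,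
        bdS_cone_of_bdS_eq_zero e ih, sub_self]
    rw [cone_single_of_notMem he, map_smul, map_smul] at bdS_bdS_cone
    exact (smul_eq_zero.mp bdS_bdS_cone).resolve_left (sgn_ne_zero K e S)

theorem bdS_bdS (z : Finset V →₀ K) : bdS K (bdS K z) = 0 := by
  have h : bdS K ∘ₗ bdS K = (0 : (Finset V →₀ K) →ₗ[K] (Finset V →₀ K)) :=
    lhom_ext' fun S ↦ LinearMap.ext_ring <| by simpa using bdS_bdS_single S
  exact LinearMap.congr_fun h z

theorem bdS_single_mem_supported {Γ : Set (Finset V)} {S : Finset V}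
    (h : ∀ v ∈ S, S.erase v ∈ Γ) : bdS K (single S 1) ∈ supported K K Γ := by
  rw [bdS_single]
  exact Submodule.sum_mem _ fun v hv ↦
    Submodule.smul_mem _ _ (single_mem_supported K _ (h v hv))

theorem bdS_mem_supported {Δ Γ : Set (Finset V)} {z : Finset V →₀ K}
    (h : ∀ S ∈ Δ, ∀ v ∈ S, S.erase v ∈ Γ) (hz : z ∈ supported K K Δ) :
    bdS K z ∈ supported K K Γ :=
  map_mem_of_mem_supported (fun S hS ↦ bdS_single_mem_supported (h S hS)) hz

theorem bdS_mem_supported_of_isLowerSet {Δ : Set (Finset V)} {z : Finset V →₀ K}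
    (hΔ : IsLowerSet Δ) (hz : z ∈ supported K K Δ) : bdS K z ∈ supported K K Δ :=
  bdS_mem_supported (fun S hS v _ ↦ hΔ (erase_subset v S) hS) hz

theorem bdS_apply_eq_zero {Δ : Set (Finset V)} {T : Finset V} {z : Finset V →₀ K}
    (h : ∀ v ∉ T, insert v T ∉ Δ) (hz : z ∈ supported K K Δ) : bdS K z T = 0 := by
  refine (mem_supported' K _).mp (bdS_mem_supported (Γ := {T}ᶜ) (fun S hS v hv ↦ ?_) hz) T (by simp)
  rintro rfl
  exact h v (notMem_erase v S) (by rwa [insert_erase hv])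

theorem bdS_single_insert_apply {e : V} {S : Finset V} (he : e ∉ S) :
    bdS K (single (insert e S) 1) S = sgn K e (insert e S) := by
  rw [bdS_single, finsetSum_apply, sum_eq_single_of_mem e (mem_insert_self e S)]
  · simp [erase_insert he]
  · intro v _ hv
    rw [Finsupp.smul_apply, single_eq_of_ne, smul_zero]
    rintro h
    exact he (h ▸ mem_erase.mpr ⟨hv.symm, mem_insert_self e S⟩)

theorem cone_mem_supported {e : V} {Δ Γ : Set (Finset V)} {z : Finset V →₀ K}
    (h : ∀ S ∈ Δ, e ∉ S → insert e S ∈ Γ) (hz : z ∈ supported K K Δ) :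
    cone K e z ∈ supported K K Γ := by
  refine map_mem_of_mem_supported (fun S hS ↦ ?_) hz
  by_cases he : e ∈ S
  · rw [cone_single_of_mem he]
    exact Submodule.zero_mem _
  · rw [cone_single_of_notMem he]
    exact Submodule.smul_mem _ _ (single_mem_supported K _ (h S hS he))

theorem bdS_mem_faceSpan {Δ Γ : Set (Finset V)} {k : ℕ} {z : Finset V →₀ K}
    (h : ∀ S ∈ Δ, ∀ v ∈ S, S.erase v ∈ Γ) (hz : z ∈ faceSpan K Δ (k + 1)) :
    bdS K z ∈ faceSpan K Γ k := by
  refine mem_faceSpan.mpr ⟨bdS_mem_supported h (mem_faceSpan.mp hz).1,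
    bdS_mem_supported (fun S (hS : #S = k + 1) v hv ↦ ?_) (mem_faceSpan.mp hz).2⟩
  simp [card_erase_of_mem hv, hS]

theorem cone_mem_faceSpan {e : V} {Δ Γ : Set (Finset V)} {k : ℕ} {z : Finset V →₀ K}
    (h : ∀ S ∈ Δ, insert e S ∈ Γ) (hz : z ∈ faceSpan K Δ k) :
    cone K e z ∈ faceSpan K Γ (k + 1) := by
  refine mem_faceSpan.mpr ⟨cone_mem_supported (fun S hS _ ↦ h S hS) (mem_faceSpan.mp hz).1,
    cone_mem_supported (fun S (hS : #S = k) he ↦ ?_) (mem_faceSpan.mp hz).2⟩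
  simp [card_insert_of_notMem he, hS]

end Chains

section RelAcyclic

variable {K : Type} [Field K] {V : Type} [DecidableEq V] [LinearOrder V] {Δ Δ' Γ : Set (Finset V)}
  {p : ℕ}

variable (K) in
/-- Relative cycles of `(Δ, Γ)` on `p` vertices are relative boundaries, i.e. the relative homology
of `(Δ, Γ)` vanishes in dimension `p - 1`. -/
def RelAcyclic (Δ Γ : Set (Finset V)) (p : ℕ) : Prop :=
  ∀ z ∈ faceSpan K Δ p, bdS K z ∈ supported K K Γ →
    ∃ x ∈ faceSpan K Δ (p + 1), z - bdS K x ∈ supported K K Γ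

theorem relAcyclic_self (Δ : Set (Finset V)) (p : ℕ) : RelAcyclic K Δ Δ p := fun z hz _ ↦
  ⟨0, Submodule.zero_mem _, by simpa using (mem_faceSpan.mp hz).1⟩

theorem RelAcyclic.trans (hΔ : RelAcyclic K Δ Δ' p) (hΔ' : RelAcyclic K Δ' Γ p)
    (hsub : Δ' ⊆ Δ) (hsub' : Γ ⊆ Δ') : RelAcyclic K Δ Γ p := by
  intro z hz hbz
  obtain ⟨x, hx, hzx⟩ := hΔ z hz (supported_mono hsub' hbz)
  have hzx_card : z - bdS K x ∈ faceSpan K Δ' p :=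
    mem_faceSpan.mpr ⟨hzx, Submodule.sub_mem _ (mem_faceSpan.mp hz).2
      (mem_faceSpan.mp (bdS_mem_faceSpan (Γ := Set.univ) (fun _ _ _ _ ↦ trivial) hx)).2⟩
  obtain ⟨y, hy, hzy⟩ := hΔ' _ hzx_card (by rwa [map_sub, bdS_bdS, sub_zero])
  refine ⟨x + y, Submodule.add_mem _ hx (faceSpan_mono hsub _ hy), ?_⟩
  rwa [map_add, ← sub_sub]

theorem RelAcyclic.excision {A B : Set (Finset V)} (h : RelAcyclic K A (A ∩ B) p)
    (hA : IsLowerSet A) (hB : IsLowerSet B) : RelAcyclic K (A ∪ B) B p := by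
  intro z hz hbz
  obtain ⟨a, ha, b, hb, rfl⟩ := exists_add_eq_of_mem_faceSpan_union hz
  have hb_supp := (mem_faceSpan.mp hb).1
  have hba : bdS K a ∈ supported K K (A ∩ B) := by
    rw [supported_inter]
    refine ⟨bdS_mem_supported_of_isLowerSet hA (mem_faceSpan.mp ha).1, ?_⟩
    simpa using Submodule.sub_mem _ hbz (bdS_mem_supported_of_isLowerSet hB hb_supp)
  obtain ⟨x, hx, hax⟩ := h a ha hba
  refine ⟨x, faceSpan_mono Set.subset_union_left _ hx, ?_⟩
  rw [add_sub_right_comm]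
  exact Submodule.add_mem _ (supported_mono Set.inter_subset_right hax) hb_supp

/-- The boundary of `z` is `bdS x + c` with `x` in `Δ'`, and `g` is the cone over `z - x`. -/
theorem exists_sub_bdS_sub_cone_mem (h : RelAcyclic K Δ' Γ p) {e : V} (hsub : Δ' ⊆ Δ)
    (he : ∀ S ∈ Δ, insert e S ∈ Δ) {z : Finset V →₀ K} (hz : z ∈ faceSpan K Δ (p + 1))
    (hbz : bdS K z ∈ supported K K Δ') :
    ∃ g ∈ faceSpan K Δ (p + 2), ∃ c ∈ faceSpan K Γ p, bdS K c = 0 ∧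
      z - bdS K g - cone K e c ∈ supported K K Δ' := by
  have hbz_card := bdS_mem_faceSpan (Γ := Set.univ) (fun _ _ _ _ ↦ trivial) hz
  obtain ⟨x, hx, hzx⟩ := h (bdS K z) (mem_faceSpan.mpr ⟨hbz, (mem_faceSpan.mp hbz_card).2⟩)
    (by rw [bdS_bdS]; exact Submodule.zero_mem _)
  have hc_card := Submodule.sub_mem _ hbz_card
    (bdS_mem_faceSpan (Γ := Set.univ) (fun _ _ _ _ ↦ trivial) hx)
  refine ⟨cone K e (z - x),
    cone_mem_faceSpan he (Submodule.sub_mem _ hz (faceSpan_mono hsub _ hx)),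
    bdS K z - bdS K x, mem_faceSpan.mpr ⟨hzx, (mem_faceSpan.mp hc_card).2⟩,
    by simp [bdS_bdS], ?_⟩
  have homotopy := bdS_cone_add_cone_bdS e (z - x)
  rw [map_sub (bdS K)] at homotopy
  rw [sub_sub, homotopy, sub_sub_cancel]
  exact (mem_faceSpan.mp hx).1

theorem RelAcyclic.cone (h : RelAcyclic K Δ' Γ p) {e : V} (hsub : Δ' ⊆ Δ)
    (he : ∀ S ∈ Δ, insert e S ∈ Δ) (heΓ : ∀ S ∈ Γ, insert e S ∈ Δ') :
    RelAcyclic K Δ Δ' (p + 1) := by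
  intro z hz hbz
  obtain ⟨g, hg, c, hc, -, hzg⟩ := exists_sub_bdS_sub_cone_mem h hsub he hz hbz
  refine ⟨g, hg, ?_⟩
  simpa using Submodule.add_mem _ hzg (mem_faceSpan.mp (cone_mem_faceSpan heΓ hc)).1

end RelAcyclic

section UnionComplex

variable {K : Type} [Field K] {ι σ : Type} [DecidableEq σ] {E : ι → Finset σ}
  {D D' : Set (Finset σ)} {W : Finset σ} {e f : ι} {p : ℕ}

variable (E) in
/-- The complex of those sets of indices for which the union of the corresponding `E k` lies in
`D`. When the `E k` are the supports of squarefree monomials, the union is the support of their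
least common multiple. -/
def unionComplex (D : Set (Finset σ)) : Set (Finset ι) := {S | S.biUnion E ∈ D}

theorem mem_unionComplex {S : Finset ι} : S ∈ unionComplex E D ↔ S.biUnion E ∈ D := Iff.rfl

theorem isLowerSet_unionComplex (hD : IsLowerSet D) : IsLowerSet (unionComplex E D) :=
  fun _ _ hTS hS ↦ hD (biUnion_subset_biUnion_of_subset_left E hTS) hS

theorem unionComplex_mono (h : D ⊆ D') : unionComplex E D ⊆ unionComplex E D' := fun _ hS ↦ h hS

theorem insert_mem_unionComplex [DecidableEq ι] (h : ∀ X ∈ D, E e ∪ X ∈ D') :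
    ∀ S ∈ unionComplex E D, insert e S ∈ unionComplex E D' := fun S hS ↦ by
  rw [mem_unionComplex, biUnion_insert]
  exact h _ hS

variable [DecidableEq ι] [LinearOrder ι]

variable (K E) in
/-- The part of `Tor_p(S/I, K)` in squarefree multidegree `W` vanishes, for the ideal `I` generated
by the squarefree monomials with supports `E k`: in that multidegree the Taylor complex consists of
the chains on the sets with union `W`, i.e. the relative chains of the sets with union inside `W`
modulo those with union strictly inside `W`. -/
def TorVanishes (p : ℕ) (W : Finset σ) : Prop :=
  RelAcyclic K (unionComplex E (Set.Iic W)) (unionComplex E (Set.Iio W)) p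

theorem exists_card_eq_and_biUnion_eq (h : ¬ TorVanishes K E p W) :
    ∃ S : Finset ι, #S = p ∧ S.biUnion E = W := by
  by_contra! hS
  refine h fun z hz _ ↦ ⟨0, Submodule.zero_mem _, ?_⟩
  rw [map_zero, sub_zero]
  rw [faceSpan_eq_supported] at hz
  exact supported_mono (fun S hS' ↦ lt_of_le_of_ne hS'.1 (hS S hS'.2)) hz

theorem relAcyclic_unionComplex (hD : IsLowerSet D) (hD' : IsLowerSet D') (hsub : D' ⊆ D)
    (hfin : (D \ D').Finite) (h : ∀ Y ∈ D \ D', TorVanishes K E p Y) :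
    RelAcyclic K (unionComplex E D) (unionComplex E D') p := by
  induction hn : (D \ D').ncard generalizing D' with
  | zero =>
    rw [Set.ncard_eq_zero hfin, Set.sdiff_eq_empty] at hn
    rw [hsub.antisymm hn]
    exact relAcyclic_self _ p
  | succ n ih =>
    obtain ⟨Y, hY, hmin⟩ :=
      hfin.exists_minimal (Set.nonempty_of_ncard_ne_zero (hn ▸ n.succ_ne_zero))
    have hIio : Set.Iio Y ⊆ D' := fun X (hX : X < Y) ↦ by
      by_contra hXD'
      exact hX.not_ge (hmin ⟨hD hX.le hY.1, hXD'⟩ hX.le)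
    have hinter : Set.Iic Y ∩ D' = Set.Iio Y := by
      ext X
      refine ⟨fun hX ↦ Set.mem_Iio.mpr (lt_of_le_of_ne hX.1 ?_),
        fun hX ↦ ⟨(Set.mem_Iio.mp hX).le, hIio hX⟩⟩
      rintro rfl
      exact hY.2 hX.2
    have hdiff : D \ (Set.Iic Y ∪ D') = (D \ D') \ {Y} := by
      rw [← Set.Iio_union_right, Set.union_right_comm, Set.union_eq_self_of_subset_left hIio,
        Set.sdiff_sdiff]
    have hIic : Set.Iic Y ∪ D' ⊆ D := Set.union_subset (fun X hX ↦ hD hX hY.1) hsub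
    refine RelAcyclic.trans (Δ' := unionComplex E (Set.Iic Y ∪ D')) ?_ ?_
      (unionComplex_mono hIic) (unionComplex_mono Set.subset_union_right)
    · refine ih ((isLowerSet_Iic Y).union hD') hIic ?_ ?_ ?_ <;> rw [hdiff]
      · exact hfin.subset Set.sdiff_subset
      · exact fun X hX ↦ h X hX.1
      · rw [Set.ncard_sdiff_singleton_of_mem hY, hn, Nat.add_sub_cancel]
    · refine RelAcyclic.excision (A := unionComplex E (Set.Iic Y)) (B := unionComplex E D') ?_
        (isLowerSet_unionComplex (isLowerSet_Iic Y)) (isLowerSet_unionComplex hD')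
      have hinter' : unionComplex E (Set.Iic Y) ∩ unionComplex E D' = unionComplex E (Set.Iio Y) :=
        congrArg (unionComplex E) hinter
      rw [hinter']
      exact h Y hY

theorem exists_ssubset_union_eq_of_not_torVanishes (h : ¬ TorVanishes K E (p + 1) W)
    (he : E e ⊆ W) : ∃ Y ⊂ W, E e ∪ Y = W ∧ ¬ TorVanishes K E p Y := by
  by_contra! hY
  have lower : IsLowerSet {X | X ⊂ W ∧ E e ∪ X ≠ W} := fun X Z hZX hX ↦
    ⟨hZX.trans_ssubset hX.1, fun hZ ↦ hX.2 <| (union_subset he hX.1.subset).antisymm <|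
      hZ.ge.trans (union_subset_union_right hZX)⟩
  refine h (RelAcyclic.cone (Γ := unionComplex E {X | X ⊂ W ∧ E e ∪ X ≠ W}) (e := e)
    (relAcyclic_unionComplex (isLowerSet_Iio W) lower (fun X hX ↦ hX.1)
      ((Set.finite_Iio W).subset Set.sdiff_subset) fun X hX ↦ ?_)
    (unionComplex_mono Set.Iio_subset_Iic_self)
    (insert_mem_unionComplex fun X hX ↦ union_subset he hX)
    (insert_mem_unionComplex fun X hX ↦
      (union_subset he hX.1.subset).ssubset_of_ne hX.2))
  exact hY X hX.1 (not_not.mp fun hne ↦ hX.2 ⟨hX.1, hne⟩)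

end UnionComplex

section Overlap

variable {K : Type} [Field K] {ι σ : Type} [DecidableEq σ] {E : ι → Finset σ}
  {W Z : Finset σ} {e e' f : ι} {p q : ℕ}

/-- The subsets of `W` missing at least two elements of `W`. -/
def codimTwo (W : Finset σ) : Set (Finset σ) := {Z | Z ⊆ W ∧ #Z + 2 ≤ #W}

omit [DecidableEq σ] in
theorem isLowerSet_codimTwo (W : Finset σ) : IsLowerSet (codimTwo W) := fun _ _ hZX hX ↦
  ⟨hZX.trans hX.1, (Nat.add_le_add_right (card_le_card hZX) 2).trans hX.2⟩

theorem eq_sdiff_of_mem_codimTwo (he : E e ⊆ W) (hcard : #(E e) ≤ 2) (hZ : Z ∈ codimTwo W)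
    (hunion : E e ∪ Z = W) : Z = W \ E e := by
  have hsub : W \ E e ⊆ Z := by
    rw [← hunion, union_sdiff_left]
    exact sdiff_subset
  refine (eq_of_subset_of_card_le hsub ?_).symm
  have := card_sdiff_add_card_eq_card he
  have := hZ.2
  omega

theorem union_ssubset_of_ssubset_sdiff (he : E e ⊆ W) (hZ : Z ⊂ W \ E e) : E e ∪ Z ⊂ W := by
  refine (union_subset he (hZ.subset.trans sdiff_subset)).ssubset_of_ne fun h ↦ hZ.2 ?_
  rw [← h, union_sdiff_left]
  exact sdiff_subset

theorem union_union_ssubset_of_mem_codimTwo (he : E e ⊆ W) (hf : E f ⊆ W)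
    (hcard : #(E f \ E e) ≤ 1) (hZ : Z ∈ codimTwo (W \ E e)) : E e ∪ (E f ∪ Z) ⊂ W := by
  refine ssubset_of_subset_of_ne
    (union_subset he (union_subset hf (hZ.1.trans sdiff_subset))) fun h ↦ ?_
  have hcover : W \ E e ⊆ (E f \ E e) ∪ Z := by
    rw [← h, union_sdiff_left, union_sdiff_distrib]
    exact union_subset_union_right sdiff_subset
  have := (card_le_card hcover).trans (card_union_le _ _)
  have := hZ.2
  omega

theorem union_union_ssubset_of_not_subset (he : E e ⊆ W) (hf : E f ⊆ W) (hef : ¬ E e ⊆ E f)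
    (he' : E e' ⊆ W \ E e) (hZ : Z ⊆ W \ E e) : E f ∪ (E e' ∪ Z) ⊂ W := by
  obtain ⟨u, hue, huf⟩ := not_subset.mp hef
  refine ssubset_of_subset_of_ne
    (union_subset hf ((union_subset he' hZ).trans sdiff_subset)) fun h ↦ ?_
  have hu := h.symm ▸ he hue
  rcases mem_union.mp hu with hu | hu
  · exact huf hu
  · exact (mem_sdiff.mp (union_subset he' hZ hu)).2 hue

variable [DecidableEq ι] [LinearOrder ι]

theorem relAcyclic_codimTwo (h : ∀ w ∈ W, TorVanishes K E p (W.erase w)) :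
    RelAcyclic K (unionComplex E (Set.Iio W)) (unionComplex E (codimTwo W)) p := by
  refine relAcyclic_unionComplex (isLowerSet_Iio W) (isLowerSet_codimTwo W) (fun Z hZ ↦ ?_)
    ((Set.finite_Iio W).subset Set.sdiff_subset) fun Y hY ↦ ?_
  · exact ssubset_of_subset_of_ne hZ.1 fun h ↦ by have := h ▸ hZ.2; omega
  · obtain ⟨hYW, hY'⟩ : Y ⊂ W ∧ ¬ (Y ⊆ W ∧ #Y + 2 ≤ #W) := hY
    obtain ⟨w, hw, hwY⟩ := exists_of_ssubset hYW
    have := not_le.mp fun h ↦ hY' ⟨hYW.subset, h⟩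
    have := card_erase_of_mem hw
    rw [eq_of_subset_of_card_le (subset_erase.mpr ⟨hYW.subset, hwY⟩) (by omega)]
    exact h w hw

theorem exists_sub_bdS_sub_cone_mem_of_torVanishes_erase (he : E e ⊆ W)
    (h : ∀ w ∈ W, TorVanishes K E p (W.erase w)) {z : Finset ι →₀ K}
    (hz : z ∈ faceSpan K (unionComplex E (Set.Iic W)) (p + 1))
    (hbz : bdS K z ∈ supported K K (unionComplex E (Set.Iio W))) :
    ∃ g ∈ faceSpan K (unionComplex E (Set.Iic W)) (p + 2),
      ∃ c ∈ faceSpan K (unionComplex E (codimTwo W)) p, bdS K c = 0 ∧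
        z - bdS K g - cone K e c ∈ supported K K (unionComplex E (Set.Iio W)) :=
  exists_sub_bdS_sub_cone_mem (relAcyclic_codimTwo h) (unionComplex_mono Set.Iio_subset_Iic_self)
    (insert_mem_unionComplex fun _ hX ↦ union_subset he hX) hz hbz

/-- The other terms in the boundary of `e ∧ f ∧ e' ∧ d` have smaller multidegree: `e ∧ f ∧ d`
because `f` adds at most one vertex to `e` and `d` misses two, and `f ∧ e' ∧ d` because it misses a
vertex of `e`. -/
theorem cone_cone_add_bdS_mem (he : E e ⊆ W) (hf : E f ⊆ W) (hcard : #(E f \ E e) ≤ 1)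
    (hef : ¬ E e ⊆ E f) (he' : E e' ⊆ W \ E e) {d : Finset ι →₀ K}
    (hd : d ∈ supported K K (unionComplex E (codimTwo (W \ E e)))) (hbd : bdS K d = 0) :
    cone K e (cone K e' d) + bdS K (cone K e (cone K f (cone K e' d))) ∈
      supported K K (unionComplex E (Set.Iio W)) := by
  have hbef : bdS K (cone K f (cone K e' d)) = cone K e' d - cone K f d := by
    have := bdS_cone_add_cone_bdS f (cone K e' d)
    rwa [bdS_cone_of_bdS_eq_zero e' hbd, ← eq_sub_iff_add_eq] at this
  have homotopy := bdS_cone_add_cone_bdS e (cone K f (cone K e' d))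
  have hefd : cone K e (cone K f d) ∈ supported K K (unionComplex E (Set.Iio W)) := by
    refine cone_mem_supported (fun S hS _ ↦ ?_)
      (cone_mem_supported (Γ := unionComplex E {X | E e ∪ X ⊂ W}) (fun S hS _ ↦ ?_) hd)
    · exact insert_mem_unionComplex (D := {X | E e ∪ X ⊂ W}) (fun X hX ↦ hX) S hS
    · exact insert_mem_unionComplex
        (fun Z hZ ↦ union_union_ssubset_of_mem_codimTwo he hf hcard hZ) S hS
  have hfe'd : cone K f (cone K e' d) ∈ supported K K (unionComplex E (Set.Iio W)) := by
    refine cone_mem_supported (fun S hS _ ↦ ?_)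
      (cone_mem_supported (Γ := unionComplex E {X | E f ∪ X ⊂ W}) (fun S hS _ ↦ ?_) hd)
    · exact insert_mem_unionComplex (D := {X | E f ∪ X ⊂ W}) (fun X hX ↦ hX) S hS
    · exact insert_mem_unionComplex
        (fun Z hZ ↦ union_union_ssubset_of_not_subset he hf hef he' hZ.1) S hS
  rw [hbef, map_sub] at homotopy
  have hsum : cone K e (cone K e' d) + bdS K (cone K e (cone K f (cone K e' d))) =
      cone K e (cone K f d) + cone K f (cone K e' d) :=
    sub_eq_iff_eq_add'.mp (by rw [add_sub_right_comm, add_comm]; exact homotopy)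
  rw [hsum]
  exact Submodule.add_mem _ hefd hfe'd

theorem exists_add_eq_of_mem_faceSpan_codimTwo (he : E e ⊆ W) (hcard : #(E e) ≤ 2)
    {c : Finset ι →₀ K} (hc : c ∈ faceSpan K (unionComplex E (codimTwo W)) p) (hbc : bdS K c = 0) :
    ∃ a ∈ faceSpan K (unionComplex E (Set.Iic (W \ E e))) p,
      ∃ b ∈ supported K K (unionComplex E {Z | E e ∪ Z ⊂ W}), a + b = c ∧
        bdS K a ∈ supported K K (unionComplex E (Set.Iio (W \ E e))) := by
  have hcover : unionComplex E (codimTwo W) ⊆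
      unionComplex E (Set.Iic (W \ E e)) ∪ unionComplex E {Z | E e ∪ Z ⊂ W} := fun S hS ↦ by
    by_cases hSW : E e ∪ S.biUnion E = W
    · exact Or.inl (eq_sdiff_of_mem_codimTwo he hcard hS hSW).le
    · exact Or.inr ((union_subset he hS.1).ssubset_of_ne hSW)
  obtain ⟨a, ha, b, hb, rfl⟩ := exists_add_eq_of_mem_faceSpan_union (faceSpan_mono hcover _ hc)
  refine ⟨a, ha, b, (mem_faceSpan.mp hb).1, rfl, ?_⟩
  have lower : IsLowerSet {Z | E e ∪ Z ⊂ W} := fun X Z hZX hX ↦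
    (union_subset_union_right hZX).trans_ssubset hX
  have hba : bdS K a ∈ supported K K (unionComplex E {Z | E e ∪ Z ⊂ W}) := by
    rw [map_add, ← eq_neg_iff_add_eq_zero] at hbc
    rw [hbc]
    exact Submodule.neg_mem _ (bdS_mem_supported_of_isLowerSet (isLowerSet_unionComplex lower)
      (mem_faceSpan.mp hb).1)
  have hba' := bdS_mem_supported_of_isLowerSet
    (isLowerSet_unionComplex (isLowerSet_Iic _)) (mem_faceSpan.mp ha).1
  have hinter := Submodule.mem_inf.mpr ⟨hba', hba⟩
  rw [← supported_inter] at hinter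
  refine supported_mono (fun S hS ↦ ?_) hinter
  obtain ⟨hSX, hSW⟩ : S.biUnion E ⊆ W \ E e ∧ E e ∪ S.biUnion E ⊂ W := hS
  exact hSX.ssubset_of_ne fun h ↦ hSW.ne (by rw [h, union_sdiff_of_subset he])

theorem exists_cone_add_bdS_mem (he : E e ⊆ W) (hf : E f ⊆ W) (hcard : #(E e) ≤ 2)
    (hcard' : #(E f \ E e) ≤ 1) (hef : ¬ E e ⊆ E f) (he' : E e' ⊆ W \ E e)
    (h : ∀ w ∈ W \ E e, TorVanishes K E q ((W \ E e).erase w)) {c : Finset ι →₀ K}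
    (hc : c ∈ faceSpan K (unionComplex E (codimTwo W)) (q + 1)) (hbc : bdS K c = 0) :
    ∃ y ∈ faceSpan K (unionComplex E (Set.Iic W)) (q + 3),
      cone K e c + bdS K y ∈ supported K K (unionComplex E (Set.Iio W)) := by
  obtain ⟨a, ha, b, hb, rfl, hba⟩ := exists_add_eq_of_mem_faceSpan_codimTwo he hcard hc hbc
  obtain ⟨g, hg, d, hd, hbd, hagd⟩ :=
    exists_sub_bdS_sub_cone_mem_of_torVanishes_erase he' h ha hba
  have hXW : W \ E e ⊂ W := sdiff_ssubset he (nonempty_iff_ne_empty.mpr fun h0 ↦ hef (by simp [h0]))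
  have cone_le : ∀ {k : ι}, E k ⊆ W → ∀ S ∈ unionComplex E (Set.Iic W),
      insert k S ∈ unionComplex E (Set.Iic W) := fun hk ↦
    insert_mem_unionComplex fun X hX ↦ union_subset hk hX
  have hg_supp : g ∈ supported K K (unionComplex E (Set.Iio W)) :=
    supported_mono (unionComplex_mono fun X hX ↦ lt_of_le_of_lt hX hXW) (mem_faceSpan.mp hg).1
  have hd_le : d ∈ faceSpan K (unionComplex E (Set.Iic W)) q :=
    faceSpan_mono (unionComplex_mono fun Z hZ ↦ hZ.1.trans sdiff_subset) _ hd
  have hcb : cone K e b ∈ supported K K (unionComplex E (Set.Iio W)) :=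
    cone_mem_supported (fun S hS _ ↦ insert_mem_unionComplex
      (D := {Z | E e ∪ Z ⊂ W}) (fun _ hZ ↦ hZ) S hS) hb
  have hrest : cone K e (a - bdS K g - cone K e' d) ∈ supported K K (unionComplex E (Set.Iio W)) :=
    cone_mem_supported (fun S hS _ ↦ insert_mem_unionComplex
      (fun _ hZ ↦ union_ssubset_of_ssubset_sdiff he hZ) S hS) hagd
  refine ⟨cone K e g + cone K e (cone K f (cone K e' d)), Submodule.add_mem _
    (cone_mem_faceSpan (cone_le he) (faceSpan_mono (unionComplex_mono fun X hX ↦ hX.trans hXW.le)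
      _ hg))
    (cone_mem_faceSpan (cone_le he) (cone_mem_faceSpan (cone_le hf)
      (cone_mem_faceSpan (cone_le (he'.trans sdiff_subset)) hd_le))), ?_⟩
  have hoverlap := cone_cone_add_bdS_mem he hf hcard' hef he' (mem_faceSpan.mp hd).1 hbd
  convert add_mem (add_mem (add_mem hrest hcb) hg_supp) hoverlap using 1
  nth_rewrite 3 [← bdS_cone_add_cone_bdS e g]
  simp only [map_add, map_sub]
  abel

theorem torVanishes_of_card_sdiff_le_one (he : E e ⊆ W) (hf : E f ⊆ W) (hcard : #(E e) ≤ 2)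
    (hcard' : #(E f \ E e) ≤ 1) (hef : ¬ E e ⊆ E f) (he' : E e' ⊆ W \ E e)
    (hW : ∀ w ∈ W, TorVanishes K E (q + 1) (W.erase w))
    (hWe : ∀ w ∈ W \ E e, TorVanishes K E q ((W \ E e).erase w)) :
    TorVanishes K E (q + 2) W := by
  intro z hz hbz
  obtain ⟨g, hg, c, hc, hbc, hzgc⟩ :=
    exists_sub_bdS_sub_cone_mem_of_torVanishes_erase he hW hz hbz
  obtain ⟨y, hy, hcy⟩ := exists_cone_add_bdS_mem he hf hcard hcard' hef he' hWe hc hbc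
  refine ⟨g - y, Submodule.sub_mem _ hg hy, ?_⟩
  convert add_mem hzgc hcy using 1
  rw [map_sub]
  abel

end Overlap

section InducedMatching

variable {K : Type} [Field K] {ι σ : Type} {E : ι → Finset σ} {M : Finset ι}
  {W : Finset σ} {e f : ι} {t p : ℕ}

theorem exists_notMem_of_card_eq_two (hE : ∀ k, #(E k) = 2) (hef : E e ≠ E f) :
    ∃ u ∈ E e, u ∉ E f := by
  refine not_subset.mp fun h ↦ hef (eq_of_subset_of_card_le h ?_)
  rw [hE, hE]

variable [DecidableEq σ]

theorem card_sdiff_le_one_of_not_disjoint (hE : ∀ k, #(E k) = 2) (h : ¬ Disjoint (E e) (E f)) :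
    #(E f \ E e) ≤ 1 := by
  have hpos : 0 < #(E f ∩ E e) := by
    rwa [card_pos, nonempty_iff_ne_empty, ne_eq, ← disjoint_iff_inter_eq_empty, disjoint_comm]
  have := card_sdiff_add_card_inter (E f) (E e)
  have := hE f
  omega

theorem notMem_biUnion_erase [DecidableEq ι] (hM : (M : Set ι).PairwiseDisjoint E) {k : ι}
    (hk : k ∈ M) {u : σ} (hu : u ∈ E k) : u ∉ (M.erase k).biUnion E := by
  simp only [mem_biUnion, mem_erase, not_exists, not_and, and_imp]
  exact fun l hlk hl hul ↦ disjoint_left.mp (hM hl hk hlk) hul hu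

variable (E) in
/-- The hypergraph with edges `E k` has the edges in `M` as an induced matching: they are pairwise
disjoint, and no other edge lies in their union. -/
structure IsInducedMatching (M : Finset ι) : Prop where
  pairwiseDisjoint : (M : Set ι).PairwiseDisjoint E
  mem_of_subset : ∀ k, E k ⊆ M.biUnion E → k ∈ M

theorem IsInducedMatching.card_biUnion (hM : IsInducedMatching E M) (hE : ∀ k, #(E k) = 2) :
    #(M.biUnion E) = 2 * #M := by
  rw [Finset.card_biUnion hM.pairwiseDisjoint, sum_congr rfl fun k _ ↦ hE k, sum_const,
    smul_eq_mul, mul_comm]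

variable [DecidableEq ι]

theorem IsInducedMatching.biUnion_erase_insert_ssubset (hM : IsInducedMatching E M)
    (hE : ∀ k, #(E k) = 2) (he : ¬ E e ⊆ M.biUnion E) {k : ι} (hk : k ∈ insert e M) :
    ((insert e M).erase k).biUnion E ⊂ (insert e M).biUnion E := by
  have heM : e ∉ M := fun h ↦ he (subset_biUnion_of_mem E h)
  refine (biUnion_subset_biUnion_of_subset_left E (erase_subset k _)).ssubset_of_not_subset
    fun hsub ↦ ?_
  rcases mem_insert.mp hk with rfl | hkM
  · rw [erase_insert heM] at hsub
    exact he ((subset_biUnion_of_mem E (mem_insert_self k M)).trans hsub)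
  · obtain ⟨u, huk, hue⟩ := exists_notMem_of_card_eq_two hE (e := k) (f := e)
      fun h ↦ he (h ▸ subset_biUnion_of_mem E hkM)
    have hu := hsub (mem_biUnion.mpr ⟨k, hk, huk⟩)
    rw [erase_insert_of_ne (ne_of_mem_of_not_mem hkM heM).symm, biUnion_insert, mem_union] at hu
    exact hu.elim hue (notMem_biUnion_erase hM.pairwiseDisjoint hkM huk)

variable [LinearOrder ι]

/-- The matching itself is a relative cycle, and it is not a face of any larger set with the same
union. -/
theorem IsInducedMatching.not_torVanishes (hM : IsInducedMatching E M)
    (hE : ∀ k, (E k).Nonempty) : ¬ TorVanishes K E #M (M.biUnion E) := by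
  intro h
  obtain ⟨x, hx, hMx⟩ := h (single M 1)
    (mem_faceSpan.mpr ⟨single_mem_supported K _ Subset.rfl, single_mem_supported K _ rfl⟩)
    (bdS_single_mem_supported fun k hk ↦ by
      obtain ⟨u, hu⟩ := hE k
      exact (biUnion_subset_biUnion_of_subset_left E (erase_subset k M)).ssubset_of_not_subset
        fun hsub ↦ notMem_biUnion_erase hM.pairwiseDisjoint hk hu
          (hsub (mem_biUnion.mpr ⟨k, hk, hu⟩)))
  have hx_M : bdS K x M = 0 := bdS_apply_eq_zero (fun k hk hkM ↦ hk <|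
    hM.mem_of_subset k ((subset_biUnion_of_mem E (mem_insert_self k M)).trans hkM))
    (mem_faceSpan.mp hx).1
  have hM_notMem : M ∉ unionComplex E (Set.Iio (M.biUnion E)) := fun h ↦
    lt_irrefl (M.biUnion E) h
  simpa [hx_M] using (mem_supported' K _).mp hMx M hM_notMem

/-- Adding to `M` an edge that enlarges the union as little as possible gives a relative cycle
having `M` in its boundary; no set with smaller union has `M` as a face. -/
theorem IsInducedMatching.exists_not_torVanishes_succ (hM : IsInducedMatching E M)
    (hE : ∀ k, #(E k) = 2) (he : ¬ E e ⊆ M.biUnion E) : ∃ Y, ¬ TorVanishes K E (#M + 1) Y := by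
  obtain ⟨e, he, hmin⟩ := exists_minimalFor_of_wellFoundedLT
    (fun k ↦ ¬ E k ⊆ M.biUnion E) (fun k ↦ #(E k ∪ M.biUnion E)) ⟨e, he⟩
  have heM : e ∉ M := fun h ↦ he (subset_biUnion_of_mem E h)
  refine ⟨(insert e M).biUnion E, fun h ↦ ?_⟩
  obtain ⟨x, -, hzx⟩ := h (single (insert e M) 1)
    (mem_faceSpan.mpr ⟨single_mem_supported K _ Subset.rfl,
      single_mem_supported K _ (card_insert_of_notMem heM)⟩)
    (bdS_single_mem_supported fun k hk ↦ hM.biUnion_erase_insert_ssubset hE he hk)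
  have hbd : bdS K (single (insert e M) 1 - bdS K x) M = 0 := by
    refine bdS_apply_eq_zero (fun k hk hkM ↦ ?_) hzx
    have hlt : (insert k M).biUnion E ⊂ (insert e M).biUnion E := hkM
    rw [biUnion_insert, biUnion_insert] at hlt
    exact (card_lt_card hlt).not_ge
      (hmin (fun hle ↦ hk (hM.mem_of_subset k hle)) (card_lt_card hlt).le)
  rw [map_sub, bdS_bdS, sub_zero, bdS_single_insert_apply heM] at hbd
  exact sgn_ne_zero K e (insert e M) hbd

theorem exists_not_torVanishes_of_not_torVanishes_succ (hE : ∀ k, #(E k) = 2)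
    (h : ¬ TorVanishes K E (p + 1) W) : ∃ Y, ¬ TorVanishes K E p Y ∧ #W ≤ #Y + 2 := by
  obtain ⟨S, hS, rfl⟩ := exists_card_eq_and_biUnion_eq h
  obtain ⟨e, he⟩ := card_pos.mp (by omega : 0 < #S)
  obtain ⟨Y, -, hY, hvanish⟩ :=
    exists_ssubset_union_eq_of_not_torVanishes h (subset_biUnion_of_mem E he)
  refine ⟨Y, hvanish, ?_⟩
  rw [← hY, add_comm, ← hE e]
  exact card_union_le _ _

theorem exists_subset_sdiff_of_not_torVanishes
    (ht : ∀ Y, ¬ TorVanishes K E (p + 1) Y → #Y + 2 ≤ #W) (hE : #(E e) ≤ 2)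
    (h : ¬ TorVanishes K E (p + 2) W) (he : E e ⊆ W) : ∃ k, E k ⊆ W \ E e := by
  obtain ⟨Y, -, hunion, hY⟩ := exists_ssubset_union_eq_of_not_torVanishes h he
  obtain ⟨S, hS, rfl⟩ := exists_card_eq_and_biUnion_eq hY
  obtain ⟨k, hk⟩ := card_pos.mp (by omega : 0 < #S)
  have hYW : S.biUnion E = W \ E e :=
    eq_sdiff_of_mem_codimTwo he hE ⟨hunion ▸ subset_union_right, ht _ hY⟩ hunion
  exact ⟨k, hYW ▸ subset_biUnion_of_mem E hk⟩

theorem disjoint_of_not_torVanishes (hE : ∀ k, #(E k) = 2) (hinj : Function.Injective E)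
    (ht : ∀ Y, ¬ TorVanishes K E t Y → #Y ≤ t + 1) (h : ¬ TorVanishes K E (t + 2) W)
    (hcard : #W = t + 5) (he : E e ⊆ W) (hf : E f ⊆ W) (hef : e ≠ f) :
    Disjoint (E e) (E f) := by
  have ht' : ∀ Y, ¬ TorVanishes K E (t + 1) Y → #Y ≤ t + 3 := fun Y hY ↦ by
    obtain ⟨Z, hZ, hYZ⟩ := exists_not_torVanishes_of_not_torVanishes_succ hE hY
    have := ht Z hZ
    omega
  obtain ⟨e', he'⟩ := exists_subset_sdiff_of_not_torVanishes
    (fun Y hY ↦ by have := ht' Y hY; omega) (hE e).le h he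
  by_contra hdisj
  have hef' : ¬ E e ⊆ E f := fun hsub ↦
    hef (hinj (eq_of_subset_of_card_le hsub (by rw [hE, hE])))
  refine h (torVanishes_of_card_sdiff_le_one he hf (hE e).le
    (card_sdiff_le_one_of_not_disjoint hE hdisj) hef' he'
    (fun w hw ↦ not_not.mp fun hw' ↦ ?_) fun w hw ↦ not_not.mp fun hw' ↦ ?_)
  · have := ht' _ hw'
    rw [card_erase_of_mem hw] at this
    omega
  · have := ht _ hw'
    rw [card_erase_of_mem hw, card_sdiff_of_subset he, hE] at this
    omega

/-- The edges inside `W` form an induced matching by `disjoint_of_not_torVanishes`, and an edge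
outside `W` would contribute to `Tor_(t+3)`. -/
theorem isInducedMatching_of_not_torVanishes (hE : ∀ k, #(E k) = 2)
    (hinj : Function.Injective E) (ht : ∀ Y, ¬ TorVanishes K E t Y → #Y ≤ t + 1)
    (ht' : ∀ Y, TorVanishes K E (t + 3) Y) (h : ¬ TorVanishes K E (t + 2) W)
    (hcard : #W = t + 5) :
    ∃ M : Finset ι, IsInducedMatching E M ∧ (∀ k, k ∈ M) ∧ #M = 3 := by
  obtain ⟨M, hMcard, rfl⟩ := exists_card_eq_and_biUnion_eq h
  have hdisj : ∀ k l, E k ⊆ M.biUnion E → E l ⊆ M.biUnion E → k ≠ l → Disjoint (E k) (E l) :=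
    fun k l ↦ disjoint_of_not_torVanishes hE hinj ht h hcard
  have hM : IsInducedMatching E M := by
    refine ⟨fun k hk l hl ↦ hdisj k l (subset_biUnion_of_mem E hk) (subset_biUnion_of_mem E hl),
      fun k hk ↦ by_contra fun hkM ↦ ?_⟩
    have hself : Disjoint (E k) (M.biUnion E) := (disjoint_biUnion_right _ _ _).mpr fun l hl ↦
      hdisj k l hk (subset_biUnion_of_mem E hl) (ne_of_mem_of_not_mem hl hkM).symm
    have := hE k
    rw [disjoint_self_iff_empty _ |>.mp (hself.mono_right hk), card_empty] at this
    omega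
  have hcard' := hM.card_biUnion hE
  refine ⟨M, hM, fun k ↦ hM.mem_of_subset k <| not_not.mp fun hk ↦ ?_, by omega⟩
  obtain ⟨Y, hY⟩ := hM.exists_not_torVanishes_succ (K := K) hE hk
  exact hY (by rw [hMcard]; exact ht' Y)

end InducedMatching

section TaylorComplex

variable {K : Type} [Field K] {n r p j : ℕ} {E : Fin r → Finset (Fin n)} {W : Finset (Fin n)}

/-- The exponent vector of the squarefree monomial with support `X`. -/
def sqfreeExp (X : Finset (Fin n)) : Fin n → ℕ := fun x ↦ if x ∈ X then 1 else 0

theorem sqfreeExp_injective : Function.Injective (sqfreeExp (n := n)) := fun X Y h ↦ by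
  ext x
  have := congrFun h x
  unfold sqfreeExp at this
  split_ifs at this <;> simp_all

theorem sum_sqfreeExp (X : Finset (Fin n)) : ∑ x, sqfreeExp X x = #X := by
  simp [sqfreeExp]

theorem mlcm_sqfreeExp (S : Finset (Fin r)) :
    mlcm (fun k ↦ sqfreeExp (E k)) S = sqfreeExp (S.biUnion E) := by
  ext x
  refine le_antisymm (Finset.sup_le fun k hk ↦ ?_) ?_
  · by_cases hx : x ∈ E k
    · simp [sqfreeExp, hx, mem_biUnion.mpr ⟨k, hk, hx⟩]
    · simp [sqfreeExp, hx]
  · by_cases hx : x ∈ S.biUnion E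
    · obtain ⟨k, hk, hxk⟩ := mem_biUnion.mp hx
      calc sqfreeExp (S.biUnion E) x = sqfreeExp (E k) x := by simp only [sqfreeExp, hx, hxk]
        _ ≤ _ := le_sup (f := fun k ↦ sqfreeExp (E k) x) hk
    · simp [sqfreeExp, hx]

theorem strand_sqfreeExp :
    strand K (fun k ↦ sqfreeExp (E k)) p j =
      supported K K {S | #S = p ∧ #(S.biUnion E) = j} := by
  rw [strand, supported_eq_span_single]
  congr 1
  ext c
  simp only [Set.mem_ofPred_eq, Set.mem_image, mlcm_sqfreeExp, sum_sqfreeExp, and_assoc,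
    eq_comm (a := c)]

theorem bdT_sqfreeExp_single (S : Finset (Fin r)) :
    bdT K (fun k ↦ sqfreeExp (E k)) (single S 1) =
      ∑ k ∈ S, if (S.erase k).biUnion E = S.biUnion E
        then sgn K k S • single (S.erase k) 1 else 0 := by
  simp [bdT, sgn, mlcm_sqfreeExp, sqfreeExp_injective.eq_iff]

theorem torRank_eq_zero_iff_le {g : Fin r → Fin n → ℕ} :
    torRank K g p j = 0 ↔
      strand K g p j ⊓ (bdT K g).ker ≤ (strand K g (p + 1) j).map (bdT K g) := by
  rw [torRank, Nat.sub_eq_zero_iff_le]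
  refine ⟨fun h ↦ inf_eq_right.mp (Submodule.eq_of_le_of_finrank_le inf_le_right h), fun h ↦ ?_⟩
  rw [inf_eq_right.mpr h]

variable (K E W) in
/-- The component of a Taylor chain in squarefree multidegree `W`. -/
noncomputable def multidegPart : (Finset (Fin r) →₀ K) →ₗ[K] (Finset (Fin r) →₀ K) where
  toFun z := z.filter fun S ↦ S.biUnion E = W
  map_add' _ _ := filter_add
  map_smul' _ _ := filter_smul

theorem multidegPart_apply (z : Finset (Fin r) →₀ K) (S : Finset (Fin r)) :
    multidegPart K E W z S = if S.biUnion E = W then z S else 0 := by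
  simp [multidegPart, filter_apply]

theorem multidegPart_single (S : Finset (Fin r)) (a : K) :
    multidegPart K E W (single S a) = if S.biUnion E = W then single S a else 0 := by
  split_ifs with h
  · exact filter_single_of_pos _ h
  · exact filter_single_of_neg _ h

theorem multidegPart_multidegPart (z : Finset (Fin r) →₀ K) :
    multidegPart K E W (multidegPart K E W z) = multidegPart K E W z := by
  ext S
  simp only [multidegPart_apply]
  split_ifs <;> rfl

theorem sum_multidegPart (z : Finset (Fin r) →₀ K) : ∑ W, multidegPart K E W z = z := by
  ext S
  simp [finsetSum_apply, multidegPart_apply]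

theorem multidegPart_mem_supported {Δ Γ : Set (Finset (Fin r))} {z : Finset (Fin r) →₀ K}
    (h : ∀ S ∈ Δ, S.biUnion E = W → S ∈ Γ) (hz : z ∈ supported K K Δ) :
    multidegPart K E W z ∈ supported K K Γ := by
  refine map_mem_of_mem_supported (fun S hS ↦ ?_) hz
  rw [multidegPart_single]
  split_ifs with hSW
  · exact single_mem_supported K _ (h S hS hSW)
  · exact Submodule.zero_mem _

theorem mem_supported_Iio_iff_multidegPart_eq_zero {z : Finset (Fin r) →₀ K}
    (hz : z ∈ supported K K (unionComplex E (Set.Iic W))) :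
    z ∈ supported K K (unionComplex E (Set.Iio W)) ↔ multidegPart K E W z = 0 := by
  rw [mem_supported'] at hz ⊢
  simp only [DFunLike.ext_iff, multidegPart_apply, Finsupp.zero_apply, ite_eq_right_iff]
  refine ⟨fun h S hS ↦ h S fun hlt ↦ hS.not_lt hlt, fun h S hS ↦ ?_⟩
  by_cases hSW : S.biUnion E = W
  · exact h S hSW
  · exact hz S fun hle ↦ hS (lt_of_le_of_ne hle hSW)

theorem multidegPart_bdT (z : Finset (Fin r) →₀ K) :
    multidegPart K E W (bdT K (fun k ↦ sqfreeExp (E k)) z) =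
      bdT K (fun k ↦ sqfreeExp (E k)) (multidegPart K E W z) := by
  refine LinearMap.congr_fun (f := multidegPart K E W ∘ₗ bdT K _)
    (g := bdT K _ ∘ₗ multidegPart K E W) (lhom_ext' fun S ↦ LinearMap.ext_ring ?_) z
  simp only [LinearMap.comp_apply, lsingle_apply, bdT_sqfreeExp_single, multidegPart_single,
    map_sum, apply_ite (multidegPart K E W), apply_ite (bdT K _), map_smul, map_zero]
  split_ifs with hS
  · exact sum_congr rfl fun k _ ↦ by split_ifs with h <;> simp_all
  · exact sum_eq_zero fun k _ ↦ by split_ifs with h <;> simp_all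

/-- The boundary of a set with union `W` differs from its Taylor differential by sets with strictly
smaller union. -/
theorem multidegPart_bdS {z : Finset (Fin r) →₀ K}
    (hz : z ∈ supported K K (unionComplex E (Set.Iic W))) :
    multidegPart K E W (bdS K z) =
      bdT K (fun k ↦ sqfreeExp (E k)) (multidegPart K E W z) := by
  rw [← sub_eq_zero]
  refine map_mem_of_mem_supported (N := ⊥) (f := multidegPart K E W ∘ₗ bdS K -
    bdT K _ ∘ₗ multidegPart K E W) (fun S hS ↦ ?_) hz
  have hS : S.biUnion E ⊆ W := hS
  simp only [LinearMap.sub_apply, LinearMap.comp_apply, bdS_single, multidegPart_single, map_sum,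
    map_smul, apply_ite (bdT K _), map_zero, bdT_sqfreeExp_single, Submodule.mem_bot, sub_eq_zero]
  split_ifs with hSW
  · exact sum_congr rfl fun k _ ↦ by rw [hSW, smul_ite, smul_zero]
  · refine sum_eq_zero fun k _ ↦ ?_
    rw [if_neg, smul_zero]
    exact fun hk ↦ hSW (hS.antisymm
      (hk ▸ biUnion_subset_biUnion_of_subset_left E (erase_subset k S)))

theorem TorVanishes.multidegPart_mem_map_bdT (hp : TorVanishes K E p W) (hW : #W = j)
    {z : Finset (Fin r) →₀ K} (hz : z ∈ strand K (fun k ↦ sqfreeExp (E k)) p j)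
    (hbz : bdT K (fun k ↦ sqfreeExp (E k)) z = 0) :
    multidegPart K E W z ∈
      (strand K (fun k ↦ sqfreeExp (E k)) (p + 1) j).map (bdT K fun k ↦ sqfreeExp (E k)) := by
  rw [strand_sqfreeExp] at hz ⊢
  have hz_le : multidegPart K E W z ∈ faceSpan K (unionComplex E (Set.Iic W)) p := by
    rw [faceSpan_eq_supported]
    exact multidegPart_mem_supported (fun S hS hSW ↦ ⟨hSW.le, hS.1⟩) hz
  have bdS_supp : ∀ {q x}, x ∈ faceSpan K (unionComplex E (Set.Iic W)) q →
      bdS K x ∈ supported K K (unionComplex E (Set.Iic W)) := fun hx ↦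
    bdS_mem_supported_of_isLowerSet (isLowerSet_unionComplex (isLowerSet_Iic W))
      (mem_faceSpan.mp hx).1
  obtain ⟨x, hx, hzx⟩ := hp _ hz_le <| by
    rw [mem_supported_Iio_iff_multidegPart_eq_zero (bdS_supp hz_le),
      multidegPart_bdS (mem_faceSpan.mp hz_le).1, multidegPart_multidegPart, ← multidegPart_bdT,
      hbz, map_zero]
  refine ⟨multidegPart K E W x,
    multidegPart_mem_supported (fun S hS hSW ↦ ⟨hS, hSW ▸ hW⟩) (mem_faceSpan.mp hx).2, ?_⟩
  rw [mem_supported_Iio_iff_multidegPart_eq_zero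
    (Submodule.sub_mem _ (mem_faceSpan.mp hz_le).1 (bdS_supp hx)), map_sub,
    multidegPart_multidegPart, multidegPart_bdS (mem_faceSpan.mp hx).1, sub_eq_zero] at hzx
  exact hzx.symm

theorem torVanishes_of_strand_le (h : strand K (fun k ↦ sqfreeExp (E k)) p #W ⊓
      (bdT K fun k ↦ sqfreeExp (E k)).ker ≤
        (strand K (fun k ↦ sqfreeExp (E k)) (p + 1) #W).map (bdT K fun k ↦ sqfreeExp (E k))) :
    TorVanishes K E p W := by
  intro z hz hbz
  have hz_le := (mem_faceSpan.mp hz).1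
  have hbz_le := bdS_mem_supported_of_isLowerSet
    (isLowerSet_unionComplex (E := E) (isLowerSet_Iic W)) hz_le
  rw [mem_supported_Iio_iff_multidegPart_eq_zero hbz_le, multidegPart_bdS hz_le] at hbz
  simp only [strand_sqfreeExp] at h
  obtain ⟨x, hx, hxz⟩ := h ⟨multidegPart_mem_supported (fun S hS hSW ↦ ⟨hS, hSW ▸ rfl⟩)
    (mem_faceSpan.mp hz).2, hbz⟩
  have hx_le : multidegPart K E W x ∈ faceSpan K (unionComplex E (Set.Iic W)) (p + 1) := by
    rw [faceSpan_eq_supported]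
    exact multidegPart_mem_supported (fun S hS hSW ↦ ⟨hSW.le, hS.1⟩) hx
  refine ⟨_, hx_le, ?_⟩
  rw [mem_supported_Iio_iff_multidegPart_eq_zero (Submodule.sub_mem _ hz_le
    (bdS_mem_supported_of_isLowerSet (isLowerSet_unionComplex (isLowerSet_Iic W))
      (mem_faceSpan.mp hx_le).1)), map_sub, multidegPart_bdS (mem_faceSpan.mp hx_le).1,
    multidegPart_multidegPart, ← multidegPart_bdT, hxz, multidegPart_multidegPart, sub_self]

theorem torRank_sqfreeExp_eq_zero_iff :
    torRank K (fun k ↦ sqfreeExp (E k)) p j = 0 ↔ ∀ W, #W = j → TorVanishes K E p W := by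
  rw [torRank_eq_zero_iff_le]
  refine ⟨fun h W hW ↦ torVanishes_of_strand_le (hW ▸ h), fun h z hz ↦ ?_⟩
  obtain ⟨hz, hbz⟩ := hz
  rw [← sum_multidegPart (E := E) z]
  refine Submodule.sum_mem _ fun W _ ↦ ?_
  by_cases hW : #W = j
  · exact (h W hW).multidegPart_mem_map_bdT hW hz hbz
  · have : multidegPart K E W z ∈ supported K K ∅ := by
      rw [strand_sqfreeExp] at hz
      exact multidegPart_mem_supported (fun S hS hSW ↦ hW (hSW ▸ hS.2)) hz
    rw [supported_empty, Submodule.mem_bot] at this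
    rw [this]
    exact Submodule.zero_mem _

end TaylorComplex

section EdgeSets

variable {K : Type} [Field K] {n i j : ℕ} {G : SimpleGraph (Fin n)} {a b : Fin n}

theorem mem_edgeFins {e : Sym2 (Fin n)} : e ∈ edgeFins G ↔ e ∈ G.edgeSet := by
  simp [edgeFins]

variable (G) in
/-- The set of endpoints of the `k`-th edge of `G`, in the enumeration used by `edgeGens`. -/
noncomputable def edgeVerts (k : Fin #(edgeFins G)) : Finset (Fin n) :=
  ((edgeFins G).equivFin.symm k : Sym2 (Fin n)).toFinset

theorem edgeGens_eq_sqfreeExp : edgeGens G = fun k ↦ sqfreeExp (edgeVerts G k) := by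
  ext k x
  simp [edgeGens, sqfreeExp, edgeVerts]

theorem card_edgeVerts (k : Fin #(edgeFins G)) : #(edgeVerts G k) = 2 :=
  Sym2.card_toFinset_of_not_isDiag _ (G.not_isDiag_of_mem_edgeSet
    (mem_edgeFins.mp ((edgeFins G).equivFin.symm k).2))

theorem edgeVerts_injective : Function.Injective (edgeVerts G) := fun k l h ↦ by
  refine (edgeFins G).equivFin.symm.injective (Subtype.ext (Sym2.ext fun x ↦ ?_))
  rw [← Sym2.mem_toFinset, ← Sym2.mem_toFinset]
  exact Finset.ext_iff.mp h x

theorem adj_iff_exists_edgeVerts_eq : G.Adj a b ↔ ∃ k, edgeVerts G k = {a, b} := by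
  have toFinset_eq : ∀ e : Sym2 (Fin n), e.toFinset = {a, b} ↔ e = s(a, b) := fun e ↦ by
    rw [← Sym2.toFinset_mk_eq, Finset.ext_iff, Sym2.ext_iff]
    simp only [Sym2.mem_toFinset]
  simp only [edgeVerts, toFinset_eq, ← G.mem_edgeSet, ← mem_edgeFins]
  exact ⟨fun h ↦ ⟨(edgeFins G).equivFin ⟨_, h⟩, by simp⟩, fun ⟨k, hk⟩ ↦ hk ▸ Subtype.coe_prop _⟩

theorem exists_edgeVerts_eq_of_mem {k : Fin #(edgeFins G)} (h : a ∈ edgeVerts G k) :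
    ∃ b, edgeVerts G k = {a, b} := by
  obtain ⟨b, hb⟩ := Sym2.mem_toFinset.mp h
  exact ⟨b, by rw [edgeVerts, hb, Sym2.toFinset_mk_eq]⟩

theorem biUnion_edgeVerts_univ (hiso : ∀ v, ∃ w, G.Adj v w) :
    univ.biUnion (edgeVerts G) = univ := by
  refine eq_univ_of_forall fun v ↦ ?_
  obtain ⟨w, hw⟩ := hiso v
  obtain ⟨k, hk⟩ := adj_iff_exists_edgeVerts_eq.mp hw
  exact mem_biUnion.mpr ⟨k, mem_univ k, hk ▸ mem_insert_self v {w}⟩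

theorem isInducedMatching_univ_iff (hiso : ∀ v, ∃ w, G.Adj v w) :
    IsInducedMatching (edgeVerts G) univ ↔ ∀ v, ∃! w, G.Adj v w := by
  refine ⟨fun hM v ↦ ?_, fun h ↦ ⟨fun k _ l _ hkl ↦ disjoint_left.mpr fun a hak hal ↦ hkl ?_,
    fun k _ ↦ mem_univ k⟩⟩
  · obtain ⟨w, hw⟩ := hiso v
    refine ⟨w, hw, fun w' hw' ↦ ?_⟩
    obtain ⟨k, hk⟩ := adj_iff_exists_edgeVerts_eq.mp hw
    obtain ⟨l, hl⟩ := adj_iff_exists_edgeVerts_eq.mp hw'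
    have hkl : k = l := by_contra fun hne ↦
      disjoint_left.mp (hM.pairwiseDisjoint (mem_coe.mpr (mem_univ k)) (mem_coe.mpr (mem_univ l))
        hne) (hk ▸ mem_insert_self v {w}) (hl ▸ mem_insert_self v {w'})
    have hw'_mem : w' ∈ ({v, w} : Finset (Fin n)) := by
      rw [← hk, hkl, hl]
      exact mem_insert_of_mem (mem_singleton_self w')
    simpa [hw'.ne'] using hw'_mem
  · obtain ⟨b, hb⟩ := exists_edgeVerts_eq_of_mem hak
    obtain ⟨c, hc⟩ := exists_edgeVerts_eq_of_mem hal
    have hbc : b = c := (h a).unique (adj_iff_exists_edgeVerts_eq.mpr ⟨k, hb⟩)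
      (adj_iff_exists_edgeVerts_eq.mpr ⟨l, hc⟩)
    exact edgeVerts_injective (by rw [hb, hc, hbc])

theorem gBetti_ne_zero_iff :
    gBetti K G i j ≠ 0 ↔ ∃ W, #W = j ∧ ¬ TorVanishes K (edgeVerts G) (i + 1) W := by
  rw [gBetti, betti, edgeGens_eq_sqfreeExp, ne_eq, torRank_sqfreeExp_eq_zero_iff]
  push Not
  rfl

end EdgeSets

section PerfectMatchings

variable {V : Type*} {G H : SimpleGraph V}

theorem isConj_of_involutive_of_forall_ne [Finite V] {σ τ : Equiv.Perm V}
    (hσ : Function.Involutive σ) (hτ : Function.Involutive τ) (hσ' : ∀ v, σ v ≠ v)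
    (hτ' : ∀ v, τ v ≠ v) : IsConj σ τ := by
  classical
  have := Fintype.ofFinite V
  have cycleType_eq : ∀ ρ : Equiv.Perm V, Function.Involutive ρ → (∀ v, ρ v ≠ v) →
      ρ.cycleType = Multiset.replicate (Fintype.card V / 2) 2 := fun ρ hρ hρ' ↦ by
    have htype := Equiv.Perm.cycleType_of_pow_prime_eq_one (σ := ρ) (p := 2)
      (Equiv.ext fun v ↦ by simpa [sq] using hρ v)
    have hsum := ρ.sum_cycleType
    rw [htype, Multiset.sum_replicate, smul_eq_mul,
      eq_univ_of_forall fun v ↦ Equiv.Perm.mem_support.mpr (hρ' v), card_univ] at hsum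
    rw [htype, ← hsum, Nat.mul_div_cancel _ two_pos]
  rw [Equiv.Perm.isConj_iff_cycleType_eq, cycleType_eq σ hσ hσ', cycleType_eq τ hτ hτ']

theorem nonempty_iso_of_existsUnique_adj [Finite V] (hG : ∀ v, ∃! w, G.Adj v w)
    (hH : ∀ v, ∃! w, H.Adj v w) : Nonempty (G ≃g H) := by
  obtain ⟨f, hf, hfG⟩ := G.symm.forall_existsUnique_iff.mp hG
  obtain ⟨g, hg, hgH⟩ := H.symm.forall_existsUnique_iff.mp hH
  obtain ⟨c, hc⟩ := isConj_iff.mp <| isConj_of_involutive_of_forall_ne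
    (hf.toPerm_involutive) (hg.toPerm_involutive) (fun _ ↦ (hfG.mpr rfl).ne')
    fun _ ↦ (hgH.mpr rfl).ne'
  have hcomm : ∀ v, g (c v) = c (f v) := fun v ↦ by simpa using (Equiv.congr_fun hc (c v)).symm
  exact ⟨⟨c, fun {v w} ↦ by rw [hgH, hfG, hcomm, c.injective.eq_iff]⟩⟩

end PerfectMatchings

section Dipyramid

variable {n : ℕ} {G : SimpleGraph (Fin n)}

theorem existsUnique_compl_Gd1_adj : ∀ v, ∃! w, Gd1ᶜ.Adj v w := by
  simp only [Gd1, SimpleGraph.compl_adj, SimpleGraph.fromRel_adj, ExistsUnique]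
  decide

/-- The dipyramid is the complement of three disjoint edges. -/
theorem nonempty_compl_iso_Gd1_iff :
    Nonempty (Gᶜ ≃g Gd1) ↔ n = 6 ∧ ∀ v, ∃! w, G.Adj v w := by
  constructor
  · rintro ⟨φ⟩
    have hφ : ∀ v w, G.Adj v w ↔ Gd1ᶜ.Adj (φ v) (φ w) := fun v w ↦ by
      conv_lhs => rw [← compl_compl G]
      exact (SimpleGraph.Embedding.complEquiv φ.toEmbedding).map_adj_iff.symm
    refine ⟨by simpa using φ.card_eq, fun v ↦ ?_⟩
    simp only [hφ v]
    exact (φ.bijective.existsUnique_iff (p := Gd1ᶜ.Adj (φ v))).mp (existsUnique_compl_Gd1_adj (φ v))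
  · rintro ⟨rfl, hG⟩
    obtain ⟨φ⟩ := nonempty_iso_of_existsUnique_adj hG existsUnique_compl_Gd1_adj
    rw [← compl_compl Gd1]
    exact ⟨φ.toEquiv, (SimpleGraph.Embedding.complEquiv φ.toEmbedding).map_adj_iff⟩

theorem nonempty_compl_iso_Gd1_iff_isInducedMatching (hiso : ∀ v, ∃ w, G.Adj v w) :
    Nonempty (Gᶜ ≃g Gd1) ↔
      IsInducedMatching (edgeVerts G) univ ∧ #(edgeFins G) = 3 := by
  rw [nonempty_compl_iso_Gd1_iff, ← isInducedMatching_univ_iff hiso, and_comm]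
  refine and_congr_right fun hM ↦ ?_
  have hcard := hM.card_biUnion card_edgeVerts
  rw [biUnion_edgeVerts_univ hiso, card_fin, card_fin] at hcard
  omega

end Dipyramid

section BettiNumbers

variable {K : Type} [Field K] {n i j d t : ℕ} {G : SimpleGraph (Fin n)}

theorem exists_edges_of_gBetti_ne_zero (h : gBetti K G i j ≠ 0) :
    ∃ S : Finset (Fin #(edgeFins G)), #S = i + 1 ∧ #(S.biUnion (edgeVerts G)) = j := by
  obtain ⟨W, hW, hvanish⟩ := gBetti_ne_zero_iff.mp h
  obtain ⟨S, hS, rfl⟩ := exists_card_eq_and_biUnion_eq hvanish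
  exact ⟨S, hS, hW⟩

theorem lt_card_edgeFins_of_gBetti_ne_zero (h : gBetti K G i j ≠ 0) : i < #(edgeFins G) := by
  obtain ⟨S, hS, -⟩ := exists_edges_of_gBetti_ne_zero h
  simpa [hS, Nat.succ_le_iff] using card_le_univ S

theorem le_of_gBetti_ne_zero (h : gBetti K G i j ≠ 0) : j ≤ 2 * (i + 1) := by
  obtain ⟨S, hS, rfl⟩ := exists_edges_of_gBetti_ne_zero h
  rw [← hS, mul_comm]
  exact card_biUnion_le_card_mul S _ 2 fun k _ ↦ card_edgeVerts k |>.le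

theorem exists_gBetti_ne_zero_of_gBetti_succ_ne_zero (h : gBetti K G (i + 1) j ≠ 0) :
    ∃ j', gBetti K G i j' ≠ 0 ∧ j ≤ j' + 2 := by
  obtain ⟨W, rfl, hW⟩ := gBetti_ne_zero_iff.mp h
  obtain ⟨Y, hY, hWY⟩ := exists_not_torVanishes_of_not_torVanishes_succ card_edgeVerts hW
  exact ⟨#Y, gBetti_ne_zero_iff.mpr ⟨Y, rfl, hY⟩, hWY⟩

theorem le_gPd (h : gBetti K G i j ≠ 0) : i ≤ gPd K G :=
  le_csSup ⟨#(edgeFins G), fun _ ⟨_, h⟩ ↦ (lt_card_edgeFins_of_gBetti_ne_zero h).le⟩ ⟨j, h⟩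

theorem le_gReg (h : gBetti K G i (i + d) ≠ 0) : d ≤ gReg K G := by
  refine le_csSup ⟨#(edgeFins G) + 1, ?_⟩ ⟨i, _, h, rfl⟩
  rintro d ⟨i, j, h, rfl⟩
  have := lt_card_edgeFins_of_gBetti_ne_zero h
  have := le_of_gBetti_ne_zero h
  omega

theorem gReg_le (h : ∀ i j, gBetti K G i j ≠ 0 → j ≤ i + d) : gReg K G ≤ d := by
  refine csSup_le' ?_
  rintro d' ⟨i, j, hb, rfl⟩
  exact Nat.add_le_add_iff_left.mp (h i _ hb)

theorem exists_gBetti_ne_zero_of_gIndex_eq (ht : gIndex K G = t) :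
    ∃ j, t + 2 < j ∧ gBetti K G t j ≠ 0 := by
  have hne : {N : ℕ∞ | ∃ i j : ℕ, N = i ∧ i + 2 < j ∧ gBetti K G i j ≠ 0}.Nonempty := by
    by_contra hempty
    rw [gIndex, Set.not_nonempty_iff_eq_empty.mp hempty, sInf_empty] at ht
    exact ENat.top_ne_natCast t ht
  obtain ⟨i, j, hi, hb⟩ := csInf_mem hne
  obtain rfl : t = i := by exact_mod_cast ht.symm.trans hi
  exact ⟨j, hb⟩

theorem le_add_two_of_lt_gIndex (hi : i < gIndex K G) (h : gBetti K G i j ≠ 0) : j ≤ i + 2 := by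
  by_contra! hj
  exact hi.not_ge (sInf_le ⟨i, j, rfl, hj, h⟩)

theorem gIndex_pos : 0 < gIndex K G := by
  refine pos_of_ne_zero fun h0 ↦ ?_
  obtain ⟨j, hj, h⟩ := exists_gBetti_ne_zero_of_gIndex_eq (t := 0) h0
  have := le_of_gBetti_ne_zero h
  omega

theorem card_le_of_not_torVanishes (ht : gIndex K G = t) {Y : Finset (Fin n)}
    (hY : ¬ TorVanishes K (edgeVerts G) t Y) : #Y ≤ t + 1 := by
  cases t with
  | zero => simpa [ht] using gIndex_pos (K := K) (G := G)
  | succ s =>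
    have hs : s < gIndex K G := by rw [ht]; exact_mod_cast s.lt_succ_self
    exact le_add_two_of_lt_gIndex hs (gBetti_ne_zero_iff.mpr ⟨Y, rfl, hY⟩)

theorem le_add_three_of_gIndex_eq (ht : gIndex K G = t) (h : gBetti K G t j ≠ 0) :
    j ≤ t + 3 := by
  obtain ⟨W, rfl, hW⟩ := gBetti_ne_zero_iff.mp h
  obtain ⟨Y, hY, hWY⟩ := exists_not_torVanishes_of_not_torVanishes_succ card_edgeVerts hW
  have := card_le_of_not_torVanishes ht hY
  omega

theorem le_add_five_of_gIndex_eq (ht : gIndex K G = t) (h : gBetti K G (t + 1) j ≠ 0) :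
    j ≤ t + 5 := by
  obtain ⟨j', hj', hj⟩ := exists_gBetti_ne_zero_of_gBetti_succ_ne_zero h
  have := le_add_three_of_gIndex_eq ht hj'
  omega

theorem le_add_three_or_of_gBetti_ne_zero (ht : gIndex K G = t) (hpd : gPd K G = t + 1)
    (h : gBetti K G i j ≠ 0) : j ≤ i + 3 ∨ i = t + 1 ∧ j = t + 5 := by
  have hi := le_gPd h
  rcases lt_trichotomy i t with hlt | rfl | hgt
  · have := le_add_two_of_lt_gIndex (by rw [ht]; exact_mod_cast hlt) h
    omega
  · exact .inl (le_add_three_of_gIndex_eq ht h)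
  · obtain rfl : i = t + 1 := by omega
    have := le_add_five_of_gIndex_eq ht h
    omega

theorem three_le_gReg (ht : gIndex K G = t) : 3 ≤ gReg K G := by
  obtain ⟨j, hj, h⟩ := exists_gBetti_ne_zero_of_gIndex_eq ht
  obtain rfl : j = t + 3 := by have := le_add_three_of_gIndex_eq ht h; omega
  exact le_gReg h

theorem isInducedMatching_of_gBetti_ne_zero (ht : gIndex K G = t) (hpd : gPd K G = t + 1)
    (h : gBetti K G (t + 1) (t + 5) ≠ 0) :
    IsInducedMatching (edgeVerts G) univ ∧ #(edgeFins G) = 3 := by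
  obtain ⟨W, hcard, hW⟩ := gBetti_ne_zero_iff.mp h
  have beyond_pd : ∀ Y, TorVanishes K (edgeVerts G) (t + 3) Y := fun Y ↦ not_not.mp fun hY ↦ by
    have := le_gPd (gBetti_ne_zero_iff.mpr ⟨Y, rfl, hY⟩)
    omega
  obtain ⟨M, hM, hmem, hM_card⟩ := isInducedMatching_of_not_torVanishes card_edgeVerts
    edgeVerts_injective (fun _ ↦ card_le_of_not_torVanishes ht) beyond_pd hW hcard
  obtain rfl := eq_univ_of_forall hmem
  exact ⟨hM, by simpa using hM_card⟩

theorem IsInducedMatching.gBetti_ne_zero {M : Finset (Fin #(edgeFins G))}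
    (hM : IsInducedMatching (edgeVerts G) M) (hM_card : #M = i + 1) :
    gBetti K G i (i + (i + 2)) ≠ 0 :=
  gBetti_ne_zero_iff.mpr ⟨M.biUnion (edgeVerts G), by
    rw [hM.card_biUnion card_edgeVerts, hM_card]
    ring, by
    rw [← hM_card]
    exact hM.not_torVanishes fun k ↦ card_pos.mp (by rw [card_edgeVerts]; exact two_pos)⟩

end BettiNumbers

end EP

/-- If `G` has no isolated vertex and `I(G)` has almost maximal finite
index `t`, then `β_{t,t+4}(I(G)) = β_{t,t+5}(I(G)) = 0`, and `reg(I(G)) = 3` unless the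
complement of `G` is (isomorphic to) the `4`-gonal dipyramid `G_{(d)_1}`, in which case
`reg(I(G)) = 4`. -/
theorem statement14 (K : Type) [Field K] (n t : ℕ) (G : SimpleGraph (Fin n))
    (hiso : ∀ v : Fin n, ∃ w, G.Adj v w)
    (hidx : EP.gIndex K G = (t : ℕ∞)) (hpd : EP.gPd K G = t + 1) :
    EP.gBetti K G t (t + 4) = 0 ∧ EP.gBetti K G t (t + 5) = 0 ∧
    (Nonempty (Gᶜ ≃g Gd1) → EP.gReg K G = 4) ∧
    (¬ Nonempty (Gᶜ ≃g Gd1) → EP.gReg K G = 3) := by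
  have bound : ∀ i j, EP.gBetti K G i j ≠ 0 → j ≤ i + 3 ∨ i = t + 1 ∧ j = t + 5 :=
    fun i j ↦ EP.le_add_three_or_of_gBetti_ne_zero hidx hpd
  have gReg_le_four : EP.gReg K G ≤ 4 := EP.gReg_le fun i j h ↦ by
    have := bound i j h
    omega
  rw [EP.nonempty_compl_iso_Gd1_iff_isInducedMatching hiso]
  refine ⟨not_not.mp fun h ↦ ?_, not_not.mp fun h ↦ ?_, fun ⟨hM, hcard⟩ ↦ ?_, fun hM ↦ ?_⟩
  · have := bound _ _ h
    omega
  · have := bound _ _ h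
    omega
  · exact gReg_le_four.antisymm (EP.le_gReg (hM.gBetti_ne_zero (i := 2) (by simpa using hcard)))
  · have top_eq_zero : EP.gBetti K G (t + 1) (t + 5) = 0 := not_not.mp fun h ↦
      hM (EP.isInducedMatching_of_gBetti_ne_zero hidx hpd h)
    refine (EP.gReg_le fun i j h ↦ (bound i j h).resolve_right ?_).antisymm (EP.three_le_gReg hidx)
    rintro ⟨rfl, rfl⟩
    exact h top_eq_zero
end

section
/- Let G be a simple graph on n ≥ 7 vertices whose complement Ḡ = G_{(b)} consists of a cycle C = 1-2-...-(t+3)-1 (t = n − 5 ≥ 2), a vertex t+4 adjacent in Ḡ to all vertices of C, and a vertex t+5 adjacent in Ḡ only to t+4. Then I(G)^s has a linear resolution for all s ≥ 2. -/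
open Finsupp

/-- The graph `G_{(b)}`: a cycle `0 - 1 - ⋯ - (t+2) - 0`, a vertex `t+3` adjacent to all
vertices of the cycle, and a vertex `t+4` adjacent only to `t+3`. -/
def Gb (t : ℕ) : SimpleGraph (Fin (t + 5)) :=
  SimpleGraph.fromRel (fun i j =>
    ((j : ℕ) = (i : ℕ) + 1 ∧ (j : ℕ) ≤ t + 2) ∨ ((i : ℕ) = 0 ∧ (j : ℕ) = t + 2) ∨
    ((j : ℕ) = t + 3 ∧ (i : ℕ) ≤ t + 2) ∨ ((i : ℕ) = t + 3 ∧ (j : ℕ) = t + 4))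

/-!
A monomial ideal generated in one degree that has linear quotients has a linear resolution. Adding
the generators one at a time, the strand of the Taylor complex on the sets of generators whose lcm
has degree `j` splits into the deletion and the link of the new generator. The link computes the
colon ideal, and as this is generated by variables, the strand can be shrunk to a family of sets of
a single cardinality, which is exact everywhere else.

Up to the isolated vertex `t + 3`, the maximal independent sets of `G` are the edges of the cycle in
its complement and the single vertex `t + 4`. A monomial of degree `2 * s` in the other vertices is
a product of `s` edges exactly when none of these sets carries more than half of its degree: split
off the edges at `t + 4`, list the remaining factors along the cycle and pair opposite ones. The
generators have linear quotients when ordered lexicographically, the vertex `t + 4` first, with one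
correction among those not divisible by `x_0`; the colon condition then amounts to exchanging a
single variable without violating one of these bounds.
-/

namespace EP

/-! ## Chains on families of finite sets -/

section Chains

variable {R : Type*} [CommRing R] {ι : Type*} [LinearOrder ι]

/-- The Koszul sign picked up when `k` is moved past the smaller elements of `S`. It depends only
on `S \ {k}`, so it serves both for adjoining `k` to `S` and for deleting it. -/
def koszulSign (R : Type*) [CommRing R] (S : Finset ι) (k : ι) : R :=
  (-1) ^ (S.filter (· < k)).card

theorem koszulSign_mul_self (S : Finset ι) (k : ι) : koszulSign R S k * koszulSign R S k = 1 := by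
  rw [koszulSign, ← mul_pow, neg_one_mul, neg_neg, one_pow]

theorem koszulSign_insert_self (S : Finset ι) (k : ι) :
    koszulSign R (insert k S) k = koszulSign R S k := by
  simp [koszulSign, Finset.filter_insert]

theorem koszulSign_insert_of_lt {S : Finset ι} {k l : ι} (hl : l ∉ S) (hlk : l < k) :
    koszulSign R (insert l S) k = -koszulSign R S k := by
  rw [koszulSign, Finset.filter_insert, if_pos hlk,
    Finset.card_insert_of_notMem (by simp [hl]), pow_succ, mul_neg_one, koszulSign]

theorem koszulSign_insert_of_gt {S : Finset ι} {k l : ι} (hkl : k < l) :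
    koszulSign R (insert l S) k = koszulSign R S k := by
  rw [koszulSign, Finset.filter_insert, if_neg hkl.not_gt, koszulSign]

theorem koszulSign_mul_insert {S : Finset ι} {k l : ι} (hk : k ∉ S) (hl : l ∉ S) (hkl : k ≠ l) :
    koszulSign R S k * koszulSign R (insert k S) l =
      -(koszulSign R S l * koszulSign R (insert l S) k) := by
  rcases lt_or_gt_of_ne hkl with h | h
  · rw [koszulSign_insert_of_lt hk h, koszulSign_insert_of_gt h]; ring
  · rw [koszulSign_insert_of_lt hl h, koszulSign_insert_of_gt h]; ring

theorem koszulSign_insert_mul_insert {S : Finset ι} {k l : ι} (hk : k ∉ S) (hl : l ∉ S)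
    (hkl : k ≠ l) :
    koszulSign R (insert l S) k * koszulSign R (insert k S) l =
      -(koszulSign R S l * koszulSign R S k) := by
  rcases lt_or_gt_of_ne hkl with h | h
  · rw [koszulSign_insert_of_lt hk h, koszulSign_insert_of_gt h]; ring
  · rw [koszulSign_insert_of_lt hl h, koszulSign_insert_of_gt h]; ring

/-- Contraction of a chain by the `k`-th basis vector, the chain `c` standing for the exterior
form `∑ S, c S • e_S`. -/
def contract (k : ι) : Module.End R (Finset ι → R) where
  toFun c S := if k ∈ S then 0 else koszulSign R S k * c (insert k S)
  map_add' c d := by ext S; simp only [Pi.add_apply]; split_ifs <;> ring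
  map_smul' a c := by
    ext S; simp only [Pi.smul_apply, smul_eq_mul, RingHom.id_apply]; split_ifs <;> ring

/-- Exterior multiplication of a chain by the `k`-th basis vector. -/
def wedge (k : ι) : Module.End R (Finset ι → R) where
  toFun c S := if k ∈ S then koszulSign R S k * c (S.erase k) else 0
  map_add' c d := by ext S; simp only [Pi.add_apply]; split_ifs <;> ring
  map_smul' a c := by
    ext S; simp only [Pi.smul_apply, smul_eq_mul, RingHom.id_apply]; split_ifs <;> ring

theorem contract_of_mem {k : ι} {S : Finset ι} (hk : k ∈ S) (c : Finset ι → R) :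
    contract k c S = 0 := if_pos hk

theorem contract_of_notMem {k : ι} {S : Finset ι} (hk : k ∉ S) (c : Finset ι → R) :
    contract k c S = koszulSign R S k * c (insert k S) := if_neg hk

theorem wedge_of_notMem {k : ι} {S : Finset ι} (hk : k ∉ S) (c : Finset ι → R) :
    wedge k c S = 0 := if_neg hk

theorem wedge_of_mem {k : ι} {S : Finset ι} (hk : k ∈ S) (c : Finset ι → R) :
    wedge k c S = koszulSign R S k * c (S.erase k) := if_pos hk

theorem wedge_insert {k : ι} {S : Finset ι} (hk : k ∉ S) (c : Finset ι → R) :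
    wedge k c (insert k S) = koszulSign R S k * c S := by
  rw [wedge_of_mem (Finset.mem_insert_self k S), koszulSign_insert_self, Finset.erase_insert hk]

theorem contract_mul_self (k : ι) :
    contract k * contract k = (0 : Module.End R (Finset ι → R)) := by
  refine LinearMap.ext fun c => funext fun S => ?_
  by_cases hk : k ∈ S
  · exact contract_of_mem hk _
  · simp [contract_of_notMem hk, contract_of_mem (Finset.mem_insert_self k S)]

theorem contract_mul_contract_add {k l : ι} (hkl : k ≠ l) :
    contract k * contract l + contract l * contract k =
      (0 : Module.End R (Finset ι → R)) := by
  refine LinearMap.ext fun c => funext fun S => ?_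
  simp only [LinearMap.add_apply, Module.End.mul_apply, Pi.add_apply, LinearMap.zero_apply,
    Pi.zero_apply]
  by_cases hk : k ∈ S
  · by_cases hl : l ∈ S
    · rw [contract_of_mem hk, contract_of_mem hl, add_zero]
    · rw [contract_of_mem hk, contract_of_notMem hl,
        contract_of_mem (Finset.mem_insert_of_mem hk), mul_zero, add_zero]
  · by_cases hl : l ∈ S
    · rw [contract_of_mem hl, contract_of_notMem hk,
        contract_of_mem (Finset.mem_insert_of_mem hl), mul_zero, add_zero]
    · rw [contract_of_notMem hk, contract_of_notMem hl,
        contract_of_notMem (by simp [hl, hkl.symm]), contract_of_notMem (by simp [hk, hkl]),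
        Finset.insert_comm l k]
      linear_combination c (insert k (insert l S)) * koszulSign_mul_insert (R := R) hk hl hkl

theorem contract_mul_wedge_add_self (k : ι) :
    contract k * wedge k + wedge k * contract k = (1 : Module.End R (Finset ι → R)) := by
  refine LinearMap.ext fun c => funext fun S => ?_
  simp only [LinearMap.add_apply, Module.End.mul_apply, Pi.add_apply, Module.End.one_apply]
  by_cases hk : k ∈ S
  · obtain ⟨T, hT, rfl⟩ : ∃ T, k ∉ T ∧ insert k T = S :=
      ⟨S.erase k, Finset.notMem_erase k S, Finset.insert_erase hk⟩
    rw [contract_of_mem hk, wedge_insert hT, contract_of_notMem hT, ← mul_assoc,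
      koszulSign_mul_self, one_mul, zero_add]
  · rw [wedge_of_notMem hk, contract_of_notMem hk, wedge_insert hk, ← mul_assoc,
      koszulSign_mul_self, one_mul, add_zero]

theorem contract_mul_wedge_add {k l : ι} (hkl : k ≠ l) :
    contract k * wedge l + wedge l * contract k = (0 : Module.End R (Finset ι → R)) := by
  refine LinearMap.ext fun c => funext fun S => ?_
  simp only [LinearMap.add_apply, Module.End.mul_apply, Pi.add_apply, LinearMap.zero_apply,
    Pi.zero_apply]
  by_cases hl : l ∈ S
  · obtain ⟨T, hT, rfl⟩ : ∃ T, l ∉ T ∧ insert l T = S :=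
      ⟨S.erase l, Finset.notMem_erase l S, Finset.insert_erase hl⟩
    rw [wedge_insert hT]
    by_cases hk : k ∈ T
    · rw [contract_of_mem (Finset.mem_insert_of_mem hk), contract_of_mem hk, mul_zero, add_zero]
    · rw [contract_of_notMem (by simp [hk, hkl]), contract_of_notMem hk, Finset.insert_comm,
        wedge_insert (by simp [hT, hkl.symm])]
      linear_combination c (insert k T) * koszulSign_insert_mul_insert (R := R) hk hT hkl
  · rw [wedge_of_notMem hl]
    by_cases hk : k ∈ S
    · rw [contract_of_mem hk, add_zero]
    · rw [contract_of_notMem hk, wedge_of_notMem (by simp [hl, hkl.symm]), mul_zero, add_zero]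

/-- The chains supported on the `p`-element members of `F`. -/
def chains (R : Type*) [CommRing R] (F : Set (Finset ι)) (p : ℕ) : Submodule R (Finset ι → R) where
  carrier := {c | ∀ S, c S ≠ 0 → S ∈ F ∧ S.card = p}
  add_mem' {c d} hc hd S hS := by
    by_cases h : c S = 0
    · exact hd S fun h' => hS (by simp [h, h'])
    · exact hc S h
  zero_mem' S hS := absurd rfl hS
  smul_mem' a c hc S hS := hc S (right_ne_zero_of_mul hS)

theorem wedge_mem_chains {F G : Set (Finset ι)} {p : ℕ} {k : ι} {c : Finset ι → R}
    (hc : c ∈ chains R G p) (h : ∀ S, k ∉ S → S ∈ G → insert k S ∈ F) :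
    wedge k c ∈ chains R F (p + 1) := by
  intro S hS
  have hk : k ∈ S := by_contra fun hk => hS (wedge_of_notMem hk c)
  rw [wedge_of_mem hk] at hS
  obtain ⟨hG, hcard⟩ := hc _ (right_ne_zero_of_mul hS)
  rw [← Finset.insert_erase hk, Finset.card_insert_of_notMem (Finset.notMem_erase k S), hcard]
  exact ⟨h _ (Finset.notMem_erase k S) hG, rfl⟩

variable [Fintype ι]

/-- The simplicial boundary, written as the contraction by the sum of all basis vectors. -/
def boundary : Module.End R (Finset ι → R) := ∑ k, contract k

theorem boundary_apply (c : Finset ι → R) (S : Finset ι) : boundary c S = ∑ k, contract k c S := by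
  simp [boundary]

theorem boundary_mul_contract (k : ι) :
    boundary * contract k = -(contract k * boundary : Module.End R (Finset ι → R)) := by
  rw [eq_neg_iff_add_eq_zero, boundary, Finset.sum_mul, Finset.mul_sum, ← Finset.sum_add_distrib]
  refine Finset.sum_eq_zero fun l _ => ?_
  rcases eq_or_ne l k with rfl | hlk
  · rw [contract_mul_self, add_zero]
  · exact contract_mul_contract_add hlk

theorem boundary_mul_wedge_add (k : ι) :
    boundary * wedge k + wedge k * boundary = (1 : Module.End R (Finset ι → R)) := by
  rw [boundary, Finset.sum_mul, Finset.mul_sum, ← Finset.sum_add_distrib,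
    Finset.sum_eq_single k (fun l _ hlk => contract_mul_wedge_add hlk) (by simp),
    contract_mul_wedge_add_self]

-- Anticommutation alone gives only `2 • boundary ^ 2 = 0`, hence the induction on partial sums.
theorem boundary_mul_self : boundary * boundary = (0 : Module.End R (Finset ι → R)) := by
  suffices h : ∀ A : Finset ι, (∑ k ∈ A, contract k) * ∑ k ∈ A, contract k =
      (0 : Module.End R (Finset ι → R)) from h Finset.univ
  intro A
  induction A using Finset.induction_on with
  | empty => simp
  | insert a A ha ih =>
    have hcross : contract a * ∑ k ∈ A, contract k + (∑ k ∈ A, contract k) * contract a =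
        (0 : Module.End R (Finset ι → R)) := by
      rw [Finset.sum_mul, Finset.mul_sum, ← Finset.sum_add_distrib]
      exact Finset.sum_eq_zero fun k hk =>
        contract_mul_contract_add fun h => ha (h ▸ hk)
    rw [Finset.sum_insert ha, add_mul, mul_add, mul_add, ih, contract_mul_self, zero_add, add_zero,
      hcross]

theorem boundary_congr {c d : Finset ι → R} {T : Finset ι}
    (h : ∀ k, k ∉ T → c (insert k T) = d (insert k T)) : boundary c T = boundary d T := by
  rw [boundary_apply, boundary_apply]
  refine Finset.sum_congr rfl fun k _ => ?_
  by_cases hk : k ∈ T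
  · rw [contract_of_mem hk, contract_of_mem hk]
  · rw [contract_of_notMem hk, contract_of_notMem hk, h k hk]

theorem boundary_ne_zero_card {F : Set (Finset ι)} {p : ℕ} {b : Finset ι → R}
    (hb : b ∈ chains R F (p + 1)) {T : Finset ι} (hT : boundary b T ≠ 0) : T.card = p := by
  rw [boundary_apply] at hT
  obtain ⟨k, -, hk⟩ := Finset.exists_ne_zero_of_sum_ne_zero hT
  have hkT : k ∉ T := fun h => hk (contract_of_mem h b)
  rw [contract_of_notMem hkT] at hk
  have := (hb _ (right_ne_zero_of_mul hk)).2
  rw [Finset.card_insert_of_notMem hkT] at this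
  exact Nat.succ_injective this

/-- Exactness at the `p`-element sets of the chain complex of a family `F` of finite sets, where
the boundary is truncated to `F`. For convex `F` this is a relative simplicial chain complex. -/
def ExactAt (R : Type*) [CommRing R] (F : Set (Finset ι)) (p : ℕ) : Prop :=
  ∀ c ∈ chains R F p, (∀ T ∈ F, boundary c T = 0) →
    ∃ b ∈ chains R F (p + 1), ∀ T ∈ F, boundary b T = c T

theorem exactAt_of_card_ne {F : Set (Finset ι)} {p : ℕ} (h : ∀ S ∈ F, S.card ≠ p) :
    ExactAt R F p := by
  intro c hc _
  refine ⟨0, zero_mem _, fun T hT => ?_⟩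
  have hcT : c T = 0 := by_contra fun h0 => h T hT (hc T h0).2
  rw [map_zero, hcT, Pi.zero_apply]

theorem exactAt_of_cone {F : Set (Finset ι)} (k : ι) (p : ℕ)
    (hF : ∀ S, k ∉ S → (S ∈ F ↔ insert k S ∈ F)) : ExactAt R F p := by
  intro c hc hcycle
  refine ⟨wedge k c, wedge_mem_chains hc fun S hk => (hF S hk).1, fun T hT => ?_⟩
  have hhomotopy := congr_fun (LinearMap.congr_fun (boundary_mul_wedge_add (R := R) k) c) T
  have hwedge : wedge k (boundary c) T = 0 := by
    by_cases hk : k ∈ T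
    · have hTk : T.erase k ∈ F := by
        rwa [hF _ (Finset.notMem_erase k T), Finset.insert_erase hk]
      rw [wedge_of_mem hk, hcycle _ hTk, mul_zero]
    · exact wedge_of_notMem hk _
  simpa [hwedge] using hhomotopy

theorem boundary_indicator_boundary {F : Set (Finset ι)} (hF : F.OrdConnected) {p : ℕ}
    {b : Finset ι → R} (hb : b ∈ chains R F p) {T : Finset ι} (hT : T ∈ F) :
    boundary (F.indicator (boundary b)) T = 0 := by
  have hcongr : boundary (F.indicator (boundary b)) T = boundary (boundary b) T := by
    refine boundary_congr fun k _ => ?_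
    by_cases hkT : insert k T ∈ F
    · exact Set.indicator_of_mem hkT _
    rw [Set.indicator_of_notMem hkT]
    symm
    rw [boundary_congr (d := 0), map_zero, Pi.zero_apply]
    intro l _
    by_contra hbl
    exact hkT (hF.out hT (hb _ hbl).1 ⟨Finset.subset_insert k T, Finset.subset_insert l _⟩)
  rw [hcongr]
  exact congr_fun (LinearMap.congr_fun boundary_mul_self b) T

/-- The link of `k` in `F`, as a family of finite sets. -/
def linkAt (k : ι) (F : Set (Finset ι)) : Set (Finset ι) := {S | k ∉ S ∧ insert k S ∈ F}

/-- The members of `F` that do not contain `k`. -/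
def deletionAt (k : ι) (F : Set (Finset ι)) : Set (Finset ι) := {S | k ∉ S ∧ S ∈ F}

theorem exists_boundary_eq_of_mem {F : Set (Finset ι)} {k : ι} {p : ℕ}
    (hlink : ∀ q, q + 1 = p → ExactAt R (linkAt k F) q) {c : Finset ι → R}
    (hc : c ∈ chains R F p) (hcycle : ∀ T ∈ F, boundary c T = 0) :
    ∃ b ∈ chains R F (p + 1), ∀ T ∈ F, k ∈ T → boundary b T = c T := by
  rcases p with _ | p
  · refine ⟨0, zero_mem _, fun T _ hk => ?_⟩
    have hcT : c T = 0 := by_contra fun h0 => by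
      simp [Finset.card_eq_zero.1 (hc T h0).2] at hk
    rw [map_zero, hcT, Pi.zero_apply]
  have hcontract : contract k c ∈ chains R (linkAt k F) p := by
    intro S hS
    have hk : k ∉ S := fun hk => hS (contract_of_mem hk c)
    rw [contract_of_notMem hk] at hS
    obtain ⟨hF, hcard⟩ := hc _ (right_ne_zero_of_mul hS)
    rw [Finset.card_insert_of_notMem hk] at hcard
    exact ⟨⟨hk, hF⟩, Nat.succ_injective hcard⟩
  obtain ⟨b, hb, hbc⟩ := hlink p rfl _ hcontract fun T ⟨hk, hT⟩ => by
    have hanti := congr_fun (LinearMap.congr_fun (boundary_mul_contract (R := R) k) c) T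
    simpa [contract_of_notMem hk, hcycle _ hT] using hanti
  refine ⟨-wedge k b, neg_mem (wedge_mem_chains hb fun S _ hS => hS.2), fun T hT hk => ?_⟩
  obtain ⟨U, hU, rfl⟩ : ∃ U, k ∉ U ∧ insert k U = T :=
    ⟨T.erase k, Finset.notMem_erase k T, Finset.insert_erase hk⟩
  have hhomotopy := congr_fun (LinearMap.congr_fun (boundary_mul_wedge_add (R := R) k) b)
    (insert k U)
  have hbT : b (insert k U) = 0 := by_contra fun h0 => (hb _ h0).1.1 hk
  have hwedge : wedge k (boundary b) (insert k U) = c (insert k U) := by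
    rw [wedge_insert hU, hbc U ⟨hU, hT⟩, contract_of_notMem hU, ← mul_assoc,
      koszulSign_mul_self, one_mul]
  simp only [LinearMap.add_apply, Module.End.mul_apply, Pi.add_apply, Module.End.one_apply, hbT,
    hwedge] at hhomotopy
  rw [map_neg, Pi.neg_apply, eq_neg_of_add_eq_zero_left hhomotopy, neg_neg]

theorem exactAt_of_deletionAt_of_linkAt {F : Set (Finset ι)} (hF : F.OrdConnected) (k : ι) (p : ℕ)
    (hdel : ExactAt R (deletionAt k F) p)
    (hlink : ∀ q, q + 1 = p → ExactAt R (linkAt k F) q) : ExactAt R F p := by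
  intro c hc hcycle
  obtain ⟨b, hb, hbc⟩ := exists_boundary_eq_of_mem hlink hc hcycle
  have hd : F.indicator (boundary b) ∈ chains R F p := fun T hT =>
    ⟨Set.mem_of_indicator_ne_zero hT,
      boundary_ne_zero_card hb fun h => hT (Set.indicator_apply_eq_zero.2 fun _ => h)⟩
  have hdiff : c - F.indicator (boundary b) ∈ chains R (deletionAt k F) p := by
    intro S hS
    obtain ⟨hSF, hcard⟩ := sub_mem hc hd S hS
    refine ⟨⟨fun hk => hS ?_, hSF⟩, hcard⟩
    rw [Pi.sub_apply, Set.indicator_of_mem hSF, hbc S hSF hk, sub_self]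
  obtain ⟨b', hb', hbc'⟩ := hdel _ hdiff fun T hT => by
    rw [map_sub, Pi.sub_apply, hcycle T hT.2, boundary_indicator_boundary hF hb hT.2, sub_zero]
  refine ⟨b' + b, add_mem (fun S hS => ⟨(hb' S hS).1.2, (hb' S hS).2⟩) hb, fun T hT => ?_⟩
  rw [map_add, Pi.add_apply]
  by_cases hk : k ∈ T
  · have hb'T : boundary b' T = 0 := by
      rw [boundary_congr (d := 0), map_zero, Pi.zero_apply]
      intro l _
      by_contra h0
      exact (hb' _ h0).1.1 (Finset.mem_insert_of_mem hk)
    rw [hb'T, hbc T hT hk, zero_add]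
  · rw [hbc' T ⟨hk, hT⟩, Pi.sub_apply, Set.indicator_of_mem hT, sub_add_cancel]

end Chains

/-! ## Linear quotients -/

section LcmStrand

variable {R : Type*} [CommRing R] {σ ι : Type*} [Fintype σ] {g : ι → σ → ℕ}
  {A : Finset ι} {m : σ → ℕ} {j : ℕ}

/-- The subsets `S` of `A` for which `lcm(x^m, x^(g k) : k ∈ S)` has degree `j`. For `m = 0` they
index the degree `j` strand of the Taylor complex on the generators in `A`; letting `m` vary
accounts for colon ideals by a monomial. -/
def lcmStrand (g : ι → σ → ℕ) (A : Finset ι) (m : σ → ℕ) (j : ℕ) : Set (Finset ι) :=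
  {S | S ⊆ A ∧ ∑ x, (m ⊔ S.sup g) x = j}

theorem ordConnected_lcmStrand : (lcmStrand g A m j).OrdConnected := by
  refine ⟨fun S hS U hU T hT => ⟨hT.2.trans hU.1, le_antisymm ?_ ?_⟩⟩
  · rw [← hU.2]
    exact Finset.sum_le_sum fun x _ => sup_le_sup_left (Finset.sup_mono hT.2) m x
  · rw [← hS.2]
    exact Finset.sum_le_sum fun x _ => sup_le_sup_left (Finset.sup_mono hT.1) m x

theorem sum_sup_eq_sum_add_card [DecidableEq σ] {S : Finset ι}
    (hinj : Set.InjOn (fun w => m ⊔ g w) S)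
    (hS : ∀ w ∈ S, ∃ p, m ⊔ g w = m + Pi.single p 1) :
    ∑ x, (m ⊔ S.sup g) x = ∑ x, m x + S.card := by
  classical
  induction S using Finset.induction_on with
  | empty => simp
  | insert a S ha ih =>
    obtain ⟨p, hp⟩ := hS a (Finset.mem_insert_self a S)
    have hsup : (m ⊔ S.sup g) p = m p := by
      rw [Pi.sup_apply, sup_eq_left, Finset.sup_apply]
      refine Finset.sup_le fun w hw => ?_
      obtain ⟨p', hp'⟩ := hS w (Finset.mem_insert_of_mem hw)
      have hpp' : p ≠ p' := by
        rintro rfl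
        exact ha (hinj (Finset.mem_coe.2 (Finset.mem_insert_of_mem hw))
          (Finset.mem_coe.2 (Finset.mem_insert_self a S)) (hp'.trans hp.symm) ▸ hw)
      simpa [hpp'] using congr_fun hp' p
    have hinsert : m ⊔ (insert a S).sup g = m ⊔ S.sup g + Pi.single p 1 := by
      rw [Finset.sup_insert]
      refine funext fun x => ?_
      have hx := congr_fun hp x
      rcases eq_or_ne x p with rfl | hxp
      · simp only [Pi.sup_apply, Pi.add_apply, Pi.single_eq_same] at hx hsup ⊢
        omega
      · simp only [Pi.sup_apply, Pi.add_apply, Pi.single_eq_of_ne hxp] at hx ⊢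
        omega
    rw [hinsert, Finset.card_insert_of_notMem ha, ← add_assoc,
      ← ih (hinj.mono (by simp)) fun w hw => hS w (Finset.mem_insert_of_mem hw)]
    simp [Finset.sum_add_distrib]

variable [LinearOrder ι] [Fintype ι]

theorem exactAt_lcmStrand_insert {k : ι} (hk : k ∉ A) (p : ℕ)
    (hdel : ExactAt R (lcmStrand g A m j) p)
    (hlink : ∀ q, q + 1 = p → ExactAt R (lcmStrand g A (m ⊔ g k) j) q) :
    ExactAt R (lcmStrand g (insert k A) m j) p := by
  have hdeletion : deletionAt k (lcmStrand g (insert k A) m j) = lcmStrand g A m j := by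
    ext S
    refine ⟨fun ⟨hkS, hS⟩ => ⟨(Finset.subset_insert_iff_of_notMem hkS).1 hS.1, hS.2⟩,
      fun hS => ⟨fun h => hk (hS.1 h), hS.1.trans (Finset.subset_insert k A), hS.2⟩⟩
  have hlinkAt : linkAt k (lcmStrand g (insert k A) m j) = lcmStrand g A (m ⊔ g k) j := by
    ext S
    simp only [linkAt, lcmStrand, Set.mem_ofPred_eq, Finset.sup_insert, sup_assoc]
    refine ⟨fun ⟨hkS, hS, hj⟩ => ⟨(Finset.insert_subset_insert_iff hkS).1 hS, hj⟩,
      fun ⟨hS, hj⟩ => ⟨fun h => hk (hS h), Finset.insert_subset_insert k hS, hj⟩⟩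
  exact exactAt_of_deletionAt_of_linkAt ordConnected_lcmStrand k p (hdeletion ▸ hdel)
    (hlinkAt ▸ hlink)

theorem exactAt_lcmStrand_of_le {k : ι} (hk : k ∈ A) (hkm : g k ≤ m) (p : ℕ) :
    ExactAt R (lcmStrand g A m j) p := by
  refine exactAt_of_cone k p fun S _ => ?_
  have hsup : m ⊔ (insert k S).sup g = m ⊔ S.sup g := by
    rw [Finset.sup_insert, ← sup_assoc, sup_eq_left.2 hkm]
  simp only [lcmStrand, Set.mem_ofPred_eq, hsup, Finset.insert_subset_iff, hk, true_and]

theorem exactAt_lcmStrand_of_subset {W : Finset ι} (hWA : W ⊆ A)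
    (hred : ∀ u ∈ A, u ∉ W → ∃ w ∈ W, g w ≤ m ⊔ g u) {p : ℕ}
    (hW : ExactAt R (lcmStrand g W m j) p) : ExactAt R (lcmStrand g A m j) p := by
  suffices h : ∀ B ⊆ A \ W, ExactAt R (lcmStrand g (B ∪ W) m j) p by
    simpa [Finset.sdiff_union_of_subset hWA] using h (A \ W) subset_rfl
  intro B
  induction B using Finset.induction_on with
  | empty => simpa using hW
  | insert u B hu ih =>
    intro hB
    obtain ⟨huAW, hBAW⟩ := Finset.insert_subset_iff.1 hB
    obtain ⟨huA, huW⟩ := Finset.mem_sdiff.1 huAW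
    obtain ⟨w, hw, hwu⟩ := hred u huA huW
    rw [Finset.insert_union]
    exact exactAt_lcmStrand_insert (by simp [hu, huW]) p (ih hBAW) fun q _ =>
      exactAt_lcmStrand_of_le (Finset.mem_union_right B hw) hwu q

theorem exactAt_lcmStrand_of_colon_eq_variables [DecidableEq σ]
    (hcolon : ∀ u ∈ A, ∃ w ∈ A, ∃ p, m p < g u p ∧ m ⊔ g w = m + Pi.single p 1) {q : ℕ}
    (hj : j ≠ q + ∑ x, m x) : ExactAt R (lcmStrand g A m j) q := by
  obtain ⟨W, hWA, hinj, himage⟩ := Finset.exists_subset_injOn_image_eq_of_surjOn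
    (f := fun w => m ⊔ g w) {w | w ∈ A ∧ ∃ p, m ⊔ g w = m + Pi.single p 1}
    ({w ∈ A | ∃ p, m ⊔ g w = m + Pi.single p 1}.image fun w => m ⊔ g w)
    (by rw [Finset.coe_image, Finset.coe_filter]; exact Set.surjOn_image _ _)
  have hW : ∀ w ∈ W, ∃ p, m ⊔ g w = m + Pi.single p 1 := fun w hw =>
    (hWA hw).2
  refine exactAt_lcmStrand_of_subset (W := W) (fun w hw => (hWA hw).1)
    (fun u hu _ => ?_) (exactAt_of_card_ne fun S hS hcard => hj ?_)
  · obtain ⟨w, hw, p, hpu, hp⟩ := hcolon u hu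
    obtain ⟨w', hw', heq⟩ : ∃ w' ∈ W, m ⊔ g w' = m ⊔ g w := by
      have hmem : m ⊔ g w ∈ W.image fun w => m ⊔ g w := by
        rw [himage]
        exact Finset.mem_image_of_mem _ (Finset.mem_filter.2 ⟨hw, p, hp⟩)
      simpa using hmem
    refine ⟨w', hw', le_sup_right.trans ((heq.trans hp).le.trans fun x => ?_)⟩
    rcases eq_or_ne x p with rfl | hx
    · simpa using hpu
    · simp [hx]
  · rw [← hS.2, sum_sup_eq_sum_add_card (hinj.mono (by exact_mod_cast hS.1))
      fun w hw => hW w (hS.1 hw), hcard, add_comm]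

end LcmStrand

section LinearQuotients

variable {σ α : Type*} [DecidableEq σ] [LinearOrder α]

/-- The monomials with exponents in `B`, in the order of decreasing `key`, have linear quotients:
every colon ideal by the next generator is generated by variables. -/
def HasLinearQuotients (B : Set (σ → ℕ)) (key : (σ → ℕ) → α) : Prop :=
  ∀ u ∈ B, ∀ v ∈ B, key v < key u →
    ∃ w ∈ B, key v < key w ∧ ∃ p, v p < u p ∧ v ⊔ w = v + Pi.single p 1

variable {R : Type*} [CommRing R] [Fintype σ] {ι : Type*} [LinearOrder ι] [Fintype ι]
  {g : ι → σ → ℕ} {A : Finset ι}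

theorem HasLinearQuotients.exactAt_lcmStrand {key : (σ → ℕ) → α}
    (hlq : HasLinearQuotients (g '' A) key) (hkey : Set.InjOn (key ∘ g) A) {d : ℕ}
    (hdeg : ∀ k ∈ A, ∑ x, g k x = d) {i j : ℕ} (hj : j ≠ i + d) :
    ExactAt R (lcmStrand g A 0 j) (i + 1) := by
  induction A using Finset.induction_on_min_value (key ∘ g) with
  | empty => exact exactAt_of_card_ne fun S hS => by simp [Finset.subset_empty.1 hS.1]
  | insert a A ha hmin ih =>
    have hsub : (A : Set ι) ⊆ (insert a A : Finset ι) := by simp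
    have hmem : ∀ w ∈ g '' (insert a A : Finset ι), key (g a) < key w → w ∈ g '' A := by
      simp +contextual [Set.image_insert_eq, or_imp]
    have ha' : a ∈ insert a A := Finset.mem_insert_self a A
    have hcolon : ∀ u ∈ A, ∃ w ∈ A, ∃ p, g a p < g u p ∧ g a ⊔ g w = g a + Pi.single p 1 := by
      intro u hu
      have hlt : key (g a) < key (g u) :=
        (hmin u hu).lt_of_ne fun h => ha (hkey ha' (hsub hu) h ▸ hu)
      obtain ⟨w, hw, hkw, hp⟩ := hlq _ ⟨u, hsub hu, rfl⟩ _ ⟨a, ha', rfl⟩ hlt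
      obtain ⟨k, hk, rfl⟩ := hmem w hw hkw
      exact ⟨k, hk, hp⟩
    have hlq' : HasLinearQuotients (g '' A) key := fun u hu v hv huv => by
      obtain ⟨w, hw, hkw, hp⟩ :=
        hlq u (Set.image_mono hsub hu) v (Set.image_mono hsub hv) huv
      obtain ⟨k, hk, rfl⟩ := hv
      exact ⟨w, hmem w hw ((hmin k hk).trans_lt hkw), hkw, hp⟩
    refine exactAt_lcmStrand_insert ha _
      (ih hlq' (hkey.mono hsub) fun k hk => hdeg k (hsub hk)) fun q hq => ?_
    have hzero : 0 ⊔ g a = g a := sup_eq_right.2 fun _ => Nat.zero_le _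
    rw [hzero]
    refine exactAt_lcmStrand_of_colon_eq_variables hcolon ?_
    rwa [hdeg a ha', Nat.succ_injective hq]

end LinearQuotients

/-! ## Linear resolutions of monomial ideals -/

section TaylorComplex

variable {K : Type} [Field K] {n r : ℕ} {g : Fin r → Fin n → ℕ} {p j : ℕ}

theorem mlcm_eq_sup (S : Finset (Fin r)) : mlcm g S = S.sup g :=
  funext fun x => (Finset.sup_apply S g x).symm

theorem mem_lcmStrand_univ {S : Finset (Fin r)} :
    S ∈ lcmStrand g Finset.univ 0 j ↔ ∑ x, mlcm g S x = j := by
  simp [lcmStrand, mlcm_eq_sup]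

theorem mem_strand {c : Finset (Fin r) →₀ K} :
    c ∈ strand K g p j ↔ ⇑c ∈ chains K (lcmStrand g Finset.univ 0 j) p := by
  have hset : {c | ∃ S : Finset (Fin r), S.card = p ∧ (∑ x, mlcm g S x) = j ∧
      c = Finsupp.single S (1 : K)} = (fun S => Finsupp.single S (1 : K)) ''
        {S | S ∈ lcmStrand g Finset.univ 0 j ∧ S.card = p} := by
    ext c
    simp only [mem_lcmStrand_univ, Set.mem_ofPred_eq, Set.mem_image]
    exact ⟨fun ⟨S, hp, hj, hc⟩ => ⟨S, ⟨hj, hp⟩, hc.symm⟩, fun ⟨S, ⟨hj, hp⟩, hc⟩ =>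
      ⟨S, hp, hj, hc.symm⟩⟩
  rw [strand, hset, ← Finsupp.supported_eq_span_single, Finsupp.mem_supported]
  simp [Set.subset_def, chains]

theorem contract_single_of_mem {S : Finset (Fin r)} {k : Fin r} (hk : k ∈ S) (a : K) :
    contract k (Finsupp.single S a) = Finsupp.single (S.erase k) (koszulSign K S k * a) := by
  refine funext fun T => ?_
  by_cases hkT : k ∈ T
  · have hne : S.erase k ≠ T := fun h => Finset.notMem_erase k S (h ▸ hkT)
    rw [contract_of_mem hkT, Finsupp.single_eq_of_ne' hne]
  · have hiff : S.erase k = T ↔ S = insert k T := Finset.erase_eq_iff_eq_insert hk hkT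
    rw [contract_of_notMem hkT, Finsupp.single_apply, Finsupp.single_apply]
    by_cases hT : S = insert k T
    · rw [if_pos hT, if_pos (hiff.2 hT), hT, koszulSign_insert_self]
    · rw [if_neg hT, if_neg (hiff.not.2 hT), mul_zero]

theorem contract_single_of_notMem {S : Finset (Fin r)} {k : Fin r} (hk : k ∉ S) (a : K) :
    contract k (Finsupp.single S a) = 0 := by
  refine funext fun T => ?_
  by_cases hkT : k ∈ T
  · exact contract_of_mem hkT _
  · have hne : S ≠ insert k T := fun h => hk (h ▸ Finset.mem_insert_self k T)
    rw [contract_of_notMem hkT, Finsupp.single_eq_of_ne' hne, mul_zero, Pi.zero_apply]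

theorem bdT_apply (c : Finset (Fin r) →₀ K) (T : Finset (Fin r)) :
    bdT K g c T = ∑ k, if mlcm g T = mlcm g (insert k T) then contract k c T else 0 := by
  induction c using Finsupp.induction_linear with
  | zero => simp
  | add c d hc hd =>
    rw [map_add, Finsupp.add_apply, hc, hd, ← Finset.sum_add_distrib]
    refine Finset.sum_congr rfl fun k _ => ?_
    rw [Finsupp.coe_add, map_add]
    split_ifs <;> simp
  | single S a =>
    rw [bdT, Finsupp.lsum_single, LinearMap.toSpanSingleton_apply, Finsupp.smul_apply,
      Finsupp.finsetSum_apply, Finset.smul_sum]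
    refine Finset.sum_subset_zero_on_sdiff (Finset.subset_univ S) (fun k hk => ?_) fun k hk => ?_
    · rw [contract_single_of_notMem (Finset.mem_sdiff.1 hk).2, Pi.zero_apply, ite_self]
    · rw [contract_single_of_mem hk]
      by_cases hT : S.erase k = T
      · subst hT
        rw [Finset.insert_erase hk]
        split_ifs <;> simp [koszulSign, mul_comm]
      · rw [Finsupp.single_eq_of_ne' hT]
        split_ifs <;> simp [hT]

theorem bdT_eq_indicator_boundary {c : Finset (Fin r) →₀ K}
    (hc : ⇑c ∈ chains K (lcmStrand g Finset.univ 0 j) p) :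
    ⇑(bdT K g c) = (lcmStrand g Finset.univ 0 j).indicator (boundary c) := by
  refine funext fun T => ?_
  rw [bdT_apply]
  by_cases hT : T ∈ lcmStrand g Finset.univ 0 j
  · rw [Set.indicator_of_mem hT, boundary_apply]
    refine Finset.sum_congr rfl fun k _ => ite_eq_left_iff.2 fun hne => ?_
    by_contra h0
    have hk : k ∉ T := fun hk => h0 (contract_of_mem hk _).symm
    rw [contract_of_notMem hk] at h0
    have hkT := (hc _ (right_ne_zero_of_mul (Ne.symm h0))).1
    rw [mem_lcmStrand_univ] at hT hkT
    have hle : ∀ x ∈ Finset.univ, mlcm g T x ≤ mlcm g (insert k T) x := fun x _ =>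
      Finset.sup_mono (Finset.subset_insert k T)
    exact hne (funext fun x =>
      (Finset.sum_eq_sum_iff_of_le hle).1 (hT.trans hkT.symm) x (Finset.mem_univ x))
  · rw [Set.indicator_of_notMem hT]
    refine Finset.sum_eq_zero fun k _ => ite_eq_right_iff.2 fun heq => ?_
    by_contra h0
    have hk : k ∉ T := fun hk => h0 (contract_of_mem hk _)
    rw [contract_of_notMem hk] at h0
    have hkT := (hc _ (right_ne_zero_of_mul h0)).1
    rw [mem_lcmStrand_univ] at hT hkT
    exact hT (heq ▸ hkT)

theorem torRank_eq_zero (hF : ExactAt K (lcmStrand g Finset.univ 0 j) p) :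
    torRank K g p j = 0 := by
  suffices h : strand K g p j ⊓ LinearMap.ker (bdT K g) ≤
      Submodule.map (bdT K g) (strand K g (p + 1) j) by
    rw [torRank, inf_eq_right.2 h, Nat.sub_self]
  rintro c ⟨hc, hker⟩
  have hc' := mem_strand.1 hc
  have hcycle := bdT_eq_indicator_boundary hc'
  rw [LinearMap.mem_ker.1 hker] at hcycle
  obtain ⟨b, hb, hbc⟩ := hF c hc' fun T hT => by
    rw [← Set.indicator_of_mem hT (boundary c), ← hcycle, Finsupp.coe_zero, Pi.zero_apply]
  refine ⟨Finsupp.equivFunOnFinite.symm b, mem_strand.2 hb, DFunLike.coe_injective ?_⟩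
  rw [bdT_eq_indicator_boundary (p := p + 1) hb]
  refine funext fun T => ?_
  by_cases hT : T ∈ lcmStrand g Finset.univ 0 j
  · rw [Set.indicator_of_mem hT]
    exact hbc T hT
  · rw [Set.indicator_of_notMem hT]
    by_contra h0
    exact hT (hc' T (Ne.symm h0)).1

end TaylorComplex

section MonomialIdeals

variable {K : Type} [Field K] {n r d : ℕ} {g : Fin r → Fin n → ℕ} {B : Set (Fin n → ℕ)}

theorem mono_mem_span_image {v : Fin n → ℕ} :
    mono K v ∈ Ideal.span (mono K '' B) ↔ ∃ w ∈ B, w ≤ v := by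
  classical
  have himage : mono K '' B = (fun s => MvPolynomial.monomial s (1 : K)) ''
      (Finsupp.equivFunOnFinite.symm '' B) := by
    rw [Set.image_image]
    rfl
  rw [himage, MvPolynomial.mem_ideal_span_monomial_image, mono]
  simp only [MvPolynomial.support_monomial, one_ne_zero, if_false, Finset.mem_singleton,
    forall_eq, Set.exists_mem_image]
  rfl

theorem IsGenSet.exists_le (hgen : IsGenSet K g (Ideal.span (mono K '' B))) (k : Fin r) :
    ∃ w ∈ B, w ≤ g k :=
  mono_mem_span_image.1 (hgen ▸ Ideal.subset_span (Set.mem_range_self k))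

theorem IsGenSet.exists_eq (hgen : IsGenSet K g (Ideal.span (mono K '' B)))
    (hdeg : ∀ v ∈ B, ∑ x, v x = d) {v : Fin n → ℕ} (hv : v ∈ B) : ∃ k, g k = v := by
  have hmem : mono K v ∈ Ideal.span (mono K '' Set.range g) := by
    rw [← Set.range_comp]
    exact hgen.symm ▸ Ideal.subset_span ⟨v, hv, rfl⟩
  obtain ⟨_, ⟨k, rfl⟩, hkv⟩ := mono_mem_span_image.1 hmem
  obtain ⟨w, hw, hwk⟩ := hgen.exists_le k
  have hwv : ∀ x ∈ Finset.univ, w x = v x :=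
    (Finset.sum_eq_sum_iff_of_le fun x _ => (hwk.trans hkv) x).1
      ((hdeg w hw).trans (hdeg v hv).symm)
  exact ⟨k, hkv.antisymm fun x => hwv x (Finset.mem_univ x) ▸ hwk x⟩

theorem hasLinRes_of_hasLinearQuotients {α : Type*} [LinearOrder α] {key : (Fin n → ℕ) → α}
    (hlq : HasLinearQuotients B key) (hkey : Set.InjOn key B) (hdeg : ∀ v ∈ B, ∑ x, v x = d)
    (hgen : IsGenSet K g (Ideal.span (mono K '' B))) : HasLinRes K g d := by
  have hsurj : Set.SurjOn g Set.univ B := fun v hv =>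
    (hgen.exists_eq hdeg hv).imp fun k hk => ⟨Set.mem_univ k, hk⟩
  obtain ⟨W, -, hinj, himage⟩ := hsurj.exists_subset_injOn_image_eq
  lift W to Finset (Fin r) using W.toFinite
  rw [← himage] at hlq hkey
  intro i j hne
  by_contra hij
  refine hne (torRank_eq_zero (exactAt_lcmStrand_of_subset (Finset.subset_univ W)
    (fun u _ _ => ?_) (hlq.exactAt_lcmStrand ?_ (fun k hk => ?_) hij)))
  · obtain ⟨w, hw, hwu⟩ := hgen.exists_le u
    rw [← himage] at hw
    obtain ⟨k, hk, rfl⟩ := hw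
    exact ⟨k, hk, le_sup_of_le_right hwu⟩
  · exact hkey.comp hinj (Set.mapsTo_image g W)
  · exact hdeg _ (himage ▸ Set.mem_image_of_mem g hk)

end MonomialIdeals

/-! ## Exponents and their order -/

section Exponents

/-- Adjacency in the cycle `0 - 1 - ⋯ - (t + 2) - 0`. -/
def CycleAdj (t i j : ℕ) : Prop :=
  (j = i + 1 ∧ j ≤ t + 2) ∨ (i = j + 1 ∧ i ≤ t + 2) ∨ (i = 0 ∧ j = t + 2) ∨ (j = 0 ∧ i = t + 2)

/-- Exponents of the monomials that generate the `s`-th power of the edge ideal of the complement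
of `Gb t`. The indices `0, …, t + 2` are the cycle vertices, the apex `t + 3` is an isolated vertex
of that complement, and an edge meets each independent set `{i, j}`, `{t + 4}` at most once. -/
structure IsPowExponent (t s : ℕ) (a : ℕ → ℕ) : Prop where
  sum_eq : ∑ i ∈ Finset.range (t + 5), a i = 2 * s
  cycle_le : ∀ {i j}, CycleAdj t i j → a i + a j ≤ s
  whisker_le : a (t + 4) ≤ s
  apex_eq : a (t + 3) = 0
  eq_zero_of_le : ∀ {i}, t + 5 ≤ i → a i = 0

variable {t s : ℕ} {u v : ℕ → ℕ}

theorem CycleAdj.symm {i j : ℕ} (h : CycleAdj t i j) : CycleAdj t j i := by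
  unfold CycleAdj at h ⊢
  omega

theorem CycleAdj.ne {i j : ℕ} (h : CycleAdj t i j) : i ≠ j := by
  unfold CycleAdj at h
  omega

theorem CycleAdj.le_left {i j : ℕ} (h : CycleAdj t i j) : i ≤ t + 2 := by
  unfold CycleAdj at h
  omega

theorem sum_map_add_sum_sdiff {n : ℕ} (l : List ℕ) (hl : l.Nodup) (hn : ∀ i ∈ l, i < n)
    (a : ℕ → ℕ) :
    (l.map a).sum + ∑ i ∈ Finset.range n \ l.toFinset, a i = ∑ i ∈ Finset.range n, a i := by
  rw [← List.sum_toFinset a hl, add_comm, Finset.sum_sdiff]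
  intro i hi
  exact Finset.mem_range.2 (hn i (List.mem_toFinset.1 hi))

namespace IsPowExponent

theorem lt_of_pos (hv : IsPowExponent t s v) {i : ℕ} (hi : 0 < v i) : i < t + 5 :=
  not_le.1 fun h => hi.ne' (hv.eq_zero_of_le h)

theorem ne_apex_of_pos (hv : IsPowExponent t s v) {i : ℕ} (hi : 0 < v i) : i ≠ t + 3 := by
  rintro rfl
  exact hi.ne' hv.apex_eq

theorem sum_map_le (hv : IsPowExponent t s v) (l : List ℕ) (hl : l.Nodup)
    (hlt : ∀ i ∈ l, i < t + 5) : (l.map v).sum ≤ 2 * s := by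
  rw [← hv.sum_eq, ← sum_map_add_sum_sdiff l hl hlt v]
  exact Nat.le_add_right _ _

theorem exists_lt_of_sum_map_lt (hu : IsPowExponent t s u) (hv : IsPowExponent t s v) (l : List ℕ)
    (hl : l.Nodup) (hlt : ∀ i ∈ l, i < t + 5) (h : (l.map u).sum < (l.map v).sum) :
    ∃ r ∉ l, v r < u r := by
  have hsum : ∑ i ∈ Finset.range (t + 5) \ l.toFinset, v i <
      ∑ i ∈ Finset.range (t + 5) \ l.toFinset, u i := by
    have hu' := sum_map_add_sum_sdiff l hl hlt u
    have hv' := sum_map_add_sum_sdiff l hl hlt v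
    rw [hu.sum_eq] at hu'
    rw [hv.sum_eq] at hv'
    omega
  obtain ⟨r, hr, hrlt⟩ := Finset.exists_lt_of_sum_lt hsum
  exact ⟨r, fun h => (Finset.mem_sdiff.1 hr).2 (List.mem_toFinset.2 h), hrlt⟩

theorem exists_lt_of_lt (hu : IsPowExponent t s u) (hv : IsPowExponent t s v) {p : ℕ}
    (h : v p < u p) : ∃ q, u q < v q := by
  have hp := hu.lt_of_pos (pos_of_gt h)
  obtain ⟨q, -, hq⟩ := hv.exists_lt_of_sum_map_lt hu [p] (List.nodup_singleton p)
    (by simpa using hp) (by simpa using h)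
  exact ⟨q, hq⟩

end IsPowExponent

/-- The exponent of `x_p x^a / x_q`. -/
def transfer (a : ℕ → ℕ) (p q : ℕ) : ℕ → ℕ :=
  fun i => a i + (if i = p then 1 else 0) - if i = q then 1 else 0

theorem transfer_to {a : ℕ → ℕ} {p q : ℕ} (hpq : p ≠ q) : transfer a p q p = a p + 1 := by
  simp [transfer, hpq]

theorem transfer_of_ne {a : ℕ → ℕ} {p q i : ℕ} (hp : i ≠ p) (hq : i ≠ q) :
    transfer a p q i = a i := by
  simp [transfer, hp, hq]

theorem transfer_from {a : ℕ → ℕ} {p q : ℕ} (hpq : p ≠ q) : transfer a p q q = a q - 1 := by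
  simp [transfer, hpq.symm]

theorem transfer_le {a : ℕ → ℕ} {p q i : ℕ} (hp : i ≠ p) : transfer a p q i ≤ a i := by
  simp [transfer, hp]

theorem sup_transfer {a : ℕ → ℕ} {p q : ℕ} (hpq : p ≠ q) :
    a ⊔ transfer a p q = a + Pi.single p 1 := by
  refine funext fun i => ?_
  rcases eq_or_ne i p with rfl | hi
  · simp [transfer_to hpq]
  · simp [hi, transfer_le hi]

theorem IsPowExponent.transfer (hv : IsPowExponent t s v) {p q : ℕ} (hpq : p ≠ q) (hq : 0 < v q)
    (hp : p < t + 5) (hp' : p ≠ t + 3) (hcycle : ∀ i, CycleAdj t p i → i = q ∨ v p + v i < s)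
    (hwhisker : p = t + 4 → v p < s) : IsPowExponent t s (transfer v p q) where
  sum_eq := by
    have hqlt := hv.lt_of_pos hq
    have hsum : ∑ i ∈ Finset.range (t + 5), (EP.transfer v p q i + if i = q then 1 else 0) =
        ∑ i ∈ Finset.range (t + 5), (v i + if i = p then 1 else 0) := by
      refine Finset.sum_congr rfl fun i _ => ?_
      rcases eq_or_ne i q with rfl | hi
      · simp only [EP.transfer, if_pos]
        omega
      · simp [EP.transfer, hi]
    simpa [Finset.sum_add_distrib, hqlt, hp, hv.sum_eq] using hsum
  cycle_le {i j} hij := by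
    have hle := hv.cycle_le hij
    have hne := hij.ne
    rcases eq_or_ne i p with rfl | hi
    · have hj := transfer_le (a := v) (q := q) hne.symm
      rw [transfer_to hpq]
      rcases hcycle j hij with rfl | h
      · rw [transfer_from hpq]; omega
      · omega
    rcases eq_or_ne j p with rfl | hj
    · have hi := transfer_le (a := v) (q := q) hi
      rw [transfer_to hpq]
      rcases hcycle i hij.symm with rfl | h
      · rw [transfer_from hpq]; omega
      · omega
    · exact (add_le_add (transfer_le hi) (transfer_le hj)).trans hle
  whisker_le := by
    rcases eq_or_ne (t + 4) p with rfl | h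
    · rw [transfer_to hpq]
      exact hwhisker rfl
    · exact (transfer_le h).trans hv.whisker_le
  apex_eq := Nat.eq_zero_of_le_zero ((transfer_le hp'.symm).trans hv.apex_eq.le)
  eq_zero_of_le {i} hi :=
    Nat.eq_zero_of_le_zero ((transfer_le (by omega)).trans (hv.eq_zero_of_le hi).le)

/-- The third comparison of `exponentKey`: it is active only on monomials not divisible by `x_0`,
where it prefers a large exponent at the vertex `1`, except that `x_1 ^ s * x_{t + 2} ^ s` is placed
behind all others. -/
def secondaryKey (t s : ℕ) (a : ℕ → ℕ) : ℕ :=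
  if a 0 = 0 ∧ ¬(a 1 = s ∧ a (t + 2) = s) then a 1 + 1 else 0

/-- The sort key of the linear quotient order on the generators of `I(G) ^ s`: a larger key in the
lexicographic order comes earlier. -/
def exponentKey (t s : ℕ) (a : ℕ → ℕ) : Lex (ℕ → ℕ) :=
  toLex fun
    | 0 => a (t + 4)
    | 1 => a 0
    | 2 => secondaryKey t s a
    | i + 3 => a (i + 2)

theorem exponentKey_lt_iff : exponentKey t s v < exponentKey t s u ↔
    v (t + 4) < u (t + 4) ∨ v (t + 4) = u (t + 4) ∧ (v 0 < u 0 ∨ v 0 = u 0 ∧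
      (secondaryKey t s v < secondaryKey t s u ∨ secondaryKey t s v = secondaryKey t s u ∧
        ∃ p, 2 ≤ p ∧ (∀ i, 2 ≤ i → i < p → v i = u i) ∧ v p < u p)) := by
  constructor
  · rintro ⟨_ | _ | _ | p, heq, hlt⟩
    · exact Or.inl hlt
    · exact Or.inr ⟨heq 0 (by omega), Or.inl hlt⟩
    · exact Or.inr ⟨heq 0 (by omega), Or.inr ⟨heq 1 (by omega), Or.inl hlt⟩⟩
    · refine Or.inr ⟨heq 0 (by omega), Or.inr ⟨heq 1 (by omega), Or.inr ⟨heq 2 (by omega), p + 2,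
        by omega, fun i hi hip => ?_, hlt⟩⟩⟩
      obtain ⟨i, rfl⟩ := Nat.exists_eq_add_of_le' hi
      exact heq (i + 3) (by change i + 3 < p + 3; omega)
  · rintro (h | ⟨hy, h | ⟨h0, h | ⟨h1, p, hp, heq, h⟩⟩⟩)
    · exact ⟨0, fun i hi => absurd hi (Nat.not_lt_zero i), h⟩
    · refine ⟨1, fun i hi => ?_, h⟩
      obtain rfl : i = 0 := by change i < 1 at hi; omega
      exact hy
    · refine ⟨2, fun i hi => ?_, h⟩
      match i with
      | 0 => exact hy
      | 1 => exact h0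
      | i + 2 => exact absurd hi (by change ¬(i + 2 < 2); omega)
    · obtain ⟨p, rfl⟩ := Nat.exists_eq_add_of_le' hp
      refine ⟨p + 3, fun i hi => ?_, h⟩
      change i < p + 3 at hi
      match i with
      | 0 => exact hy
      | 1 => exact h0
      | 2 => exact h1
      | i + 3 => exact heq (i + 2) (by omega) (by omega)

theorem injOn_exponentKey : Set.InjOn (exponentKey t s) {a | IsPowExponent t s a} := by
  intro u hu v hv huv
  have hcoord : ∀ i, ofLex (exponentKey t s u) i = ofLex (exponentKey t s v) i := fun i => by
    rw [huv]
  have hne : ∀ i ≠ 1, u i = v i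
    | 0, _ => hcoord 1
    | 1, h => absurd rfl h
    | i + 2, _ => hcoord (i + 3)
  refine funext fun i => ?_
  rcases eq_or_ne i 1 with rfl | hi
  · by_contra h
    rcases lt_or_gt_of_ne h with h | h
    · obtain ⟨q, hq⟩ := hv.exists_lt_of_lt hu h
      exact (hne q fun h1 => by subst h1; omega).not_gt hq
    · obtain ⟨q, hq⟩ := hu.exists_lt_of_lt hv h
      exact (hne q fun h1 => by subst h1; omega).not_lt hq
  · exact hne i hi

end Exponents

/-! ## The exchange property -/

section Exchange

variable {t s : ℕ} {u v : ℕ → ℕ}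

/-- The generator `x^v` can be replaced by an earlier one of the form `x_p x^v / x_q`, where `x_p`
has a larger exponent in `x^u`. -/
def HasExchange (t s : ℕ) (u v : ℕ → ℕ) : Prop :=
  ∃ p q, p ≠ q ∧ v p < u p ∧ IsPowExponent t s (transfer v p q) ∧
    exponentKey t s v < exponentKey t s (transfer v p q)

theorem hasExchange_of_whisker_lt (hu : IsPowExponent t s u) (hv : IsPowExponent t s v)
    (hlt : v (t + 4) < u (t + 4)) : HasExchange t s u v := by
  obtain ⟨q, hq⟩ := hu.exists_lt_of_lt hv hlt
  have hpq : t + 4 ≠ q := by rintro rfl; omega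
  refine ⟨t + 4, q, hpq, hlt, hv.transfer hpq (pos_of_gt hq) (by omega) (by omega)
    (fun i hi => by unfold CycleAdj at hi; omega) fun _ => hlt.trans_le hu.whisker_le, ?_⟩
  rw [exponentKey_lt_iff, transfer_to hpq]
  exact Or.inl (Nat.lt_succ_self _)

theorem exists_interior_lt (hu : IsPowExponent t s u) (hv : IsPowExponent t s v)
    (hsum : u 0 + u 1 + u (t + 2) + u (t + 4) < v 0 + v 1 + v (t + 2) + v (t + 4)) :
    ∃ p, 2 ≤ p ∧ p ≤ t + 1 ∧ v p < u p := by
  obtain ⟨p, hp, hlt⟩ := hu.exists_lt_of_sum_map_lt hv [0, 1, t + 2, t + 4] (by grind)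
    (by grind) (by grind)
  have hp5 := hu.lt_of_pos (pos_of_gt hlt)
  have hp3 := hu.ne_apex_of_pos (pos_of_gt hlt)
  simp only [List.mem_cons, List.not_mem_nil, or_false, not_or] at hp
  exact ⟨p, by omega, by omega, hlt⟩

theorem secondaryKey_eq_zero_of_pos {a : ℕ → ℕ} (h0 : 0 < a 0) : secondaryKey t s a = 0 :=
  if_neg fun h => h0.ne' h.1

theorem hasExchange_of_le_secondaryKey (hv : IsPowExponent t s v) {p q : ℕ} (hp : 2 ≤ p)
    (hpt : p ≤ t + 2) (hlt : v p < u p) (hpq : p < q ∨ q = 1) (hq : 0 < v q) (hqt : q ≠ t + 4)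
    (hroom : ∀ i, CycleAdj t p i → i = q ∨ v p + v i < s)
    (hkey : secondaryKey t s v ≤ secondaryKey t s (transfer v p q)) : HasExchange t s u v := by
  have hne : p ≠ q := by omega
  refine ⟨p, q, hne, hlt, hv.transfer hne hq (by omega) (by omega) hroom (by omega), ?_⟩
  rw [exponentKey_lt_iff, transfer_of_ne (by omega) hqt.symm, transfer_of_ne (by omega) (by omega)]
  refine Or.inr ⟨rfl, Or.inr ⟨rfl, hkey.lt_or_eq.imp_right fun h =>
    ⟨h, p, hp, fun i hi hip => ?_, ?_⟩⟩⟩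
  · rw [transfer_of_ne hip.ne (by omega)]
  · rw [transfer_to hne]
    exact Nat.lt_succ_self _

theorem hasExchange_of_tight_at_zero (ht : 2 ≤ t) (hv : IsPowExponent t s v)
    (h1 : v 0 + v 1 = s) (hlast : v 0 + v (t + 2) = s) (h0 : v 0 < s) {p : ℕ} (hp : 2 ≤ p)
    (hpt : p ≤ t + 1) (hlt : v p < u p) : HasExchange t s u v := by
  obtain ⟨q, hq, hqp, hqpos⟩ : ∃ q, (q = 1 ∨ q = t + 2) ∧ (q = 1 ↔ p = 2) ∧ 0 < v q := by
    by_cases hp2 : p = 2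
    · exact ⟨1, by omega, by omega, by omega⟩
    · exact ⟨t + 2, by omega, by omega, by omega⟩
  have hroom : ∀ i, CycleAdj t p i → i = q ∨ v p + v i < s := by
    intro i hi
    by_cases hiq : i = q
    · exact Or.inl hiq
    have hne : i ≠ 0 ∧ i ≠ 1 ∧ i ≠ p ∧ i < t + 2 := by unfold CycleAdj at hi; omega
    have hsum := hv.sum_map_le [0, 1, t + 2, p, i] (by grind) (by grind)
    simp only [List.map_cons, List.map_nil, List.sum_cons, List.sum_nil] at hsum
    omega
  have hkey : secondaryKey t s v = 0 := if_neg (by omega)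
  exact hasExchange_of_le_secondaryKey hv hp (by omega) hlt (by omega) hqpos (by omega) hroom
    (hkey ▸ Nat.zero_le _)

theorem hasExchange_of_zero_lt_of_not_tight (hu : IsPowExponent t s u) (hv : IsPowExponent t s v)
    (hwhisker : v (t + 4) = u (t + 4)) (hlt : v 0 < u 0)
    (hroom : v 0 + v 1 < s ∨ v 0 + v (t + 2) < s) : HasExchange t s u v := by
  have hv1 := hv.cycle_le (i := 0) (j := 1) (by unfold CycleAdj; omega)
  have hvlast := hv.cycle_le (i := 0) (j := t + 2) (by unfold CycleAdj; omega)
  have hu1 := hu.cycle_le (i := 0) (j := 1) (by unfold CycleAdj; omega)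
  obtain ⟨q', hq'⟩ := hu.exists_lt_of_lt hv hlt
  have hq'0 : q' ≠ 0 := by rintro rfl; omega
  have hq'4 : q' ≠ t + 4 := by rintro rfl; omega
  obtain ⟨q, hq0, hq4, hqpos, hq1, hqlast⟩ : ∃ q, 0 ≠ q ∧ t + 4 ≠ q ∧ 0 < v q ∧
      (q = 1 ∨ v 0 + v 1 < s) ∧ (q = t + 2 ∨ v 0 + v (t + 2) < s) := by
    by_cases h1 : v 0 + v 1 < s
    · by_cases hlast : v 0 + v (t + 2) < s
      · exact ⟨q', hq'0.symm, hq'4.symm, by omega, Or.inr h1, Or.inr hlast⟩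
      · exact ⟨t + 2, by omega, by omega, by omega, Or.inr h1, Or.inl rfl⟩
    · exact ⟨1, by omega, by omega, by omega, Or.inl rfl, Or.inr (by omega)⟩
  refine ⟨0, q, hq0, hlt, hv.transfer hq0 hqpos (by omega) (by omega) (fun i hi => ?_)
    (by omega), ?_⟩
  · obtain rfl | rfl : i = 1 ∨ i = t + 2 := by unfold CycleAdj at hi; omega
    · exact hq1.imp_left Eq.symm
    · exact hqlast.imp_left Eq.symm
  · rw [exponentKey_lt_iff, transfer_of_ne (by omega) hq4, transfer_to hq0]
    exact Or.inr ⟨rfl, Or.inl (Nat.lt_succ_self _)⟩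

theorem hasExchange_of_zero_lt (ht : 2 ≤ t) (hu : IsPowExponent t s u) (hv : IsPowExponent t s v)
    (hwhisker : v (t + 4) = u (t + 4)) (hlt : v 0 < u 0) : HasExchange t s u v := by
  by_cases hroom : v 0 + v 1 < s ∨ v 0 + v (t + 2) < s
  · exact hasExchange_of_zero_lt_of_not_tight hu hv hwhisker hlt hroom
  have hv1 := hv.cycle_le (i := 0) (j := 1) (by unfold CycleAdj; omega)
  have hvlast := hv.cycle_le (i := 0) (j := t + 2) (by unfold CycleAdj; omega)
  have hu1 := hu.cycle_le (i := 0) (j := 1) (by unfold CycleAdj; omega)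
  have hulast := hu.cycle_le (i := 0) (j := t + 2) (by unfold CycleAdj; omega)
  obtain ⟨p, hp, hpt, hplt⟩ := exists_interior_lt hu hv (by omega)
  exact hasExchange_of_tight_at_zero ht hv (by omega) (by omega) (by omega) hp hpt hplt

theorem hasExchange_of_one_lt_of_full (ht : 2 ≤ t) (hs : 2 ≤ s) (hu : IsPowExponent t s u)
    (hv : IsPowExponent t s v) (hwhisker : v (t + 4) = u (t + 4)) (h0 : v 0 = u 0)
    (hv0 : v 0 = 0) (hv1 : v 1 + 1 = s) (hv2 : v 2 = 1) (hvlast : v (t + 2) = s)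
    (hulast : u (t + 2) < s) : HasExchange t s u v := by
  have hu12 := hu.cycle_le (i := 1) (j := 2) (by unfold CycleAdj; omega)
  obtain ⟨r, hr, hlt⟩ := hu.exists_lt_of_sum_map_lt hv [0, 1, 2, t + 2, t + 4] (by grind)
    (by grind) (by grind)
  have hr5 := hu.lt_of_pos (pos_of_gt hlt)
  have hr3 := hu.ne_apex_of_pos (pos_of_gt hlt)
  simp only [List.mem_cons, List.not_mem_nil, or_false, not_or] at hr
  have hzero : ∀ i, 3 ≤ i → i ≤ t + 1 → v i = 0 := fun i hi hit => by
    have hsum := hv.sum_map_le [1, 2, t + 2, i] (by grind) (by grind)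
    simp only [List.map_cons, List.map_nil, List.sum_cons, List.sum_nil] at hsum
    omega
  refine hasExchange_of_le_secondaryKey hv (p := r) (q := t + 2) (by omega) (by omega) hlt
    (by omega) (by omega) (by omega) (fun i hi => ?_) ?_
  · have hri := hzero r (by omega) (by omega)
    have hi' := hzero i
    have hi2 : i = t + 2 ∨ i = 2 ∨ (3 ≤ i ∧ i ≤ t + 1) := by unfold CycleAdj at hi; omega
    rcases hi2 with rfl | rfl | hi3 <;> omega
  · have hne : r ≠ t + 2 := by omega
    rw [secondaryKey, secondaryKey, transfer_from hne, transfer_of_ne (by omega) (by omega),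
      transfer_of_ne (by omega) (by omega)]
    grind

theorem hasExchange_of_one_lt (ht : 2 ≤ t) (hs : 2 ≤ s) (hu : IsPowExponent t s u)
    (hv : IsPowExponent t s v) (hwhisker : v (t + 4) = u (t + 4)) (h0 : v 0 = u 0)
    (hv0 : v 0 = 0) (hlt : v 1 < u 1) (hufull : ¬(u 1 = s ∧ u (t + 2) = s)) :
    HasExchange t s u v := by
  have hu01 := hu.cycle_le (i := 0) (j := 1) (by unfold CycleAdj; omega)
  have hv12 := hv.cycle_le (i := 1) (j := 2) (by unfold CycleAdj; omega)
  have hvlast := hv.cycle_le (i := 0) (j := t + 2) (by unfold CycleAdj; omega)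
  have hulast := hu.cycle_le (i := 0) (j := t + 2) (by unfold CycleAdj; omega)
  by_cases hfull : v 1 + 1 = s ∧ v 2 = 1 ∧ v (t + 2) = s
  · exact hasExchange_of_one_lt_of_full ht hs hu hv hwhisker h0 hv0 hfull.1 hfull.2.1 hfull.2.2
      (by omega)
  obtain ⟨q', hq'⟩ := hu.exists_lt_of_lt hv hlt
  obtain ⟨q, hq1, hq0, hq4, hqpos, hq2, hqlast⟩ : ∃ q, 1 ≠ q ∧ 0 ≠ q ∧ t + 4 ≠ q ∧ 0 < v q ∧
      (q = 2 ∨ v 1 + v 2 < s) ∧ (q = t + 2 ∨ v (t + 2) = 0 ∨ v 1 + v 2 = s) := by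
    by_cases h2 : v 1 + v 2 = s
    · exact ⟨2, by omega, by omega, by omega, by omega, Or.inl rfl, by omega⟩
    by_cases hlast : v (t + 2) = 0
    · exact ⟨q', by grind, by grind, by grind, by omega, by omega, by omega⟩
    · exact ⟨t + 2, by omega, by omega, by omega, by omega, by omega, Or.inl rfl⟩
  refine ⟨1, q, hq1, hlt, hv.transfer hq1 hqpos (by omega) (by omega) (fun i hi => ?_)
    (by omega), ?_⟩
  · obtain rfl | rfl : i = 0 ∨ i = 2 := by unfold CycleAdj at hi; omega
    · omega
    · omega
  · rw [exponentKey_lt_iff, transfer_of_ne (by omega) hq4, transfer_of_ne (by omega) hq0]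
    have hfull' : ¬(v 1 + 1 = s ∧ transfer v 1 q (t + 2) = s) := by
      have hle := transfer_le (a := v) (p := 1) (q := q) (i := t + 2) (by omega)
      rcases eq_or_ne q (t + 2) with rfl | hq
      · rw [transfer_from hq1]; omega
      · omega
    rw [secondaryKey, secondaryKey, transfer_of_ne (by omega) hq0, transfer_to hq1,
      if_pos (by omega), if_pos ⟨hv0, hfull'⟩]
    exact Or.inr ⟨rfl, Or.inr ⟨rfl, Or.inl (Nat.lt_succ_self _)⟩⟩

theorem hasExchange_of_secondaryKey_lt (ht : 2 ≤ t) (hs : 2 ≤ s) (hu : IsPowExponent t s u)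
    (hv : IsPowExponent t s v) (hwhisker : v (t + 4) = u (t + 4)) (h0 : v 0 = u 0)
    (hlt : secondaryKey t s v < secondaryKey t s u) : HasExchange t s u v := by
  have hu1 := hu.cycle_le (i := 0) (j := 1) (by unfold CycleAdj; omega)
  have hulast := hu.cycle_le (i := 0) (j := t + 2) (by unfold CycleAdj; omega)
  unfold secondaryKey at hlt
  obtain ⟨hu0, hufull⟩ : u 0 = 0 ∧ ¬(u 1 = s ∧ u (t + 2) = s) := by
    by_contra h
    rw [if_neg h] at hlt
    exact Nat.not_lt_zero _ hlt
  have hv0 : v 0 = 0 := h0.trans hu0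
  by_cases hvfull : v 1 = s ∧ v (t + 2) = s
  · obtain ⟨p, hp, hpt, hplt⟩ := exists_interior_lt hu hv (by omega)
    exact hasExchange_of_tight_at_zero ht hv (by omega) (by omega) (by omega) hp hpt hplt
  · rw [if_pos ⟨hv0, hvfull⟩, if_pos ⟨hu0, hufull⟩] at hlt
    exact hasExchange_of_one_lt ht hs hu hv hwhisker h0 hv0 (Nat.lt_of_succ_lt_succ hlt) hufull

theorem eq_one_of_secondaryKey_eq (hu : IsPowExponent t s u) (h0 : v 0 = u 0) (hv0 : v 0 = 0)
    (hkey : secondaryKey t s v = secondaryKey t s u) {p : ℕ} (hp : 2 ≤ p) (hpt : p ≤ t + 2)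
    (hlt : v p < u p) : v 1 = u 1 ∧ ¬(v 1 = s ∧ v (t + 2) = s) := by
  have hufull : ¬(u 1 = s ∧ u (t + 2) = s ∧ p ≠ t + 2) := by
    intro h
    have hsum := hu.sum_map_le [1, t + 2, p] (by grind) (by grind)
    simp only [List.map_cons, List.map_nil, List.sum_cons, List.sum_nil] at hsum
    omega
  unfold secondaryKey at hkey
  split_ifs at hkey with hv hu' hu' <;> grind

theorem hasExchange_of_path_lt_of_zero (hu : IsPowExponent t s u)
    (hv : IsPowExponent t s v) (hwhisker : v (t + 4) = u (t + 4)) (h0 : v 0 = u 0)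
    (hv0 : v 0 = 0) (hkey : secondaryKey t s v = secondaryKey t s u) {p : ℕ} (hp : 2 ≤ p)
    (hpt : p ≤ t + 2) (heq : ∀ i, 2 ≤ i → i < p → v i = u i) (hlt : v p < u p) :
    HasExchange t s u v := by
  obtain ⟨h1, hfull⟩ : v 1 = u 1 ∧ ¬(v 1 = s ∧ v (t + 2) = s) :=
    eq_one_of_secondaryKey_eq hu h0 hv0 hkey hp hpt hlt
  obtain ⟨q', hq'⟩ := hu.exists_lt_of_lt hv hlt
  have hq'p : p < q' := by
    by_contra h
    obtain rfl | rfl | rfl | ⟨h2, hlt⟩ : q' = 0 ∨ q' = 1 ∨ q' = p ∨ 2 ≤ q' ∧ q' < p := by omega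
    all_goals grind
  have hq'5 := hv.lt_of_pos (pos_of_gt hq')
  have hq'3 := hv.ne_apex_of_pos (pos_of_gt hq')
  have hq'4 : q' ≠ t + 4 := by rintro rfl; omega
  have hleft := hu.cycle_le (i := p - 1) (j := p) (by unfold CycleAdj; omega)
  have hright := hu.cycle_le (i := p) (j := p + 1) (by unfold CycleAdj; omega)
  have hright' := hv.cycle_le (i := p) (j := p + 1) (by unfold CycleAdj; omega)
  have hleft' : v (p - 1) = u (p - 1) := by
    obtain rfl | hp2 := hp.eq_or_lt
    · exact h1
    · exact heq _ (by omega) (by omega)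
  obtain ⟨q, hpq, hqt, hqpos, hq⟩ : ∃ q, p < q ∧ q ≤ t + 2 ∧ 0 < v q ∧
      (q = p + 1 ∨ v p + v (p + 1) < s) := by
    by_cases htight : v p + v (p + 1) = s
    · exact ⟨p + 1, by omega, by omega, by omega, Or.inl rfl⟩
    · exact ⟨q', hq'p, by omega, by omega, by omega⟩
  refine hasExchange_of_le_secondaryKey hv hp hpt hlt (Or.inl hpq) hqpos (by omega)
    (fun i hi => ?_) ?_
  · obtain rfl | rfl : i = p - 1 ∨ i = p + 1 := by unfold CycleAdj at hi; omega
    · omega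
    · omega
  · have hle := transfer_le (a := v) (p := p) (q := q) (i := t + 2) (by omega)
    have hvlast := hv.cycle_le (i := 0) (j := t + 2) (by unfold CycleAdj; omega)
    rw [secondaryKey, secondaryKey, transfer_of_ne (by omega) (by omega),
      transfer_of_ne (by omega) (by omega), if_pos ⟨hv0, hfull⟩, if_pos (by omega)]

theorem hasExchange_of_path_lt_of_two_tight (ht : 2 ≤ t) (hu : IsPowExponent t s u)
    (hv : IsPowExponent t s v) (hwhisker : v (t + 4) = u (t + 4)) (h0 : v 0 = u 0)
    (hv0 : 0 < v 0) (hlt : v 2 < u 2) (h1 : v 1 + v 2 = s) (h3 : v 2 + v 3 = s) :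
    HasExchange t s u v := by
  have hu1 := hu.cycle_le (i := 1) (j := 2) (by unfold CycleAdj; omega)
  have hu3 := hu.cycle_le (i := 2) (j := 3) (by unfold CycleAdj; omega)
  obtain ⟨r, hr, hrlt⟩ := hu.exists_lt_of_sum_map_lt hv [0, 1, 2, 3, t + 4] (by grind)
    (by grind) (by grind)
  have hr5 := hu.lt_of_pos (pos_of_gt hrlt)
  have hr3 := hu.ne_apex_of_pos (pos_of_gt hrlt)
  simp only [List.mem_cons, List.not_mem_nil, or_false, not_or] at hr
  refine hasExchange_of_le_secondaryKey hv (p := r) (q := 1) (by omega) (by omega) hrlt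
    (by omega) (by omega) (by omega) (fun i hi => ?_) ?_
  · have hsum := hv.sum_map_le [0, 1, 2, 3, r] (by grind) (by grind)
    simp only [List.map_cons, List.map_nil, List.sum_cons, List.sum_nil] at hsum
    obtain rfl | rfl | ⟨hi0, hi3⟩ : i = 0 ∨ i = 3 ∨ 4 ≤ i ∧ i ≤ t + 2 := by
      unfold CycleAdj at hi; omega
    · omega
    · omega
    · have hri : r ≠ i := by unfold CycleAdj at hi; omega
      have hsum' := hv.sum_map_le [0, 1, 2, 3, r, i] (by grind) (by grind)
      simp only [List.map_cons, List.map_nil, List.sum_cons, List.sum_nil] at hsum'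
      omega
  · rw [secondaryKey_eq_zero_of_pos hv0]
    exact Nat.zero_le _

theorem hasExchange_of_path_lt_of_pos (ht : 2 ≤ t) (hu : IsPowExponent t s u)
    (hv : IsPowExponent t s v) (hwhisker : v (t + 4) = u (t + 4)) (h0 : v 0 = u 0)
    (hv0 : 0 < v 0) {p : ℕ} (hp : 2 ≤ p) (hpt : p ≤ t + 2)
    (heq : ∀ i, 2 ≤ i → i < p → v i = u i) (hlt : v p < u p) : HasExchange t s u v := by
  by_cases htight : p = 2 ∧ v 1 + v 2 = s ∧ v 2 + v 3 = s
  · obtain ⟨rfl, h1, h3⟩ := htight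
    exact hasExchange_of_path_lt_of_two_tight ht hu hv hwhisker h0 hv0 hlt h1 h3
  obtain ⟨q', hq'⟩ := hu.exists_lt_of_lt hv hlt
  have hq'p : p < q' ∨ q' = 1 := by
    by_contra h
    obtain rfl | rfl | ⟨h2, hlt⟩ : q' = 0 ∨ q' = p ∨ 2 ≤ q' ∧ q' < p := by omega
    all_goals grind
  have hq'4 : q' ≠ t + 4 := by rintro rfl; omega
  have hu12 := hu.cycle_le (i := 1) (j := 2) (by unfold CycleAdj; omega)
  have hv12 := hv.cycle_le (i := 1) (j := 2) (by unfold CycleAdj; omega)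
  have hleft := hu.cycle_le (i := p - 1) (j := p) (by unfold CycleAdj; omega)
  have hlast := hu.cycle_le (i := t + 2) (j := 0) (by unfold CycleAdj; omega)
  have hright : p < t + 2 → v p + v (p + 1) ≤ s ∧ u p + u (p + 1) ≤ s := fun h =>
    ⟨hv.cycle_le (by unfold CycleAdj; omega), hu.cycle_le (by unfold CycleAdj; omega)⟩
  have hleft' : 3 ≤ p → v (p - 1) = u (p - 1) := fun h => heq _ (by omega) (by omega)
  obtain ⟨q, hpq, hq4, hqpos, hq1, hqp⟩ : ∃ q, (p < q ∨ q = 1) ∧ q ≠ t + 4 ∧ 0 < v q ∧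
      (p = 2 → q = 1 ∨ v 1 + v 2 < s) ∧ (p < t + 2 → q = p + 1 ∨ v p + v (p + 1) < s) := by
    by_cases h1 : p = 2 ∧ v 1 + v 2 = s
    · obtain ⟨rfl, h1⟩ := h1
      exact ⟨1, by omega, by omega, by omega, by omega, fun h =>
        Or.inr (lt_of_le_of_ne (hright h).1 fun h3 => htight ⟨rfl, h1, h3⟩)⟩
    by_cases hp1 : p < t + 2 ∧ v p + v (p + 1) = s
    · exact ⟨p + 1, by omega, by omega, by omega, by omega, by omega⟩
    · exact ⟨q', hq'p, hq'4, by omega, by omega, by omega⟩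
  refine hasExchange_of_le_secondaryKey hv hp hpt hlt hpq hqpos hq4 (fun i hi => ?_) ?_
  · obtain ⟨rfl, rfl⟩ | ⟨hp3, rfl⟩ | ⟨rfl, hp1⟩ | ⟨rfl, rfl⟩ :
        (p = 2 ∧ i = 1) ∨ (3 ≤ p ∧ i = p - 1) ∨ (i = p + 1 ∧ p < t + 2) ∨
          (p = t + 2 ∧ i = 0) := by unfold CycleAdj at hi; omega
    all_goals omega
  · rw [secondaryKey_eq_zero_of_pos hv0]
    exact Nat.zero_le _

theorem hasExchange (ht : 2 ≤ t) (hs : 2 ≤ s) (hu : IsPowExponent t s u)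
    (hv : IsPowExponent t s v) (hlt : exponentKey t s v < exponentKey t s u) :
    HasExchange t s u v := by
  obtain h | ⟨hwhisker, h | ⟨h0, h | ⟨hkey, p, hp, heq, h⟩⟩⟩ := exponentKey_lt_iff.1 hlt
  · exact hasExchange_of_whisker_lt hu hv h
  · exact hasExchange_of_zero_lt ht hu hv hwhisker h
  · exact hasExchange_of_secondaryKey_lt ht hs hu hv hwhisker h0 h
  have hp5 := hu.lt_of_pos (pos_of_gt h)
  have hp3 := hu.ne_apex_of_pos (pos_of_gt h)
  have hp4 : p ≠ t + 4 := by rintro rfl; omega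
  rcases (v 0).eq_zero_or_pos with hv0 | hv0
  · exact hasExchange_of_path_lt_of_zero hu hv hwhisker h0 hv0 hkey hp (by omega) heq h
  · exact hasExchange_of_path_lt_of_pos ht hu hv hwhisker h0 hv0 hp (by omega) heq h

end Exchange

section Extend

variable {σ τ : Type*} {e : σ → τ}

theorem extend_comp_eq_self (he : e.Injective) {w : τ → ℕ} (hw : ∀ p ∉ Set.range e, w p = 0) :
    Function.extend e (w ∘ e) 0 = w := by
  refine funext fun p => ?_
  by_cases hp : p ∈ Set.range e
  · obtain ⟨i, rfl⟩ := hp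
    exact he.extend_apply _ _ _
  · rw [Function.extend_apply' _ _ _ hp, hw p hp, Pi.zero_apply]

theorem HasLinearQuotients.preimage_extend {α : Type*} [LinearOrder α] [DecidableEq σ]
    [DecidableEq τ] {B : Set (τ → ℕ)} {key : (τ → ℕ) → α} (he : e.Injective)
    (h : HasLinearQuotients B key) (hB : ∀ u ∈ B, ∀ p ∉ Set.range e, u p = 0) :
    HasLinearQuotients {v : σ → ℕ | Function.extend e v 0 ∈ B}
      fun v => key (Function.extend e v 0) := by
  intro u hu v hv huv
  obtain ⟨w, hw, hkey, p, hp, hsup⟩ := h _ hu _ hv huv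
  obtain ⟨i, rfl⟩ : p ∈ Set.range e := by
    by_contra hne
    rw [hB _ hu p hne] at hp
    exact Nat.not_lt_zero _ hp
  have hwe := extend_comp_eq_self he (hB w hw)
  refine ⟨w ∘ e, Set.mem_of_eq_of_mem (s := B) hwe hw, hkey.trans_eq (congrArg key hwe.symm), i, ?_,
    funext fun j => ?_⟩
  · simpa only [he.extend_apply] using hp
  · have hj := congrFun hsup (e j)
    simpa only [Pi.sup_apply, Pi.add_apply, Pi.single_apply, he.eq_iff, he.extend_apply,
      Function.comp_apply] using hj

end Extend

section PowExponents

variable {t s : ℕ}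

theorem hasLinearQuotients_isPowExponent (ht : 2 ≤ t) (hs : 2 ≤ s) :
    HasLinearQuotients {a | IsPowExponent t s a} (exponentKey t s) := by
  intro u hu v hv hlt
  obtain ⟨p, q, hpq, hp, hw, hkey⟩ := hasExchange ht hs hu hv hlt
  exact ⟨transfer v p q, hw, hkey, p, hp, sup_transfer hpq⟩

/-- The exponent vectors of `IsPowExponent`, restricted to their `t + 5` relevant coordinates. -/
def powExponents (t s : ℕ) : Set (Fin (t + 5) → ℕ) :=
  {v | Function.extend Fin.val v 0 ∈ {a | IsPowExponent t s a}}

theorem sum_eq_of_mem_powExponents {v : Fin (t + 5) → ℕ} (hv : v ∈ powExponents t s) :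
    ∑ i, v i = 2 * s := by
  rw [← IsPowExponent.sum_eq hv, Finset.sum_range]
  exact Finset.sum_congr rfl fun i _ => (Fin.val_injective.extend_apply _ _ i).symm

/-- The sort key of `exponentKey` on `powExponents t s`. -/
noncomputable def powExponentsKey (t s : ℕ) (v : Fin (t + 5) → ℕ) : Lex (ℕ → ℕ) :=
  exponentKey t s (Function.extend Fin.val v 0)

theorem hasLinearQuotients_powExponents (ht : 2 ≤ t) (hs : 2 ≤ s) :
    HasLinearQuotients (powExponents t s) (powExponentsKey t s) :=
  (hasLinearQuotients_isPowExponent ht hs).preimage_extend Fin.val_injective fun _ hu p hp =>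
    IsPowExponent.eq_zero_of_le hu <| not_lt.1 fun h => hp ⟨⟨p, h⟩, rfl⟩

theorem injOn_powExponentsKey : Set.InjOn (powExponentsKey t s) (powExponents t s) :=
  fun _ hu _ hv huv => Function.extend_injective Fin.val_injective 0
    (injOn_exponentKey hu hv huv)

end PowExponents

/-! ## Products of edges -/

section EdgeSums

/-- `IsEdgeSum G s v` holds if `x^v` is a product of `s` edges of `G`, that is, one of the standard
generators of the `s`-th power of the edge ideal. -/
inductive IsEdgeSum {V : Type*} [DecidableEq V] (G : SimpleGraph V) : ℕ → (V → ℕ) → Prop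
  | zero : IsEdgeSum G 0 0
  | add_edge {s : ℕ} {v : V → ℕ} {i j : V} (hv : IsEdgeSum G s v) (hij : G.Adj i j) :
      IsEdgeSum G (s + 1) (v + (Pi.single i 1 + Pi.single j 1))

theorem mono_zero (K : Type) [Field K] (n : ℕ) : mono K (0 : Fin n → ℕ) = 1 := by
  have hzero : equivFunOnFinite.symm (0 : Fin n → ℕ) = 0 := Finsupp.ext fun _ => rfl
  rw [mono, hzero, MvPolynomial.monomial_zero', MvPolynomial.C_1]

theorem mono_add (K : Type) [Field K] {n : ℕ} (a b : Fin n → ℕ) :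
    mono K (a + b) = mono K a * mono K b := by
  have hadd : equivFunOnFinite.symm (a + b) = equivFunOnFinite.symm a + equivFunOnFinite.symm b :=
    Finsupp.ext fun _ => rfl
  rw [mono, mono, mono, hadd, MvPolynomial.monomial_mul, one_mul]

theorem mono_single (K : Type) [Field K] {n : ℕ} (i : Fin n) :
    mono K (Pi.single i 1) = MvPolynomial.X i := by
  simp [mono, MvPolynomial.X, Finsupp.equivFunOnFinite_symm_single]

theorem edgeIdeal_pow (K : Type) [Field K] {n : ℕ} (G : SimpleGraph (Fin n)) (s : ℕ) :
    edgeIdeal K G ^ s = Ideal.span (mono K '' {v | IsEdgeSum G s v}) := by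
  induction s with
  | zero =>
    have hone : (1 : MvPolynomial (Fin n) K) ∈ mono K '' {v | IsEdgeSum G 0 v} :=
      ⟨0, .zero, mono_zero K n⟩
    rw [pow_zero, Ideal.one_eq_top, eq_comm, Ideal.eq_top_iff_one]
    exact Ideal.subset_span hone
  | succ s ih =>
    rw [pow_succ, ih, edgeIdeal, Ideal.span_mul_span']
    congr 1
    ext f
    constructor
    · rintro ⟨_, ⟨v, hv, rfl⟩, _, ⟨i, j, hij, rfl⟩, rfl⟩
      exact ⟨_, IsEdgeSum.add_edge hv hij, by simp only [mono_add, mono_single]⟩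
    · rintro ⟨_, hv, rfl⟩
      cases hv with
      | add_edge hv hij =>
        exact ⟨_, ⟨_, hv, rfl⟩, _, ⟨_, _, hij, rfl⟩, by simp only [mono_add, mono_single]⟩

variable {V : Type*} {G : SimpleGraph V}

theorem IsEdgeSum.sum_single [DecidableEq V] {s : ℕ} {x y : Fin s → V}
    (h : ∀ l, G.Adj (x l) (y l)) :
    IsEdgeSum G s (∑ l, (Pi.single (x l) 1 + Pi.single (y l) 1)) := by
  induction s with
  | zero => exact .zero
  | succ s ih =>
    rw [Fin.sum_univ_castSucc]
    exact .add_edge (ih fun l => h l.castSucc) (h (Fin.last s))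

variable [Fintype V] [LinearOrder V]

theorem exists_monotone_sum_single {n : ℕ} (a : V → ℕ) (ha : ∑ i, a i = n) :
    ∃ z : Fin n → V, Monotone z ∧ ∑ k, Pi.single (z k) 1 = a := by
  obtain ⟨e⟩ : Nonempty (Fin n ≃ (i : V) × Fin (a i)) :=
    Fintype.card_eq.1 (by simp [ha])
  let f : Fin n → V := fun k => (e k).1
  refine ⟨f ∘ Tuple.sort f, Tuple.monotone_sort f, ?_⟩
  calc ∑ k, Pi.single ((f ∘ Tuple.sort f) k) 1
      = ∑ k, Pi.single (f k) 1 := Equiv.sum_comp (Tuple.sort f) fun k => Pi.single (f k) 1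
    _ = ∑ x : (i : V) × Fin (a i), Pi.single x.1 1 :=
        e.sum_comp fun x => (Pi.single x.1 1 : V → ℕ)
    _ = a := by
        rw [Fintype.sum_sigma]
        ext i
        simp [Finset.sum_apply, Pi.single_apply]

theorem card_le_sum_filter {n : ℕ} {z : Fin n → V} {p : V → Prop} [DecidablePred p]
    {T : Finset (Fin n)} (hT : ∀ k ∈ T, p (z k)) :
    T.card ≤ ∑ i with p i, (∑ k, Pi.single (z k) 1 : V → ℕ) i := by
  have hsum : ∑ i with p i, (∑ k, Pi.single (z k) 1 : V → ℕ) i =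
      ({k | p (z k)} : Finset (Fin n)).card := by
    simp only [Finset.sum_apply, Finset.card_filter]
    rw [Finset.sum_comm]
    refine Finset.sum_congr rfl fun k _ => ?_
    simp only [Finset.sum_pi_single', Finset.mem_filter_univ]
  rw [hsum]
  exact Finset.card_le_card fun k hk => Finset.mem_filter_univ _ |>.2 (hT k hk)

/-- Listing the `2 * s` factors of `x^a` in increasing order, the factors in positions `l` and
`l + s` are adjacent: otherwise one of the two bounds fails, as each arc of the cyclic order from
position `l` to position `l + s` contains `s + 1` factors. -/
theorem isEdgeSum_of_arc_le {s : ℕ} {a : V → ℕ} (ha : ∑ i, a i = s + s)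
    (harc : ∀ i j, i ≤ j → 0 < a i → 0 < a j → ¬G.Adj i j →
      ∑ x with i ≤ x ∧ x ≤ j, a x ≤ s ∨ ∑ x with x ≤ i, a x + ∑ x with j ≤ x, a x ≤ s) :
    IsEdgeSum G s a := by
  obtain ⟨z, hz, rfl⟩ := exists_monotone_sum_single a ha
  have hpos : ∀ k, 0 < (∑ k, Pi.single (z k) 1 : V → ℕ) (z k) := fun k => by
    have h := card_le_sum_filter (z := z) (p := (· = z k)) (T := {k})
      fun l hl => congrArg z (Finset.mem_singleton.1 hl)
    change 1 ≤ _
    simpa only [Finset.card_singleton, Finset.sum_filter, Finset.sum_ite_eq', Finset.mem_univ,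
      if_true] using h
  rw [Fin.sum_univ_add, ← Finset.sum_add_distrib]
  refine .sum_single fun l => ?_
  by_contra hadj
  have hle : Fin.castAdd s l ≤ Fin.natAdd s l := Fin.mk_le_mk.2 (by simp)
  rcases harc _ _ (hz hle) (hpos _) (hpos _) hadj with h | h
  · refine h.not_gt (lt_of_lt_of_le ?_ (card_le_sum_filter (T := Finset.Icc (Fin.castAdd s l)
      (Fin.natAdd s l)) fun k hk => ⟨hz (Finset.mem_Icc.1 hk).1, hz (Finset.mem_Icc.1 hk).2⟩))
    simp only [Fin.card_Icc, Fin.val_natAdd, Fin.val_castAdd]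
    omega
  · refine h.not_gt (lt_of_lt_of_le ?_ (add_le_add
      (card_le_sum_filter (T := Finset.Iic (Fin.castAdd s l)) fun k hk => hz (Finset.mem_Iic.1 hk))
      (card_le_sum_filter (T := Finset.Ici (Fin.natAdd s l)) fun k hk =>
        hz (Finset.mem_Ici.1 hk))))
    simp only [Fin.card_Iic, Fin.card_Ici, Fin.val_natAdd, Fin.val_castAdd]
    omega

end EdgeSums

/-! ## Generators of the powers -/

section PowerGenerators

variable {t s : ℕ}

theorem adj_iff_of_compl_eq_Gb {G : SimpleGraph (Fin (t + 5))} (hG : Gᶜ = Gb t)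
    (i j : Fin (t + 5)) :
    G.Adj i j ↔ i ≠ j ∧ (i : ℕ) ≠ t + 3 ∧ (j : ℕ) ≠ t + 3 ∧ ¬CycleAdj t i j := by
  rw [← compl_compl G, hG, SimpleGraph.compl_adj, Gb, SimpleGraph.fromRel_adj, CycleAdj]
  omega

namespace IsPowExponent

variable {a : ℕ → ℕ}

theorem zero : IsPowExponent t 0 0 where
  sum_eq := by simp
  cycle_le _ := le_rfl
  whisker_le := le_rfl
  apex_eq := rfl
  eq_zero_of_le _ := rfl

theorem add_edge (ha : IsPowExponent t s a) {i j : ℕ} (hi : i < t + 5) (hj : j < t + 5)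
    (hij : i ≠ j) (hi' : i ≠ t + 3) (hj' : j ≠ t + 3) (hadj : ¬CycleAdj t i j) :
    IsPowExponent t (s + 1) (a + (Pi.single i 1 + Pi.single j 1)) where
  sum_eq := by
    simp only [Pi.add_apply, Finset.sum_add_distrib, ha.sum_eq, Finset.sum_pi_single',
      Finset.mem_range, hi, hj, if_true]
    omega
  cycle_le {k l} hkl := by
    have hle := ha.cycle_le hkl
    have hne := hkl.ne
    have hlk := hkl.symm
    simp only [Pi.add_apply, Pi.single_apply]
    grind
  whisker_le := by
    have hle := ha.whisker_le
    simp only [Pi.add_apply, Pi.single_apply]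
    grind
  apex_eq := by simp [ha.apex_eq, hi'.symm, hj'.symm]
  eq_zero_of_le {k} hk := by
    simp [ha.eq_zero_of_le hk, show k ≠ i by omega, show k ≠ j by omega]

theorem exists_cycle_pos (ha : IsPowExponent t (s + 1) a) : ∃ j ≤ t + 2, 0 < a j := by
  by_contra! h
  have hsum := ha.sum_eq
  rw [Finset.sum_eq_single (t + 4) (fun j hj hne => ?_) (by simp)] at hsum
  · have := ha.whisker_le
    omega
  · rcases (show j ≤ t + 2 ∨ j = t + 3 by grind) with hj | rfl
    · exact Nat.eq_zero_of_le_zero (h j hj)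
    · exact ha.apex_eq

theorem tight_edges_meet (ha : IsPowExponent t (s + 1) a) (hpos : 0 < a (t + 4)) {i j k l : ℕ}
    (hij : CycleAdj t i j) (hkl : CycleAdj t k l) (hsij : s < a i + a j) (hskl : s < a k + a l) :
    i = k ∨ i = l ∨ j = k ∨ j = l := by
  by_contra! hne
  have hij' : i ≠ j ∧ i ≤ t + 2 ∧ j ≤ t + 2 := ⟨hij.ne, hij.le_left, hij.symm.le_left⟩
  have hkl' : k ≠ l ∧ k ≤ t + 2 ∧ l ≤ t + 2 := ⟨hkl.ne, hkl.le_left, hkl.symm.le_left⟩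
  have hsum := ha.sum_map_le [i, j, k, l, t + 4] (by grind) (by grind)
  simp only [List.map_cons, List.map_nil, List.sum_cons, List.sum_nil] at hsum
  omega

theorem exists_mem_tight_edges (ht : 2 ≤ t) (ha : IsPowExponent t (s + 1) a)
    (hpos : 0 < a (t + 4)) : ∃ j ≤ t + 2, 0 < a j ∧
      ∀ k l, CycleAdj t k l → k ≠ j → l ≠ j → a k + a l ≤ s := by
  by_contra! h
  obtain ⟨j, hj, hjpos⟩ := ha.exists_cycle_pos
  obtain ⟨k, l, hkl, -, -, hs⟩ := h j hj hjpos
  wlog hk : 0 < a k generalizing k l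
  · exact this l k hkl.symm (by omega) (by omega)
  have hkl' : k ≠ l ∧ k ≤ t + 2 ∧ l ≤ t + 2 := ⟨hkl.ne, hkl.le_left, hkl.symm.le_left⟩
  obtain ⟨n, hln, hnk, hsn⟩ : ∃ n, CycleAdj t l n ∧ n ≠ k ∧ s < a l + a n := by
    obtain ⟨m, n, hmn, hmk, hnk, hsmn⟩ := h k hkl'.2.1 hk
    rcases ha.tight_edges_meet hpos hkl hmn hs hsmn with rfl | rfl | rfl | rfl
    · exact absurd rfl hmk
    · exact absurd rfl hnk
    · exact ⟨n, hmn, hnk, hsmn⟩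
    · exact ⟨m, hmn.symm, hmk, by omega⟩
  have hln' : l ≠ n ∧ n ≤ t + 2 := ⟨hln.ne, hln.symm.le_left⟩
  have hl : 0 < a l := by
    have hsum := ha.sum_map_le [k, n, t + 4] (by grind) (by grind)
    simp only [List.map_cons, List.map_nil, List.sum_cons, List.sum_nil] at hsum
    omega
  obtain ⟨m, p, hmp, hml, hpl, hsmp⟩ := h l hkl'.2.2 hl
  have hk' := ha.tight_edges_meet hpos hkl hmp hs hsmp
  have hn' := ha.tight_edges_meet hpos hln hmp hsn hsmp
  -- The tight edges `k l`, `l n` and `m p` form a triangle, but the cycle has length `t + 3 ≥ 5`.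
  unfold CycleAdj at hkl hln hmp
  omega

theorem exists_eq_add_whisker (ht : 2 ≤ t) (ha : IsPowExponent t (s + 1) a)
    (hpos : 0 < a (t + 4)) : ∃ j ≤ t + 2, ∃ b, IsPowExponent t s b ∧
      a = b + (Pi.single j 1 + Pi.single (t + 4) 1) := by
  obtain ⟨j, hj, hjpos, htight⟩ := ha.exists_mem_tight_edges ht hpos
  have hle : (Pi.single j 1 + Pi.single (t + 4) 1 : ℕ → ℕ) ≤ a := by
    intro i
    simp only [Pi.add_apply, Pi.single_apply]
    grind
  obtain ⟨b, rfl⟩ := exists_add_of_le hle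
  refine ⟨j, hj, b, ?_, add_comm _ _⟩
  have hsum := ha.sum_eq
  have hwhisker := ha.whisker_le
  have hapex := ha.apex_eq
  simp only [Pi.add_apply, Pi.single_apply, Finset.sum_add_distrib, Finset.sum_ite_eq',
    Finset.mem_range] at hsum hwhisker hapex htight
  refine ⟨?_, fun {k l} hkl => ?_, ?_, ?_, fun {i} hi => ?_⟩
  · simp only [show j < t + 5 by omega, show t + 4 < t + 5 by omega, if_true] at hsum
    omega
  · have hkl' : k ≠ l ∧ k ≤ t + 2 ∧ l ≤ t + 2 := ⟨hkl.ne, hkl.le_left, hkl.symm.le_left⟩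
    have hle := ha.cycle_le hkl
    have := htight k l hkl
    simp only [Pi.add_apply, Pi.single_apply] at hle
    grind
  · grind
  · grind
  · exact Nat.eq_zero_of_le_zero <| (Nat.le_add_left _ _).trans_eq (ha.eq_zero_of_le hi)

end IsPowExponent

variable {G : SimpleGraph (Fin (t + 5))}

theorem extend_val_single {n : ℕ} (i : Fin n) :
    Function.extend Fin.val (Pi.single i 1 : Fin n → ℕ) 0 = Pi.single (i : ℕ) 1 := by
  rw [show (Pi.single i 1 : Fin n → ℕ) = Pi.single (i : ℕ) 1 ∘ Fin.val from
    funext fun j => by simp [Pi.single_apply, Fin.ext_iff]]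
  refine extend_comp_eq_self Fin.val_injective fun p hp => Pi.single_eq_of_ne ?_ 1
  rintro rfl
  exact hp ⟨i, rfl⟩

theorem extend_val_add_edge {n : ℕ} (v : Fin n → ℕ) (i j : Fin n) :
    Function.extend Fin.val (v + (Pi.single i 1 + Pi.single j 1)) 0 =
      Function.extend Fin.val v 0 + (Pi.single (i : ℕ) 1 + Pi.single (j : ℕ) 1) := by
  rw [← extend_val_single i, ← extend_val_single j, ← Function.extend_add, ← Function.extend_add,
    add_zero, add_zero]

theorem IsEdgeSum.mem_powExponents (hG : Gᶜ = Gb t) {v : Fin (t + 5) → ℕ} (hv : IsEdgeSum G s v) :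
    v ∈ powExponents t s := by
  induction hv with
  | zero =>
    change IsPowExponent t 0 (Function.extend Fin.val 0 0)
    rw [Function.extend_zero]
    exact .zero
  | @add_edge s v i j _ hij ih =>
    obtain ⟨hne, hi, hj, hadj⟩ := (adj_iff_of_compl_eq_Gb hG i j).1 hij
    change IsPowExponent t (s + 1) (Function.extend Fin.val _ 0)
    rw [extend_val_add_edge]
    exact IsPowExponent.add_edge ih i.2 j.2 (Fin.val_ne_of_ne hne) hi hj hadj

theorem eq_or_cycleAdj_of_not_adj (hG : Gᶜ = Gb t) {i j : Fin (t + 5)} (hij : ¬G.Adj i j)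
    (hi : i.val ≠ t + 3) (hj : j.val ≠ t + 3) : i = j ∨ CycleAdj t i j := by
  rw [adj_iff_of_compl_eq_Gb hG] at hij
  grind

theorem exists_cycleAdj {i : ℕ} (hi : i ≤ t + 2) : ∃ j ≤ t + 2, CycleAdj t i j := by
  rcases hi.lt_or_eq with hi' | rfl
  · exact ⟨i + 1, hi', .inl ⟨rfl, hi'⟩⟩
  · exact ⟨t + 1, by omega, .inr (.inl ⟨rfl, le_rfl⟩)⟩

theorem isEdgeSum_of_whisker_eq_zero (hG : Gᶜ = Gb t) {v : Fin (t + 5) → ℕ}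
    (hv : v ∈ powExponents t s) (hwhisker : v (Fin.last (t + 4)) = 0) : IsEdgeSum G s v := by
  have hval (i : Fin (t + 5)) : Function.extend Fin.val v 0 i = v i :=
    Fin.val_injective.extend_apply _ _ i
  have hcycle {i j : Fin (t + 5)} (hij : CycleAdj t i j) : v i + v j ≤ s := by
    simpa only [hval] using IsPowExponent.cycle_le hv hij
  have hzero (i : Fin (t + 5)) (hi : t + 2 < i.val) : v i = 0 := by
    rcases (show i.val = t + 3 ∨ i = Fin.last (t + 4) by grind [Fin.ext_iff]) with h | rfl
    · rw [← hval, h, IsPowExponent.apex_eq hv]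
    · exact hwhisker
  have hpair {i j : Fin (t + 5)} (hij : CycleAdj t i j) (p : Fin (t + 5) → Prop)
      [DecidablePred p] (hp : ∀ x, p x → x = i ∨ x = j) : ∑ x with p x, v x ≤ s := by
    have hne : i ≠ j := fun h => hij.ne (congrArg Fin.val h)
    calc ∑ x with p x, v x ≤ ∑ x ∈ {i, j}, v x :=
          Finset.sum_le_sum_of_subset fun x hx => by simpa using hp x (Finset.mem_filter.1 hx).2
      _ = v i + v j := Finset.sum_pair hne
      _ ≤ s := hcycle hij
  refine isEdgeSum_of_arc_le (by rw [sum_eq_of_mem_powExponents hv, two_mul]) ?_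
  intro i j hle hi hj hadj
  have hi' : i.val ≤ t + 2 := not_lt.1 fun h => hi.ne' (hzero i h)
  have hj' : j.val ≤ t + 2 := not_lt.1 fun h => hj.ne' (hzero j h)
  rcases eq_or_cycleAdj_of_not_adj hG hadj (by omega) (by omega) with rfl | hij
  · obtain ⟨k, hk, hik⟩ := exists_cycleAdj hi'
    exact .inl <| hpair (j := ⟨k, by omega⟩) hik _ fun x hx => .inl (le_antisymm hx.2 hx.1)
  by_cases hend : i.val = 0 ∧ j.val = t + 2
  · right
    rw [Finset.sum_eq_single i, Finset.sum_eq_single j]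
    · exact hcycle hij
    all_goals grind
  · exact .inl <| hpair hij _ fun x hx => by
      unfold CycleAdj at hij
      simp only [Fin.ext_iff, Fin.le_def] at hx ⊢
      omega

theorem IsPowExponent.extend_comp_val {a : ℕ → ℕ} (ha : IsPowExponent t s a) :
    Function.extend Fin.val (a ∘ Fin.val : Fin (t + 5) → ℕ) 0 = a :=
  extend_comp_eq_self Fin.val_injective fun p hp =>
    ha.eq_zero_of_le <| not_lt.1 fun h => hp ⟨⟨p, h⟩, rfl⟩

theorem isEdgeSum_of_mem_powExponents (ht : 2 ≤ t) (hG : Gᶜ = Gb t) {v : Fin (t + 5) → ℕ}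
    (hv : v ∈ powExponents t s) : IsEdgeSum G s v := by
  have hval (w : Fin (t + 5) → ℕ) : Function.extend Fin.val w 0 (t + 4) = w (Fin.last (t + 4)) :=
    Fin.val_injective.extend_apply w 0 (Fin.last (t + 4))
  induction s generalizing v with
  | zero =>
    have hle := IsPowExponent.whisker_le hv
    exact isEdgeSum_of_whisker_eq_zero hG hv (Nat.eq_zero_of_le_zero (hval v ▸ hle))
  | succ s ih =>
    rcases (v (Fin.last (t + 4))).eq_zero_or_pos with hwhisker | hwhisker
    · exact isEdgeSum_of_whisker_eq_zero hG hv hwhisker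
    obtain ⟨j, hj, b, hb, hvb⟩ := IsPowExponent.exists_eq_add_whisker ht hv (hval v ▸ hwhisker)
    have hv_eq : v = b ∘ Fin.val +
        (Pi.single (⟨j, by omega⟩ : Fin (t + 5)) 1 + Pi.single (Fin.last (t + 4)) 1) :=
      Function.extend_injective Fin.val_injective 0 <| hvb.trans <| .symm <|
        (extend_val_add_edge _ _ _).trans <| by rw [hb.extend_comp_val, Fin.val_last]
    have hmem : b ∘ Fin.val ∈ powExponents t s :=
      Set.mem_of_eq_of_mem (s := {a | IsPowExponent t s a}) hb.extend_comp_val hb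
    rw [hv_eq]
    refine .add_edge (ih hmem) ?_
    simp only [adj_iff_of_compl_eq_Gb hG, ne_eq, Fin.ext_iff, Fin.val_last, CycleAdj]
    omega

theorem setOf_isEdgeSum_eq_powExponents (ht : 2 ≤ t) (hG : Gᶜ = Gb t) :
    {v | IsEdgeSum G s v} = powExponents t s :=
  Set.ext fun _ => ⟨IsEdgeSum.mem_powExponents hG, isEdgeSum_of_mem_powExponents ht hG⟩

end PowerGenerators

end EP

/-- Let `G` be a graph on `n = t + 5 ≥ 7` vertices whose complement is
`G_{(b)}`. Then `I(G)^s` has a linear resolution for all `s ≥ 2`. -/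
theorem statement19 (K : Type) [Field K] (t : ℕ) (ht : 2 ≤ t)
    (G : SimpleGraph (Fin (t + 5))) (hG : Gᶜ = Gb t)
    (s : ℕ) (hs : 2 ≤ s) (r : ℕ) (g : Fin r → (Fin (t + 5) → ℕ))
    (hgen : EP.IsGenSet K g (EP.edgeIdeal K G ^ s)) :
    EP.HasLinRes K g (2 * s) := by
  rw [EP.edgeIdeal_pow, EP.setOf_isEdgeSum_eq_powExponents ht hG] at hgen
  exact EP.hasLinRes_of_hasLinearQuotients (EP.hasLinearQuotients_powExponents ht hs)
    EP.injOn_powExponentsKey (fun _ => EP.sum_eq_of_mem_powExponents) hgen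
end
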